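/- Let C(x,y) = y₁·F₁(x) + α·y₂·x₁² + Σ_{i=1}^{m} x_i q_i(y) + R(y), where α is a nonzero integer and F₁ is a nonsingular indefinite integral quadratic form of rank r ≥ 5. Assume C has h-invariant h(C) ≥ 5, C is irreducible over ℚ, and for every prime p the equation C = 0 has a nonsingular p-adic zero. Then there exist c > 0, K > 0 and Y₀ such that for every Y ≥ Y₀ there is a finite set 𝒞_h(Y) ⊆ ℤ^h with ‖y‖_∞ ≤ K·Y for all y ∈ 𝒞_h(Y) and Σ_{y ∈ 𝒞_h(Y)} 𝔖(F_y) ≥ c·Y^h/ log Y. -/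

import Mathlib

open Matrix MvPolynomial

/-- The complete exponential sum `S_q(F) = Σ*_{a mod q} Σ_{b mod q} e(a·F(b)/q)` attached to
an integer-valued function `F` on `ℤ^m`. -/
noncomputable def expSum (m : ℕ) (F : (Fin m → ℤ) → ℤ) (q : ℕ) : ℂ :=
  ∑ a ∈ (Finset.range q).filter fun a => Nat.gcd a q = 1,
    ∑ b : Fin m → Fin q,
      Complex.exp (2 * (Real.pi : ℂ) * Complex.I * (a : ℂ) *
        ((F fun j => ((b j : ℕ) : ℤ)) : ℂ) / (q : ℂ))

/-- The singular series `𝔖(F) = Σ_{q ≥ 1} q^{-m} S_q(F)`. -/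
noncomputable def singSeries (m : ℕ) (F : (Fin m → ℤ) → ℤ) : ℂ :=
  ∑' q : ℕ, (q : ℂ) ^ (-(m : ℤ)) * expSum m F q

/-!
For an integral quadratic polynomial `F` in `m` variables, the terms of the singular series with
index dividing `Q` sum to the local density `#{x mod Q : F(x) ≡ 0} / Q ^ (m - 1)`, which is
multiplicative in `Q`. A nonsingular `5 × 5` minor of the Hessian makes the series converge (Weyl
differencing), so a lower bound for every local density is one for `Re 𝔖(F)`.

The fibers used are `y = T * (p * s, p * t, 0, …, 0) + T ^ 2 * (0, z)`, with `p ≍ Y` prime, `z`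
running over residues modulo `p`, and `T`, `s`, `t` fixed, `T` divisible by a high power of every
small prime. Modulo a prime `ℓ`:
* if `ℓ ∣ T`, Hensel's lemma applies to a prescribed zero of `F_y / T` modulo `T`;
* if `ℓ ∤ p * T`, the density is `1 + O(ℓ ^ (-3/2))` by the `5 × 5` minor, unless `ℓ` divides a
  factor of it that is linear in `z 0`. Then a `4 × 4` minor still gives `1 + O(1/ℓ)`, and averaging
  over `z 0` shows that the total loss is small for most `z`;
* if `ℓ = p`, then `F_y ≡ α y₂ x₁² + ∑ xᵢ qᵢ(y) + R(y)`. As the `h`-invariant exceeds `2`, either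
  some `qᵢ` with `i ≠ 1` is nonzero at `y₁ = 0`, or the discriminant in `x₁` is not a constant times
  a square and so, by Stepanov's method, takes nonzero square values modulo `p` at a positive
  proportion of `z`. Either way `F_y` has at least `p ^ (m - 1)` nonsingular zeros modulo `p` for
  such `z`.

The `≫ p ^ (h - 1)` admissible `y` for each of the `≍ Y / log Y` primes `p ≍ Y` give the bound.
-/

/-! ### Exponential sums of quadratic polynomials -/

/-- A quadratic polynomial `∑ Aᵢⱼ xᵢ xⱼ + ∑ Bᵢ xᵢ + c` with integer coefficients. The matrix `A`
need not be symmetric; the Hessian is `A + Aᵀ`. -/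
@[ext]
structure IntQuad (ι : Type*) where
  A : Matrix ι ι ℤ
  B : ι → ℤ
  c : ℤ

namespace IntQuad

variable {ι : Type*} (F : IntQuad ι) (R : Type*) {S : Type*} [CommRing R] [CommRing S]

/-- The Hessian matrix of `F`, over a commutative ring `R`. -/
def hess : Matrix ι ι R := (F.A + F.Aᵀ).map (Int.cast : ℤ → R)

variable {R}

theorem hess_map (f : R →+* S) : (F.hess R).map f = F.hess S := by
  ext i j
  simp [hess]

variable [Fintype ι]

/-- The value of `F` at a point with coordinates in a commutative ring. -/
def eval (x : ι → R) : R :=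
  x ⬝ᵥ (F.A.map (Int.cast : ℤ → R)) *ᵥ x + (fun i ↦ (F.B i : R)) ⬝ᵥ x + F.c

/-- The gradient of `F` at a point with coordinates in a commutative ring. -/
def grad (x : ι → R) (i : ι) : R := (F.hess R *ᵥ x) i + F.B i

theorem eval_eq_sum (x : ι → R) :
    F.eval x = ∑ i, ∑ j, (F.A i j : R) * x i * x j + ∑ i, (F.B i : R) * x i + F.c := by
  simp only [eval, dotProduct, mulVec, map_apply, Finset.mul_sum, mul_left_comm, mul_assoc]

theorem map_eval (f : R →+* S) (x : ι → R) : f (F.eval x) = F.eval (f ∘ x) := by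
  simp [eval_eq_sum]

theorem map_grad (f : R →+* S) (x : ι → R) (i : ι) : f (F.grad x i) = F.grad (f ∘ x) i := by
  rw [grad, map_add, RingHom.map_mulVec, hess_map, map_intCast, grad]

theorem hess_mulVec_dotProduct (d x : ι → R) :
    (F.hess R *ᵥ d) ⬝ᵥ x =
      x ⬝ᵥ F.A.map (Int.cast : ℤ → R) *ᵥ d + d ⬝ᵥ F.A.map (Int.cast : ℤ → R) *ᵥ x := by
  have hsplit : F.hess R = F.A.map Int.cast + (F.A.map Int.cast)ᵀ := by
    ext i j
    simp [hess]
  rw [hsplit, add_mulVec, add_dotProduct, mulVec_transpose, ← dotProduct_mulVec,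
    dotProduct_comm _ x]

/-- Taylor expansion at `d`, arranged so that the part depending on `x` alone is `F` itself. -/
theorem eval_add (x d : ι → R) :
    F.eval (x + d) = F.eval x + (F.eval d - F.c) + (F.hess R *ᵥ d) ⬝ᵥ x := by
  rw [hess_mulVec_dotProduct]
  simp only [eval, mulVec_add, add_dotProduct, dotProduct_add]
  ring

theorem eval_add_single [DecidableEq ι] (x : ι → R) (i : ι) (t : R) :
    F.eval (x + Pi.single i t) = F.eval x + F.grad x i * t + F.A i i * t ^ 2 := by
  rw [add_comm x, eval_add, dotProduct_single, eval, grad]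
  simp [eval]
  ring

end IntQuad

/-- A kernel vector of `N` is determined by its coordinates outside `J`, up to a kernel vector
supported on `J`, whose coordinates are killed by the minor on `J` by Cramer's rule. -/
theorem card_ker_mulVec_le {R ι κ τ : Type*} [CommRing R] [Finite R] [Fintype κ]
    [Fintype τ] [DecidableEq τ] (N : Matrix ι κ R) (I : τ → ι) {J : τ → κ}
    (hJ : Function.Injective J) :
    Nat.card {d : κ → R // N *ᵥ d = 0} ≤
      Nat.card {e : R // (N.submatrix I J).det * e = 0} ^ Fintype.card τ *
        Nat.card R ^ (Fintype.card κ - Fintype.card τ) := by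
  classical
  let K : AddSubgroup (κ → R) := N.mulVecLin.toAddMonoidHom.ker
  let r : K →+ ({j // j ∉ Set.range J} → R) :=
    { toFun := fun d j ↦ d.1 j, map_zero' := rfl, map_add' := fun _ _ ↦ rfl }
  have hout : ∀ d ∈ r.ker, ∀ j ∉ Set.range J, d.1 j = 0 := fun d hd j hj ↦
    congrFun (AddMonoidHom.mem_ker.mp hd) ⟨j, hj⟩
  have hann : ∀ d ∈ r.ker, ∀ t, (N.submatrix I J).det * d.1 (J t) = 0 := by
    intro d hd t
    have hsub : N.submatrix I J *ᵥ (fun t ↦ d.1 (J t)) = 0 := by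
      funext t
      refine (Fintype.sum_of_injective J hJ _ (fun j ↦ N (I t) j * d.1 j) (fun j hj ↦ ?_)
        fun _ ↦ rfl).trans (congrFun d.2 (I t))
      rw [hout d hd j hj, mul_zero]
    have := congrArg ((N.submatrix I J).adjugate *ᵥ ·) hsub
    simpa [mulVec_mulVec, adjugate_mul, smul_mulVec] using congrFun this t
  have hker : Nat.card r.ker ≤
      Nat.card {e : R // (N.submatrix I J).det * e = 0} ^ Fintype.card τ := by
    rw [← Nat.card_eq_fintype_card, ← Nat.card_fun]
    refine Nat.card_le_card_of_injective (fun d t ↦ ⟨d.1.1 (J t), hann d.1 d.2 t⟩)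
      fun d d' hdd ↦ Subtype.ext (Subtype.ext (funext fun j ↦ ?_))
    by_cases hj : j ∈ Set.range J
    · obtain ⟨t, rfl⟩ := hj
      exact congrArg Subtype.val (congrFun hdd t)
    · rw [hout d.1 d.2 j hj, hout d'.1 d'.2 j hj]
  have hrange : Nat.card r.range ≤ Nat.card R ^ (Fintype.card κ - Fintype.card τ) := by
    refine (Nat.card_le_card_of_injective _ Subtype.val_injective).trans_eq ?_
    rw [Nat.card_fun, Nat.card_eq_fintype_card (α := {j // j ∉ Set.range J}),
      Fintype.card_subtype_compl, ← Set.card_range_of_injective hJ]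
  calc Nat.card {d : κ → R // N *ᵥ d = 0} = Nat.card K := rfl
    _ = Nat.card r.ker * Nat.card r.range := by
      rw [← AddSubgroup.index_ker, AddSubgroup.card_mul_index]
    _ ≤ _ := Nat.mul_le_mul hker hrange

theorem card_intCast_mul_eq_zero_le {D : ℤ} (hD : D ≠ 0) (q : ℕ) [NeZero q] :
    Nat.card {e : ZMod q // (D : ZMod q) * e = 0} ≤ D.natAbs := by
  have h := IsAddCyclic.card_nsmul_eq_zero_le (α := ZMod q) (Int.natAbs_pos.mpr hD)
  rw [Nat.card_eq_fintype_card, Fintype.card_subtype]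
  simpa only [natAbs_nsmul_eq_zero, zsmul_eq_mul] using h

namespace IntQuad
section Weyl

variable {ι : Type*} (F : IntQuad ι)

theorem det_submatrix_hess {k : ℕ} (R : Type*) [CommRing R] (I J : Fin k → ι) :
    ((F.hess R).submatrix I J).det = ((F.A + F.Aᵀ).submatrix I J).det :=
  ((Int.castRingHom R).map_det ((F.A + F.Aᵀ).submatrix I J)).symm

variable [Fintype ι]

/-- The number of kernel vectors of the Hessian of `F` modulo `q`. -/
noncomputable def hessKerCard (q : ℕ) : ℕ :=
  Nat.card {d : ι → ZMod q // F.hess (ZMod q) *ᵥ d = 0}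

theorem hessKerCard_le_of_det_ne_zero {k : ℕ} (I : Fin k → ι) {J : Fin k → ι}
    (hJ : Function.Injective J) (hD : ((F.A + F.Aᵀ).submatrix I J).det ≠ 0) (q : ℕ) [NeZero q] :
    F.hessKerCard q ≤
      ((F.A + F.Aᵀ).submatrix I J).det.natAbs ^ k * q ^ (Fintype.card ι - k) := by
  have h := card_ker_mulVec_le (F.hess (ZMod q)) I hJ
  rw [det_submatrix_hess, Nat.card_zmod, Fintype.card_fin] at h
  exact h.trans (by gcongr; exact card_intCast_mul_eq_zero_le hD q)

theorem hessKerCard_prime_le {k : ℕ} (I : Fin k → ι) {J : Fin k → ι}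
    (hJ : Function.Injective J) (p : ℕ) [Fact p.Prime]
    (hD : ¬ (p : ℤ) ∣ ((F.A + F.Aᵀ).submatrix I J).det) :
    F.hessKerCard p ≤ p ^ (Fintype.card ι - k) := by
  have h := card_ker_mulVec_le (F.hess (ZMod p)) I hJ
  have hD' : (((F.A + F.Aᵀ).submatrix I J).det : ZMod p) ≠ 0 := by
    rwa [Ne, ZMod.intCast_zmod_eq_zero_iff_dvd]
  have hone : Nat.card {e : ZMod p // (((F.A + F.Aᵀ).submatrix I J).det : ZMod p) * e = 0} = 1 := by
    simp [hD']
  rwa [det_submatrix_hess, Nat.card_zmod, Fintype.card_fin, hone, one_pow, one_mul] at h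

variable [DecidableEq ι]

theorem sum_addChar_dotProduct {R : Type*} [CommRing R] [Fintype R] [DecidableEq R]
    {ψ : AddChar R ℂ} (hψ : ψ.IsPrimitive) (v : ι → R) :
    ∑ x : ι → R, ψ (v ⬝ᵥ x) = if v = 0 then (Fintype.card R : ℂ) ^ Fintype.card ι else 0 := by
  have hprod : ∀ x : ι → R, ψ (v ⬝ᵥ x) = ∏ i, ψ (x i * v i) := fun x ↦ by
    rw [dotProduct_comm]
    exact map_prod ψ.toMonoidHom (fun i ↦ Multiplicative.ofAdd (x i * v i)) Finset.univ
  simp only [hprod, ← Fintype.prod_sum (fun i t ↦ ψ (t * v i)), AddChar.sum_mulShift _ hψ]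
  split_ifs with hv
  · simp [hv]
  · obtain ⟨i, hi⟩ := Function.ne_iff.mp hv
    exact Finset.prod_eq_zero (Finset.mem_univ i) (by simpa using hi)

/-- Weyl differencing: `|∑ ψ(F x)|² = ∑_d ψ(F d - c) ∑_x ψ(H d ⬝ x)`, and the inner sum vanishes
unless `d` is in the kernel of the Hessian `H`. -/
theorem norm_sum_addChar_sq_le {R : Type*} [CommRing R] [Fintype R]
    {ψ : AddChar R ℂ} (hψ : ψ.IsPrimitive) :
    ‖∑ x : ι → R, ψ (F.eval x)‖ ^ 2 ≤
      (Fintype.card R : ℝ) ^ Fintype.card ι * Nat.card {d : ι → R // F.hess R *ᵥ d = 0} := by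
  classical
  have hdiff : ((‖∑ x : ι → R, ψ (F.eval x)‖ ^ 2 : ℝ) : ℂ) =
      ∑ d ∈ {d : ι → R | F.hess R *ᵥ d = 0},
        ψ (F.eval d - F.c) * (Fintype.card R : ℂ) ^ Fintype.card ι := by
    calc _ = ∑ x : ι → R, ∑ y : ι → R, ψ (F.eval y) * ψ (-F.eval x) := by
          rw [Complex.ofReal_pow, ← Complex.mul_conj', map_sum, Finset.sum_mul_sum,
            Finset.sum_comm]
          simp only [AddChar.map_neg_eq_conj]
      _ = ∑ x : ι → R, ∑ d : ι → R, ψ (F.eval d - F.c) * ψ ((F.hess R *ᵥ d) ⬝ᵥ x) := by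
          refine Finset.sum_congr rfl fun x _ ↦ ?_
          rw [← Equiv.sum_comp (Equiv.addLeft x)]
          refine Finset.sum_congr rfl fun d _ ↦ ?_
          rw [Equiv.coe_addLeft, eval_add, ← AddChar.map_add_eq_mul, ← AddChar.map_add_eq_mul]
          ring_nf
      _ = _ := by
          rw [Finset.sum_comm, Finset.sum_filter]
          simp only [← Finset.mul_sum, sum_addChar_dotProduct hψ, mul_ite, mul_zero]
  rw [← Real.norm_of_nonneg (sq_nonneg ‖_‖), ← Complex.norm_real, hdiff]
  refine (norm_sum_le _ _).trans_eq ?_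
  simp [AddChar.norm_apply, Nat.card_eq_fintype_card, Fintype.card_subtype, mul_comm]

theorem norm_sum_stdAddChar_le {q : ℕ} [NeZero q] {a : ZMod q} (ha : IsUnit a) :
    ‖∑ x : ι → ZMod q, ZMod.stdAddChar (a * F.eval x)‖ ≤
      √((q : ℝ) ^ Fintype.card ι * F.hessKerCard q) := by
  have hprim : (AddChar.mulShift (ZMod.stdAddChar (N := q)) a).IsPrimitive := by
    intro b hb
    rw [AddChar.mulShift_mulShift]
    exact ZMod.isPrimitive_stdAddChar q (by rwa [Ne, ha.mul_right_eq_zero])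
  have h := F.norm_sum_addChar_sq_le hprim
  rw [ZMod.card] at h
  exact Real.le_sqrt_of_sq_le h

end Weyl

section ExpSum

variable {m : ℕ} (F : IntQuad (Fin m))

theorem expSum_eval (q : ℕ) [NeZero q] :
    expSum m F.eval q = ∑ a ∈ (Finset.range q).filter fun a ↦ Nat.gcd a q = 1,
      ∑ x : Fin m → ZMod q, ZMod.stdAddChar ((a : ZMod q) * F.eval x) := by
  let castEquiv : Fin q ≃ ZMod q := (ZMod.finEquiv q).toEquiv
  have hcast : ∀ i : Fin q, castEquiv i = ((i : ℕ) : ℤ) := by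
    obtain ⟨q, rfl⟩ := Nat.exists_eq_succ_of_ne_zero (NeZero.ne q)
    intro i
    rw [Int.cast_natCast]
    exact (Fin.cast_val_eq_self i).symm
  refine Finset.sum_congr rfl fun a _ ↦
    Fintype.sum_equiv (Equiv.piCongrRight fun _ ↦ castEquiv) _ _ fun b ↦ ?_
  have hb : Equiv.piCongrRight (fun _ ↦ castEquiv) b =
      Int.castRingHom (ZMod q) ∘ fun j ↦ ((b j : ℕ) : ℤ) := funext fun j ↦ hcast (b j)
  rw [hb, ← map_eval, eq_intCast, ← Int.cast_natCast (R := ZMod q) a, ← Int.cast_mul,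
    ZMod.stdAddChar_coe]
  push_cast
  ring_nf

theorem norm_expSum_le (q : ℕ) [NeZero q] :
    ‖expSum m F.eval q‖ ≤ q * √((q : ℝ) ^ m * F.hessKerCard q) := by
  rw [expSum_eval]
  refine (norm_sum_le_of_le _ fun a ha ↦ F.norm_sum_stdAddChar_le
    ((ZMod.isUnit_iff_coprime a q).mpr (Finset.mem_filter.mp ha).2)).trans ?_
  rw [Finset.sum_const, nsmul_eq_mul, Fintype.card_fin]
  gcongr
  exact (Finset.card_filter_le _ _).trans_eq (Finset.card_range q)

/-- The exponent is `-m + 1 + (m + (m - 5)) / 2`. -/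
theorem norm_singSeries_term_le (I : Fin 5 → Fin m) {J : Fin 5 → Fin m}
    (hJ : Function.Injective J) (hD : ((F.A + F.Aᵀ).submatrix I J).det ≠ 0) (q : ℕ) :
    ‖(q : ℂ) ^ (-(m : ℤ)) * expSum m F.eval q‖ ≤
      √((((F.A + F.Aᵀ).submatrix I J).det.natAbs : ℝ) ^ 5) * (q : ℝ) ^ (-(3 / 2) : ℝ) := by
  obtain ⟨n, rfl⟩ : ∃ n, m = n + 5 :=
    Nat.exists_eq_add_of_le' (by simpa using Fintype.card_le_of_injective J hJ)
  rcases Nat.eq_zero_or_pos q with rfl | hq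
  · simp [expSum]
  have : NeZero q := ⟨hq.ne'⟩
  set D := ((F.A + F.Aᵀ).submatrix I J).det.natAbs
  have hq' : (0 : ℝ) < q := by exact_mod_cast hq
  have hker : (F.hessKerCard q : ℝ) ≤ D ^ 5 * q ^ n := by
    exact_mod_cast (by simpa using F.hessKerCard_le_of_det_ne_zero I hJ hD q)
  calc ‖(q : ℂ) ^ (-((n + 5 : ℕ) : ℤ)) * expSum (n + 5) F.eval q‖
      = ((q : ℝ) ^ (n + 5))⁻¹ * ‖expSum (n + 5) F.eval q‖ := by
        rw [norm_mul, norm_zpow, Complex.norm_natCast, _root_.zpow_neg,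
          zpow_natCast]
    _ ≤ ((q : ℝ) ^ (n + 5))⁻¹ * (q * √((q : ℝ) ^ (n + 5) * (D ^ 5 * q ^ n))) := by
        gcongr
        exact (F.norm_expSum_le q).trans (by gcongr)
    _ = √((D : ℝ) ^ 5) * (q : ℝ) ^ (-(3 / 2) : ℝ) := by
        have hpow : (q : ℝ) ^ (n + 5) * (D ^ 5 * q ^ n) = D ^ 5 * ((q ^ (n + 2)) ^ 2 * q) := by ring
        rw [hpow, Real.sqrt_mul (by positivity), Real.sqrt_mul (by positivity),
          Real.sqrt_sq (by positivity)]
        have hrpow : (q : ℝ) ^ (-(3 / 2) : ℝ) = √q / q ^ 2 := by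
          rw [Real.sqrt_eq_rpow, ← Real.rpow_natCast (q : ℝ) 2, ← Real.rpow_sub hq']
          norm_num
        rw [hrpow]
        field_simp
        ring

theorem summable_singSeries (I : Fin 5 → Fin m) {J : Fin 5 → Fin m}
    (hJ : Function.Injective J) (hD : ((F.A + F.Aᵀ).submatrix I J).det ≠ 0) :
    Summable fun q : ℕ ↦ (q : ℂ) ^ (-(m : ℤ)) * expSum m F.eval q :=
  .of_norm_bounded ((Real.summable_nat_rpow.mpr (by norm_num)).mul_left _)
    (F.norm_singSeries_term_le I hJ hD)

end ExpSum
end IntQuad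

/-! ### Local densities and the singular series -/

theorem sum_range_eq_sum_divisors {M : Type*} [AddCommMonoid M] {Q : ℕ} (hQ : 0 < Q)
    (g : ℕ → M) :
    ∑ a ∈ Finset.range Q, g a = ∑ q ∈ Q.divisors,
      ∑ a ∈ (Finset.range q).filter fun a ↦ Nat.gcd a q = 1, g (a * (Q / q)) := by
  rw [Finset.sum_sigma']
  symm
  refine Finset.sum_bij' (fun x _ ↦ x.2 * (Q / x.1))
    (fun a _ ↦ ⟨Q / Nat.gcd a Q, a / Nat.gcd a Q⟩) ?_ ?_ ?_ ?_ fun _ _ ↦ rfl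
  · rintro ⟨q, a⟩ h
    simp only [Finset.mem_sigma, Nat.mem_divisors, Finset.mem_filter, Finset.mem_range] at h ⊢
    obtain ⟨⟨hq, -⟩, ha, -⟩ := h
    calc a * (Q / q) < q * (Q / q) :=
          Nat.mul_lt_mul_of_pos_right ha (Nat.div_pos (Nat.le_of_dvd hQ hq) (by omega))
      _ = Q := Nat.mul_div_cancel' hq
  · intro a ha
    have hg : 0 < Nat.gcd a Q := Nat.gcd_pos_of_pos_right _ hQ
    simp only [Finset.mem_sigma, Nat.mem_divisors, Finset.mem_filter, Finset.mem_range] at ha ⊢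
    exact ⟨⟨Nat.div_dvd_of_dvd (Nat.gcd_dvd_right _ _), hQ.ne'⟩,
      Nat.div_lt_div_of_lt_of_dvd (Nat.gcd_dvd_right _ _) ha, Nat.coprime_div_gcd_div_gcd hg⟩
  · rintro ⟨q, a⟩ h
    simp only [Finset.mem_sigma, Nat.mem_divisors, Finset.mem_filter, Finset.mem_range] at h
    obtain ⟨⟨⟨e, rfl⟩, -⟩, ha, hg⟩ := h
    have hq : 0 < q := by omega
    have he : 0 < e := Nat.pos_of_ne_zero (right_ne_zero_of_mul hQ.ne')
    simp only [Nat.mul_div_cancel_left _ hq, Nat.gcd_mul_right, hg, one_mul,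
      Nat.mul_div_cancel _ he]
  · intro a _
    simp only [Nat.div_div_self (Nat.gcd_dvd_right a Q) hQ.ne',
      Nat.div_mul_cancel (Nat.gcd_dvd_left a Q)]

theorem card_mul_sum_comp_of_surjective {G H K : Type*} [AddGroup G] [AddGroup H] [Fintype G]
    [Fintype H] [CommSemiring K] {φ : G →+ H} (hφ : Function.Surjective φ) (f : H → K) :
    (Fintype.card H : K) * ∑ g, f (φ g) = Fintype.card G * ∑ h, f h := by
  classical
  set κ : ℕ := Finset.card {g | φ g = 0}
  have hfiber : ∀ h : H, Finset.card {g | φ g = h} = κ := fun h ↦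
    AddMonoidHom.card_fiber_eq_of_mem_range φ (hφ h) (hφ 0)
  have hcard : Fintype.card G = Fintype.card H * κ := by
    rw [← Finset.card_univ,
      Finset.card_eq_sum_card_fiberwise fun g _ ↦ Finset.mem_univ (φ g)]
    simp [hfiber]
  have hsum : ∑ g, f (φ g) = κ * ∑ h, f h := by
    rw [← Finset.sum_fiberwise Finset.univ φ, Finset.mul_sum]
    refine Finset.sum_congr rfl fun h _ ↦ ?_
    rw [← hfiber h, ← nsmul_eq_mul, ← Finset.sum_const]
    exact Finset.sum_congr rfl fun g hg ↦ congrArg f (Finset.mem_filter.mp hg).2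
  rw [hsum, hcard, Nat.cast_mul, mul_assoc]

theorem sum_range_stdAddChar_mul (Q : ℕ) [NeZero Q] (t : ZMod Q) :
    ∑ a ∈ Finset.range Q, ZMod.stdAddChar ((a : ZMod Q) * t) = if t = 0 then (Q : ℂ) else 0 := by
  have h := AddChar.sum_mulShift t (ZMod.isPrimitive_stdAddChar Q)
  rw [ZMod.card, Nat.cast_ite, Nat.cast_zero] at h
  rw [← h]
  exact Finset.sum_bij' (fun a _ ↦ (a : ZMod Q)) (fun t _ ↦ t.val) (by simp)
    (fun t _ ↦ Finset.mem_range.mpr (ZMod.val_lt t))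
    (fun a ha ↦ ZMod.val_cast_of_lt (Finset.mem_range.mp ha)) (by simp) (fun _ _ ↦ rfl)

theorem stdAddChar_natCast_div_mul {q Q : ℕ} [NeZero q] [NeZero Q] (hqQ : q ∣ Q) (a : ℕ)
    (n : ZMod Q) :
    ZMod.stdAddChar (((a * (Q / q) : ℕ) : ZMod Q) * n) =
      ZMod.stdAddChar ((a : ZMod q) * ZMod.castHom hqQ (ZMod q) n) := by
  obtain ⟨n, rfl⟩ := ZMod.intCast_surjective n
  obtain ⟨e, rfl⟩ := hqQ
  have hq : (q : ℂ) ≠ 0 := NeZero.ne _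
  have he : (e : ℂ) ≠ 0 := Nat.cast_ne_zero.mpr (right_ne_zero_of_mul (NeZero.ne (q * e)))
  rw [map_intCast, ← Int.cast_natCast, ← Int.cast_natCast (R := ZMod q) a, ← Int.cast_mul,
    ← Int.cast_mul, ZMod.stdAddChar_coe, ZMod.stdAddChar_coe,
    Nat.mul_div_cancel_left _ (NeZero.pos q)]
  congr 1
  push_cast
  field_simp

namespace IntQuad
section Density

variable {ι : Type*} [Fintype ι] (F : IntQuad ι)

/-- The number of zeros of `F` modulo `q`. -/
noncomputable def zeroCount (q : ℕ) : ℕ := Nat.card {x : ι → ZMod q // F.eval x = 0}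

/-- The normalized density `q N(q) / q ^ m` of zeros of `F` modulo `q`: the partial sum of the
singular series over the divisors of `q`. -/
noncomputable def density (q : ℕ) : ℝ := q * F.zeroCount q / q ^ Fintype.card ι

theorem sum_range_sum_stdAddChar [DecidableEq ι] (Q : ℕ) [NeZero Q] :
    ∑ a ∈ Finset.range Q, ∑ b : ι → ZMod Q, ZMod.stdAddChar ((a : ZMod Q) * F.eval b) =
      (Q : ℂ) * F.zeroCount Q := by
  rw [Finset.sum_comm]
  simp only [sum_range_stdAddChar_mul]
  rw [← Finset.sum_filter, Finset.sum_const, nsmul_eq_mul, zeroCount, Nat.card_eq_fintype_card,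
    Fintype.card_subtype, mul_comm]

theorem zeroCount_mul {a b : ℕ} (hab : a.Coprime b) :
    F.zeroCount (a * b) = F.zeroCount a * F.zeroCount b := by
  have e := ZMod.chineseRemainder hab
  have hcrt : ∀ x : ι → ZMod (a * b), F.eval x = 0 ↔
      F.eval (fun i ↦ (e (x i)).1) = 0 ∧ F.eval (fun i ↦ (e (x i)).2) = 0 := fun x ↦ by
    have hfst := F.map_eval ((RingHom.fst _ _).comp e.toRingHom) x
    have hsnd := F.map_eval ((RingHom.snd _ _).comp e.toRingHom) x
    rw [← e.map_eq_zero_iff, Prod.ext_iff]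
    exact and_congr (iff_of_eq (congrArg (· = 0) hfst)) (iff_of_eq (congrArg (· = 0) hsnd))
  rw [zeroCount, zeroCount, zeroCount, ← Nat.card_prod]
  refine Nat.card_congr (Equiv.trans (Equiv.subtypeEquiv
    ((Equiv.piCongrRight fun _ ↦ e.toEquiv).trans (Equiv.arrowProdEquivProdArrow _ _ _)) hcrt)
    Equiv.subtypeProdEquivProd)

theorem density_mul {a b : ℕ} (hab : a.Coprime b) :
    F.density (a * b) = F.density a * F.density b := by
  rw [density, density, density, F.zeroCount_mul hab]
  push_cast
  ring

theorem density_one : F.density 1 = 1 := by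
  have : F.zeroCount 1 = 1 := Nat.card_eq_one_iff_unique.mpr
    ⟨⟨fun a b ↦ Subtype.ext (Subsingleton.elim _ _)⟩, ⟨⟨0, Subsingleton.elim _ _⟩⟩⟩
  simp [density, this]

end Density

section SingularSeries

variable {m : ℕ} (F : IntQuad (Fin m))

theorem sum_stdAddChar_natCast_div_mul {q Q : ℕ} [NeZero q] [NeZero Q] (hqQ : q ∣ Q) (a : ℕ) :
    (q : ℂ) ^ m * ∑ b : Fin m → ZMod Q,
        ZMod.stdAddChar (((a * (Q / q) : ℕ) : ZMod Q) * F.eval b) =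
      (Q : ℂ) ^ m * ∑ x : Fin m → ZMod q, ZMod.stdAddChar ((a : ZMod q) * F.eval x) := by
  let φ : (Fin m → ZMod Q) →+ (Fin m → ZMod q) :=
    (ZMod.castHom hqQ (ZMod q)).toAddMonoidHom.compLeft (Fin m)
  have hφ : Function.Surjective φ := (ZMod.castHom_surjective hqQ).comp_left
  have h := card_mul_sum_comp_of_surjective hφ
    fun x : Fin m → ZMod q ↦ ZMod.stdAddChar ((a : ZMod q) * F.eval x)
  simp only [Fintype.card_fun, ZMod.card, Fintype.card_fin, Nat.cast_pow] at h
  rw [← h]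
  simp only [stdAddChar_natCast_div_mul hqQ, map_eval]
  rfl

theorem sum_divisors_eq_density {Q : ℕ} (hQ : 0 < Q) :
    ∑ q ∈ Q.divisors, (q : ℂ) ^ (-(m : ℤ)) * expSum m F.eval q = F.density Q := by
  have : NeZero Q := ⟨hQ.ne'⟩
  rw [density, Fintype.card_fin]
  push_cast
  rw [← sum_range_sum_stdAddChar, sum_range_eq_sum_divisors hQ, Finset.sum_div]
  refine Finset.sum_congr rfl fun q hq ↦ ?_
  have : NeZero q := ⟨(Nat.pos_of_mem_divisors hq).ne'⟩
  have hq' : (q : ℂ) ≠ 0 := NeZero.ne _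
  have hQ' : (Q : ℂ) ≠ 0 := NeZero.ne _
  rw [expSum_eval, Finset.mul_sum, Finset.sum_div]
  refine Finset.sum_congr rfl fun a _ ↦ ?_
  rw [_root_.zpow_neg, zpow_natCast, inv_mul_eq_div, div_eq_div_iff (by positivity) (by positivity),
    mul_comm _ ((Q : ℂ) ^ m), mul_comm _ ((q : ℂ) ^ m)]
  exact (F.sum_stdAddChar_natCast_div_mul (Nat.dvd_of_mem_divisors hq) a).symm

theorem le_re_singSeries_of_le_density
    (hs : Summable fun q : ℕ ↦ (q : ℂ) ^ (-(m : ℤ)) * expSum m F.eval q) {κ : ℝ}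
    (hκ : ∀ Q : ℕ, 0 < Q → κ ≤ F.density Q) : κ ≤ (singSeries m F.eval).re := by
  have hdiv : Filter.Tendsto (fun k : ℕ ↦ insert 0 k.factorial.divisors)
      Filter.atTop Filter.atTop := by
    refine Filter.tendsto_atTop_finset_of_monotone (fun a b hab ↦ ?_) fun n ↦ ⟨n, ?_⟩
    · exact Finset.insert_subset_insert _ (Nat.divisors_subset_of_dvd (Nat.factorial_ne_zero _)
        (Nat.factorial_dvd_factorial hab))
    · rcases Nat.eq_zero_or_pos n with rfl | hn
      · exact Finset.mem_insert_self _ _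
      · exact Finset.mem_insert_of_mem (Nat.mem_divisors.mpr
          ⟨Nat.dvd_factorial hn le_rfl, Nat.factorial_ne_zero _⟩)
  refine ge_of_tendsto' ((Complex.continuous_re.tendsto _).comp (hs.hasSum.comp hdiv)) fun k ↦ ?_
  have hzero : expSum m F.eval 0 = 0 := by simp [expSum]
  simp only [Function.comp]
  rw [Finset.sum_insert (by simp), hzero, mul_zero, zero_add,
    F.sum_divisors_eq_density k.factorial_pos, Complex.ofReal_re]
  exact hκ _ k.factorial_pos

end SingularSeries
section Hensel

variable {ι : Type*} [Fintype ι] (F : IntQuad ι)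

theorem dvd_eval_sub_eval {R : Type*} [CommRing R] {n : R} {x y : ι → R}
    (h : ∀ j, n ∣ x j - y j) : n ∣ F.eval x - F.eval y := by
  have hmk : Ideal.Quotient.mk (Ideal.span {n}) ∘ x = Ideal.Quotient.mk (Ideal.span {n}) ∘ y :=
    funext fun j ↦ Ideal.Quotient.eq.mpr (Ideal.mem_span_singleton.mpr (h j))
  rw [← Ideal.mem_span_singleton, ← Ideal.Quotient.eq, map_eval, map_eval, hmk]

theorem dvd_grad_sub_grad {R : Type*} [CommRing R] {n : R} {x y : ι → R}
    (h : ∀ j, n ∣ x j - y j) (i : ι) : n ∣ F.grad x i - F.grad y i := by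
  have hmk : Ideal.Quotient.mk (Ideal.span {n}) ∘ x = Ideal.Quotient.mk (Ideal.span {n}) ∘ y :=
    funext fun j ↦ Ideal.Quotient.eq.mpr (Ideal.mem_span_singleton.mpr (h j))
  rw [← Ideal.mem_span_singleton, ← Ideal.Quotient.eq, map_grad, map_grad, hmk]

variable {p : ℕ} [Fact p.Prime]

theorem exists_eval_add_single_eq_zero [DecidableEq ι] {x : ι → ℤ_[p]} {i : ι}
    (h : ‖F.eval x‖ < ‖F.grad x i‖ ^ 2) :
    ∃ t : ℤ_[p], ‖t‖ < ‖F.grad x i‖ ∧ F.eval (x + Pi.single i t) = 0 := by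
  let f : Polynomial ℤ_[p] := Polynomial.C (F.eval x) +
    Polynomial.C (F.grad x i) * Polynomial.X + Polynomial.C (F.A i i : ℤ_[p]) * Polynomial.X ^ 2
  have hf : Polynomial.aeval (0 : ℤ_[p]) f = F.eval x := by simp [f]
  have hf' : Polynomial.aeval (0 : ℤ_[p]) f.derivative = F.grad x i := by simp [f]
  obtain ⟨t, ht, htlt, -⟩ := hensels_lemma (F := f) (a := 0) (by rwa [hf, hf'])
  rw [sub_zero, hf'] at htlt
  exact ⟨t, htlt, by simpa [f, eval_add_single] using ht⟩

theorem exists_dvd_eval_add_single_eq_zero [DecidableEq ι] {x : ι → ℤ} {i : ι} {e v : ℕ}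
    (he : (p : ℤ) ^ e ∣ F.eval x) (hv : ¬ (p : ℤ) ^ (v + 1) ∣ F.grad x i) (hev : 2 * v < e) :
    ∃ t : ℤ_[p], (p : ℤ_[p]) ∣ t ∧ F.eval (Int.castRingHom ℤ_[p] ∘ x + Pi.single i t) = 0 := by
  have hp : (1 : ℝ) < p := Nat.one_lt_cast.mpr (Fact.out : p.Prime).one_lt
  have heval : ‖((F.eval x : ℤ) : ℤ_[p])‖ ≤ (p : ℝ) ^ (-(e : ℤ)) :=
    PadicInt.norm_int_le_pow_iff_dvd.mpr (by exact_mod_cast he)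
  have hgrad : (p : ℝ) ^ (-(v : ℤ)) ≤ ‖((F.grad x i : ℤ) : ℤ_[p])‖ := by
    by_contra! hlt
    have hle := (PadicInt.norm_le_pow_iff_norm_lt_pow_add_one _ (-((v + 1 : ℕ) : ℤ))).mpr
      (hlt.trans_eq (by congr 1; push_cast; ring))
    exact hv (by exact_mod_cast PadicInt.norm_int_le_pow_iff_dvd.mp hle)
  have hlt : ‖((F.eval x : ℤ) : ℤ_[p])‖ < ‖((F.grad x i : ℤ) : ℤ_[p])‖ ^ 2 :=
    calc _ ≤ (p : ℝ) ^ (-(e : ℤ)) := heval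
      _ < (p : ℝ) ^ (-(v : ℤ) * (2 : ℕ)) := zpow_lt_zpow_right₀ hp (by omega)
      _ = ((p : ℝ) ^ (-(v : ℤ))) ^ 2 := by rw [_root_.zpow_mul, zpow_natCast]
      _ ≤ _ := by gcongr
  rw [← eq_intCast (Int.castRingHom ℤ_[p]), ← eq_intCast (Int.castRingHom ℤ_[p]), map_eval,
    map_grad] at hlt
  obtain ⟨t, ht, hroot⟩ := F.exists_eval_add_single_eq_zero hlt
  exact ⟨t, (PadicInt.norm_lt_one_iff_dvd t).mp (ht.trans_le (PadicInt.norm_le_one _)), hroot⟩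

theorem exists_padic_zero_of_dvd_sub {x₀ : ι → ℤ} {i : ι} {e v : ℕ}
    (he : (p : ℤ) ^ e ∣ F.eval x₀) (hv : ¬ (p : ℤ) ^ (v + 1) ∣ F.grad x₀ i) (hev : 2 * v < e)
    {x : ι → ℤ} (hx : ∀ j, (p : ℤ) ^ e ∣ x j - x₀ j) :
    ∃ z : ι → ℤ_[p], F.eval z = 0 ∧ (∀ j, (p : ℤ_[p]) ∣ z j - x₀ j) ∧ ∀ j ≠ i, z j = x j := by
  classical
  have hx' : ∀ j, (p : ℤ) ^ (v + 1) ∣ x j - x₀ j := fun j ↦ (pow_dvd_pow _ (by omega)).trans (hx j)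
  have heval : (p : ℤ) ^ e ∣ F.eval x := (dvd_iff_dvd_of_dvd_sub (F.dvd_eval_sub_eval hx)).mpr he
  have hgrad : ¬ (p : ℤ) ^ (v + 1) ∣ F.grad x i := fun h ↦
    hv ((dvd_iff_dvd_of_dvd_sub (F.dvd_grad_sub_grad hx' i)).mp h)
  obtain ⟨t, ht, hroot⟩ := F.exists_dvd_eval_add_single_eq_zero heval hgrad hev
  refine ⟨_, hroot, fun j ↦ ?_, fun j hj ↦ by simp [hj]⟩
  have hsingle : (p : ℤ_[p]) ∣ (Pi.single i t : ι → ℤ_[p]) j := by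
    rcases eq_or_ne j i with rfl | hj
    · rwa [Pi.single_eq_same]
    · rw [Pi.single_eq_of_ne hj]
      exact dvd_zero _
  have hcast : (p : ℤ_[p]) ∣ (x j : ℤ_[p]) - x₀ j := by
    have := map_dvd (Int.castRingHom ℤ_[p]) ((dvd_pow_self _ (by omega)).trans (hx j))
    simpa using this
  simpa [add_sub_right_comm] using dvd_add hcast hsingle

/-- The lifts arise by moving the coordinates other than `i` freely in their class modulo `p ^ e`
and solving for the coordinate `i`. -/
theorem pow_le_card_lift {x₀ : ι → ℤ} {i : ι} {e v k : ℕ}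
    (he : (p : ℤ) ^ e ∣ F.eval x₀) (hv : ¬ (p : ℤ) ^ (v + 1) ∣ F.grad x₀ i) (hev : 2 * v < e)
    (hek : e ≤ k) (hpk : p ∣ p ^ k) :
    p ^ ((k - e) * (Fintype.card ι - 1)) ≤ Nat.card {x : ι → ZMod (p ^ k) //
      F.eval x = 0 ∧ ∀ j, ZMod.castHom hpk (ZMod p) (x j) = x₀ j} := by
  classical
  have hp : p.Prime := Fact.out
  have : NeZero (p ^ k) := ⟨pow_ne_zero k hp.ne_zero⟩
  let x (u : {j // j ≠ i} → Fin (p ^ (k - e))) (j : ι) : ℤ :=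
    if hj : j ≠ i then x₀ j + (p : ℤ) ^ e * ((u ⟨j, hj⟩ : ℕ) : ℤ) else x₀ j
  have hx : ∀ u j, (p : ℤ) ^ e ∣ x u j - x₀ j := fun u j ↦ by
    simp only [x]
    split_ifs <;> simp
  choose z hz hzx₀ hzx using fun u ↦ F.exists_padic_zero_of_dvd_sub he hv hev (hx u)
  have hred : ∀ u j, ZMod.castHom hpk (ZMod p) (PadicInt.toZModPow k (z u j)) = x₀ j := by
    intro u j
    obtain ⟨w, hw⟩ := hzx₀ u j
    rw [← RingHom.comp_apply, eq_add_of_sub_eq' hw, map_add, map_mul, map_natCast, map_intCast]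
    simp
  have hinj : Function.Injective fun u j ↦ PadicInt.toZModPow k (z u j) := by
    intro u u' huu
    funext ⟨j, hj⟩
    have hval := congrFun huu j
    have hlt : ∀ w : Fin (p ^ (k - e)), p ^ e * (w : ℕ) < p ^ k := fun w ↦
      (Nat.mul_lt_mul_of_pos_left w.2 (pow_pos hp.pos e)).trans_eq (pow_mul_pow_sub p hek)
    have hzj : ∀ u, PadicInt.toZModPow k (z u j) =
        x₀ j + ((p ^ e * u ⟨j, hj⟩ : ℕ) : ZMod (p ^ k)) := fun u ↦ by
      rw [hzx u j hj, map_intCast]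
      simp [x, hj]
    simp only [hzj, add_right_inj] at hval
    rw [ZMod.natCast_eq_natCast_iff', Nat.mod_eq_of_lt (hlt _), Nat.mod_eq_of_lt (hlt _)] at hval
    exact Fin.ext (Nat.eq_of_mul_eq_mul_left (pow_pos hp.pos e) hval)
  calc p ^ ((k - e) * (Fintype.card ι - 1))
      = Nat.card ({j // j ≠ i} → Fin (p ^ (k - e))) := by
        rw [Nat.card_fun, Nat.card_fin, Nat.card_eq_fintype_card, Fintype.card_subtype_compl,
          Fintype.card_subtype_eq, pow_mul]
    _ ≤ _ := Nat.card_le_card_of_injective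
        (fun u ↦ ⟨fun j ↦ PadicInt.toZModPow k (z u j), by
          rw [← Function.comp_def, ← map_eval, hz, map_zero], hred u⟩)
        fun u u' huu ↦ hinj (congrArg Subtype.val huu)

theorem pow_le_zeroCount {x₀ : ι → ℤ} {i : ι} {e v : ℕ} (he : (p : ℤ) ^ e ∣ F.eval x₀)
    (hv : ¬ (p : ℤ) ^ (v + 1) ∣ F.grad x₀ i) (hev : 2 * v < e) (k : ℕ) :
    p ^ ((k - e) * (Fintype.card ι - 1)) ≤ F.zeroCount (p ^ k) := by
  have : NeZero (p ^ k) := ⟨pow_ne_zero k (Fact.out : p.Prime).ne_zero⟩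
  rcases le_or_gt e k with hek | hke
  · exact (F.pow_le_card_lift he hv hev hek (dvd_pow_self p (by omega))).trans
      (Nat.card_le_card_of_injective _ (Subtype.map_injective (fun _ h ↦ h.1)
        Function.injective_id))
  · have hzero : F.eval (Int.castRingHom (ZMod (p ^ k)) ∘ x₀) = 0 := by
      rw [← map_eval, eq_intCast, ZMod.intCast_zmod_eq_zero_iff_dvd, Nat.cast_pow]
      exact (pow_dvd_pow _ hke.le).trans he
    have : Nonempty {x : ι → ZMod (p ^ k) // F.eval x = 0} := ⟨⟨_, hzero⟩⟩
    rw [Nat.sub_eq_zero_of_le hke.le, zero_mul, pow_zero]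
    exact Nat.card_pos

end Hensel

section SmoothZeros

variable {ι : Type*} [Fintype ι] (F : IntQuad ι)

/-- The number of nonsingular zeros of `F` modulo `p`. -/
noncomputable def smoothZeroCount (p : ℕ) : ℕ :=
  Nat.card {x : ι → ZMod p // F.eval x = 0 ∧ F.grad x ≠ 0}

theorem smoothZeroCount_mul_le_zeroCount {p : ℕ} [Fact p.Prime] {k : ℕ} (hk : 0 < k) :
    F.smoothZeroCount p * p ^ ((k - 1) * (Fintype.card ι - 1)) ≤ F.zeroCount (p ^ k) := by
  classical
  have : NeZero (p ^ k) := ⟨pow_ne_zero k (Fact.out : p.Prime).ne_zero⟩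
  have hpk : p ∣ p ^ k := dvd_pow_self p hk.ne'
  let red : (ι → ZMod (p ^ k)) → ι → ZMod p := fun z j ↦ ZMod.castHom hpk (ZMod p) (z j)
  have hfiber : ∀ x : ι → ZMod p, F.eval x = 0 ∧ F.grad x ≠ 0 →
      p ^ ((k - 1) * (Fintype.card ι - 1)) ≤
        Finset.card {z ∈ ({z | F.eval z = 0} : Finset (ι → ZMod (p ^ k))) | red z = x} := by
    intro x hx
    obtain ⟨x₀, rfl⟩ := (ZMod.intCast_surjective (n := p)).comp_left x
    obtain ⟨i, hi⟩ := Function.ne_iff.mp hx.2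
    have heval : (p : ℤ) ^ 1 ∣ F.eval x₀ := by
      rw [pow_one, ← ZMod.intCast_zmod_eq_zero_iff_dvd]
      exact (F.map_eval (Int.castRingHom (ZMod p)) x₀).trans hx.1
    have hgrad : ¬ (p : ℤ) ^ (0 + 1) ∣ F.grad x₀ i := by
      rw [zero_add, pow_one, ← ZMod.intCast_zmod_eq_zero_iff_dvd]
      exact fun h ↦ hi ((F.map_grad (Int.castRingHom (ZMod p)) x₀ i).symm.trans h)
    refine (F.pow_le_card_lift heval hgrad one_pos hk hpk).trans_eq ?_
    rw [Nat.card_eq_fintype_card, Fintype.card_subtype, Finset.filter_filter]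
    simp only [red, funext_iff, Function.comp_apply]
  calc F.smoothZeroCount p * p ^ ((k - 1) * (Fintype.card ι - 1))
      = ∑ x : ι → ZMod p with F.eval x = 0 ∧ F.grad x ≠ 0,
          p ^ ((k - 1) * (Fintype.card ι - 1)) := by
        rw [Finset.sum_const, smoothZeroCount, Nat.card_eq_fintype_card, Fintype.card_subtype,
          smul_eq_mul]
    _ ≤ _ := Finset.sum_le_sum fun x hx ↦ hfiber x (Finset.mem_filter.mp hx).2
    _ ≤ F.zeroCount (p ^ k) := by
        rw [Finset.sum_card_fiberwise_eq_card_filter, zeroCount, Nat.card_eq_fintype_card,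
          Fintype.card_subtype]
        exact Finset.card_filter_le _ _

theorem div_pow_le_density_of_mul_pow_le [Nonempty ι] {p e k N : ℕ} (hp : 0 < p)
    (h : N * p ^ ((k - e) * (Fintype.card ι - 1)) ≤ F.zeroCount (p ^ k)) :
    (N : ℝ) / (p : ℝ) ^ (e * (Fintype.card ι - 1)) ≤ F.density (p ^ k) := by
  obtain ⟨m, hm⟩ := Nat.exists_eq_add_one_of_ne_zero (Fintype.card_ne_zero (α := ι))
  rw [hm, Nat.add_sub_cancel] at h ⊢
  have hp' : (1 : ℝ) ≤ p := Nat.one_le_cast.mpr hp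
  have hN : (N : ℝ) * (p : ℝ) ^ ((k - e) * m) ≤ F.zeroCount (p ^ k) := by exact_mod_cast h
  rw [density, hm, Nat.cast_pow, div_le_div_iff₀ (by positivity) (by positivity)]
  calc (N : ℝ) * ((p : ℝ) ^ k) ^ (m + 1) = (p : ℝ) ^ k * (N * (p : ℝ) ^ (k * m)) := by ring
    _ ≤ (p : ℝ) ^ k * (N * (p : ℝ) ^ ((k - e) * m + e * m)) := by
        gcongr
        rw [← add_mul]
        exact Nat.mul_le_mul_right _ (by omega)
    _ = (p : ℝ) ^ k * (N * (p : ℝ) ^ ((k - e) * m)) * (p : ℝ) ^ (e * m) := by ring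
    _ ≤ _ := by gcongr

theorem smoothZeroCount_div_le_density [Nonempty ι] {p : ℕ} [Fact p.Prime] {k : ℕ} (hk : 0 < k) :
    (F.smoothZeroCount p : ℝ) / (p : ℝ) ^ (Fintype.card ι - 1) ≤ F.density (p ^ k) := by
  simpa only [one_mul] using F.div_pow_le_density_of_mul_pow_le (Fact.out : p.Prime).pos
    (F.smoothZeroCount_mul_le_zeroCount hk)

theorem inv_pow_le_density {p : ℕ} [Fact p.Prime] {x₀ : ι → ℤ} {i : ι} {e v : ℕ}
    (he : (p : ℤ) ^ e ∣ F.eval x₀) (hv : ¬ (p : ℤ) ^ (v + 1) ∣ F.grad x₀ i) (hev : 2 * v < e)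
    (k : ℕ) : ((p : ℝ) ^ (e * (Fintype.card ι - 1)))⁻¹ ≤ F.density (p ^ k) := by
  have : Nonempty ι := ⟨i⟩
  simpa using F.div_pow_le_density_of_mul_pow_le (N := 1) (Fact.out : p.Prime).pos
    (by simpa using F.pow_le_zeroCount he hv hev k)

end SmoothZeros
section WeylZeros

variable {ι : Type*} [Fintype ι] (F : IntQuad ι)

theorem abs_mul_zeroCount_sub_le (p : ℕ) [Fact p.Prime] :
    |(p : ℝ) * F.zeroCount p - (p : ℝ) ^ Fintype.card ι| ≤
      p * √((p : ℝ) ^ Fintype.card ι * F.hessKerCard p) := by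
  classical
  have hp : p.Prime := Fact.out
  have hsplit : (p : ℂ) * F.zeroCount p - (p : ℂ) ^ Fintype.card ι = ∑ a ∈ (Finset.range p).erase 0,
      ∑ x : ι → ZMod p, ZMod.stdAddChar ((a : ZMod p) * F.eval x) := by
    rw [← sum_range_sum_stdAddChar, ← Finset.add_sum_erase _ _ (Finset.mem_range.mpr hp.pos)]
    simp
  have hnorm : ‖((p : ℝ) * F.zeroCount p - (p : ℝ) ^ Fintype.card ι : ℝ)‖ =
      ‖(p : ℂ) * F.zeroCount p - (p : ℂ) ^ Fintype.card ι‖ := by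
    rw [← Complex.norm_real]
    push_cast
    rfl
  rw [← Real.norm_eq_abs, hnorm, hsplit]
  refine (norm_sum_le_of_le _ fun a ha ↦ F.norm_sum_stdAddChar_le ?_).trans ?_
  · rw [Finset.mem_erase, Finset.mem_range] at ha
    exact (ZMod.isUnit_iff_coprime a p).mpr
      (Nat.coprime_of_lt_prime ha.1 ha.2 hp).symm
  · rw [Finset.sum_const, nsmul_eq_mul]
    gcongr
    exact (Finset.card_le_card (Finset.erase_subset _ _)).trans_eq (Finset.card_range p)

theorem hessKerCard_le_pow (p : ℕ) [NeZero p] : F.hessKerCard p ≤ p ^ Fintype.card ι := by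
  simpa [hessKerCard, Nat.card_fun] using
    Finite.card_subtype_le fun d : ι → ZMod p ↦ F.hess (ZMod p) *ᵥ d = 0

theorem card_grad_eq_zero_le (p : ℕ) [NeZero p] :
    Nat.card {x : ι → ZMod p // F.grad x = 0} ≤ F.hessKerCard p := by
  rcases isEmpty_or_nonempty {x : ι → ZMod p // F.grad x = 0} with _ | ⟨⟨x₀, hx₀⟩⟩
  · simp
  · refine Nat.card_le_card_of_injective (fun x ↦ ⟨x - x₀, ?_⟩) fun x y hxy ↦
      Subtype.ext (sub_left_injective (congrArg Subtype.val hxy))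
    funext i
    have h := congrFun (x.2.trans hx₀.symm) i
    rw [grad, grad, add_left_inj] at h
    simp [mulVec_sub, h]

theorem zeroCount_le_smoothZeroCount_add (p : ℕ) [NeZero p] :
    F.zeroCount p ≤ F.smoothZeroCount p + F.hessKerCard p := by
  classical
  refine le_trans ?_ (Nat.add_le_add_left (F.card_grad_eq_zero_le p) _)
  simp only [zeroCount, smoothZeroCount, Nat.card_eq_fintype_card, Fintype.card_subtype]
  rw [← Finset.card_filter_add_card_filter_not (fun x ↦ F.grad x ≠ 0), Finset.filter_filter,
    Finset.filter_filter]
  gcongr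
  exact fun h ↦ not_not.mp h.2

theorem one_sub_two_mul_le_smoothZeroCount_div [Nonempty ι] (p : ℕ) [Fact p.Prime] {β : ℝ}
    (hβ : 0 ≤ β) (h : (p : ℝ) ^ 2 * F.hessKerCard p ≤ β ^ 2 * (p : ℝ) ^ Fintype.card ι) :
    1 - 2 * β ≤ (F.smoothZeroCount p : ℝ) / (p : ℝ) ^ (Fintype.card ι - 1) := by
  obtain ⟨m, hm⟩ := Nat.exists_eq_add_one_of_ne_zero (Fintype.card_ne_zero (α := ι))
  have hp : (0 : ℝ) < p := Nat.cast_pos.mpr (Fact.out : p.Prime).pos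
  have hker : (F.hessKerCard p : ℝ) ≤ (p : ℝ) ^ Fintype.card ι := by
    exact_mod_cast F.hessKerCard_le_pow p
  have herror : p * √((p : ℝ) ^ Fintype.card ι * F.hessKerCard p) ≤
      β * (p : ℝ) ^ Fintype.card ι := by
    refine le_of_sq_le_sq ?_ (by positivity)
    rw [mul_pow, Real.sq_sqrt (by positivity)]
    nlinarith [pow_pos hp (Fintype.card ι)]
  have hsingular : (p : ℝ) * F.hessKerCard p ≤ β * (p : ℝ) ^ Fintype.card ι := by
    refine le_trans ?_ herror
    gcongr
    refine Real.le_sqrt_of_sq_le ?_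
    rw [sq]
    gcongr
  have hzeros := (abs_le.mp (F.abs_mul_zeroCount_sub_le p)).1
  have hsmooth : (F.zeroCount p : ℝ) ≤ F.smoothZeroCount p + F.hessKerCard p := by
    exact_mod_cast F.zeroCount_le_smoothZeroCount_add p
  rw [hm, Nat.add_sub_cancel, le_div_iff₀ (by positivity)]
  rw [hm, pow_succ] at *
  nlinarith

end WeylZeros

section SMul

variable {ι : Type*}

instance : SMul ℤ (IntQuad ι) where
  smul n F := ⟨n • F.A, n • F.B, n * F.c⟩

variable [Fintype ι]

theorem smul_eval {R : Type*} [CommRing R] (n : ℤ) (F : IntQuad ι) (x : ι → R) :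
    (n • F).eval x = n * F.eval x := by
  change IntQuad.eval ⟨n • F.A, n • F.B, n * F.c⟩ x = _
  simp only [eval_eq_sum, Matrix.smul_apply, Pi.smul_apply, smul_eq_mul, Int.cast_mul, mul_add,
    Finset.mul_sum, mul_assoc]

theorem density_le_density_smul (n : ℤ) (F : IntQuad ι) (q : ℕ) [NeZero q] :
    F.density q ≤ (n • F).density q := by
  rw [density, density, zeroCount, zeroCount]
  gcongr
  exact Nat.card_le_card_of_injective _ (Subtype.map_injective
    (fun x hx ↦ (smul_eval n F x).trans (by rw [hx, mul_zero])) Function.injective_id)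

end SMul
end IntQuad

theorem one_sub_sum_le_prod_one_sub {ι : Type*} (s : Finset ι) {b : ι → ℝ}
    (hb₀ : ∀ i ∈ s, 0 ≤ b i) (hb₁ : ∀ i ∈ s, b i ≤ 1) :
    1 - ∑ i ∈ s, b i ≤ ∏ i ∈ s, (1 - b i) := by
  classical
  induction s using Finset.induction_on with
  | empty => simp
  | insert a s ha ih =>
    rw [Finset.forall_mem_insert] at hb₀ hb₁
    have hprod : ∏ i ∈ s, (1 - b i) ≤ 1 := Finset.prod_le_one
      (fun i hi ↦ sub_nonneg.mpr (hb₁.2 i hi)) fun i hi ↦ sub_le_self _ (hb₀.2 i hi)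
    rw [Finset.sum_insert ha, Finset.prod_insert ha]
    nlinarith [ih hb₀.2 hb₁.2]

theorem inv_natCast_eq_prod_primeFactors {T : ℕ} (hT : T ≠ 0) (d : ℕ) :
    ((T : ℝ) ^ d)⁻¹ = ∏ p ∈ T.primeFactors, ((p : ℝ) ^ (T.factorization p * d))⁻¹ := by
  conv_lhs => rw [← Nat.prod_factorization_pow_eq_self hT]
  simp only [Finsupp.prod, Nat.support_factorization, Nat.cast_prod, Nat.cast_pow,
    ← Finset.prod_pow, ← Finset.prod_inv_distrib, pow_mul]

/-- At the primes dividing `T` the local bounds multiply to at least `T ^ (-d)`, at the others to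
at least `1 - ∑ b`. -/
theorem inv_pow_div_two_le_of_multiplicative {f : ℕ → ℝ} (hf₁ : f 1 = 1)
    (hf : ∀ a b : ℕ, a.Coprime b → f (a * b) = f a * f b) {T d : ℕ} (hT : T ≠ 0)
    (hbad : ∀ p k : ℕ, p.Prime → p ∣ T → ((p : ℝ) ^ (T.factorization p * d))⁻¹ ≤ f (p ^ k))
    {b : ℕ → ℝ} (hb : ∀ p, 0 ≤ b p)
    (hgood : ∀ p k : ℕ, p.Prime → ¬ p ∣ T → 0 < k → 1 - b p ≤ f (p ^ k))
    (hsum : ∀ S : Finset ℕ, (∀ p ∈ S, p.Prime ∧ ¬ p ∣ T) → ∑ p ∈ S, b p ≤ 1 / 2)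
    {Q : ℕ} (hQ : Q ≠ 0) : ((T : ℝ) ^ d)⁻¹ / 2 ≤ f Q := by
  rw [Nat.multiplicative_factorization f hf hf₁ hQ, Finsupp.prod, Nat.support_factorization,
    ← Finset.prod_filter_mul_prod_filter_not Q.primeFactors (· ∣ T), div_eq_mul_one_div]
  have hprime : ∀ {p}, p ∈ Q.primeFactors → p.Prime := Nat.prime_of_mem_primeFactors
  have hsub : Q.primeFactors.filter (· ∣ T) ⊆ T.primeFactors := fun p hp ↦
    Nat.mem_primeFactors.mpr
      ⟨hprime (Finset.mem_filter.mp hp).1, (Finset.mem_filter.mp hp).2, hT⟩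
  have hbadProd : ((T : ℝ) ^ d)⁻¹ ≤ ∏ p ∈ Q.primeFactors with p ∣ T, f (p ^ Q.factorization p) := by
    rw [inv_natCast_eq_prod_primeFactors hT]
    calc _ ≤ ∏ p ∈ Q.primeFactors with p ∣ T, ((p : ℝ) ^ (T.factorization p * d))⁻¹ := by
          rw [← Finset.prod_sdiff hsub]
          refine mul_le_of_le_one_left (by positivity)
            (Finset.prod_le_one (fun _ _ ↦ by positivity) fun p hp ↦ ?_)
          have hp : p.Prime := Nat.prime_of_mem_primeFactors (Finset.mem_sdiff.mp hp).1
          exact inv_le_one_of_one_le₀ (one_le_pow₀ (by exact_mod_cast hp.one_le))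
      _ ≤ _ := Finset.prod_le_prod (fun _ _ ↦ by positivity) fun p hp ↦
          hbad p _ (hprime (Finset.mem_filter.mp hp).1) (Finset.mem_filter.mp hp).2
  have hgoodPrime : ∀ p ∈ Q.primeFactors.filter (¬ · ∣ T), p.Prime ∧ ¬ p ∣ T := fun p hp ↦
    ⟨hprime (Finset.mem_filter.mp hp).1, (Finset.mem_filter.mp hp).2⟩
  have hb₁ : ∀ p ∈ Q.primeFactors.filter (¬ · ∣ T), b p ≤ 1 := fun p hp ↦ by
    linarith [hsum {p} (by simpa using hgoodPrime p hp), Finset.sum_singleton b p]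
  have hgoodProd : 1 / 2 ≤ ∏ p ∈ Q.primeFactors with ¬ p ∣ T, f (p ^ Q.factorization p) := by
    calc (1 / 2 : ℝ) ≤ 1 - ∑ p ∈ Q.primeFactors with ¬ p ∣ T, b p := by
          linarith [hsum _ hgoodPrime]
      _ ≤ ∏ p ∈ Q.primeFactors with ¬ p ∣ T, (1 - b p) :=
          one_sub_sum_le_prod_one_sub _ (fun p _ ↦ hb p) hb₁
      _ ≤ _ := Finset.prod_le_prod (fun p hp ↦ sub_nonneg.mpr (hb₁ p hp)) fun p hp ↦
          hgood p _ (hgoodPrime p hp).1 (hgoodPrime p hp).2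
            ((hgoodPrime p hp).1.factorization_pos_of_dvd hQ
              (Nat.dvd_of_mem_primeFactors (Finset.mem_filter.mp hp).1))
  exact mul_le_mul hbadProd hgoodProd (by norm_num) (le_trans (by positivity) hbadProd)

/-! ### Stepanov's method -/

section Stepanov

open scoped Polynomial

variable {K : Type*} [Field K]

/-- The operator `w ↦ f w' + n f' w`: the operator `w ↦ f w'` conjugated by multiplication by
`f ^ n`. -/
noncomputable def weightedDeriv (f : K[X]) (n : ℕ) : K[X] →ₗ[K] K[X] :=
  LinearMap.mulLeft K f ∘ₗ Polynomial.derivative +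
    n • LinearMap.mulLeft K (Polynomial.derivative f)

theorem weightedDeriv_apply (f : K[X]) (n : ℕ) (w : K[X]) : weightedDeriv f n w =
    f * Polynomial.derivative w + n * (Polynomial.derivative f * w) := by
  simp [weightedDeriv]

theorem weightedDeriv_zero_mul_pow_mul (f : K[X]) (n : ℕ) {g : K[X]}
    (hg : Polynomial.derivative g = 0) (w : K[X]) :
    weightedDeriv f 0 (g * (f ^ n * w)) = g * (f ^ n * weightedDeriv f n w) := by
  rcases n with _ | n
  · simp [weightedDeriv_apply, hg]
    ring
  · simp only [weightedDeriv_apply, Polynomial.derivative_mul, hg, Polynomial.derivative_pow_succ]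
    simp
    ring

theorem weightedDeriv_zero_pow_mul_pow_mul (f : K[X]) (n k : ℕ) {g : K[X]}
    (hg : Polynomial.derivative g = 0) (w : K[X]) :
    (weightedDeriv f 0 ^ k) (g * (f ^ n * w)) = g * (f ^ n * (weightedDeriv f n ^ k) w) := by
  induction k generalizing w with
  | zero => simp
  | succ k ih =>
    simp only [pow_succ, Module.End.mul_apply, weightedDeriv_zero_mul_pow_mul f n hg, ih]

theorem natDegree_weightedDeriv_pow_le (f : K[X]) (n k : ℕ) (w : K[X]) :
    ((weightedDeriv f n ^ k) w).natDegree ≤ w.natDegree + f.natDegree * k := by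
  induction k generalizing w with
  | zero => simp
  | succ k ih =>
    have hstep : (weightedDeriv f n w).natDegree ≤ w.natDegree + f.natDegree := by
      rw [weightedDeriv_apply, ← nsmul_eq_mul]
      have hf := Polynomial.natDegree_derivative_le f
      have hw := Polynomial.natDegree_derivative_le w
      refine (Polynomial.natDegree_add_le _ _).trans (max_le ?_ ?_)
      · exact Polynomial.natDegree_mul_le.trans (by omega)
      · refine (Polynomial.natDegree_smul_le _ _).trans (Polynomial.natDegree_mul_le.trans ?_)
        omega
    rw [pow_succ, Module.End.mul_apply, mul_add_one]
    exact (ih _).trans (by omega)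

theorem X_sub_C_pow_dvd_of_eval_weightedDeriv_eq_zero {f : K[X]} {s : K} (hs : f.eval s ≠ 0)
    {M : ℕ} (hM : ∀ k, 0 < k → k < M → (k : K) ≠ 0) {u : K[X]}
    (hu : ∀ k < M, ((weightedDeriv f 0 ^ k) u).eval s = 0) :
    (Polynomial.X - Polynomial.C s) ^ M ∣ u := by
  induction M generalizing u with
  | zero => simp
  | succ M ih =>
    replace ih : ∀ {u : K[X]}, (∀ k < M, ((weightedDeriv f 0 ^ k) u).eval s = 0) →
      (Polynomial.X - Polynomial.C s) ^ M ∣ u := ih fun k hk hkM ↦ hM k hk (Nat.lt_succ_of_lt hkM)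
    obtain ⟨w, rfl⟩ := ih fun k hk ↦ hu k (hk.trans M.lt_succ_self)
    refine pow_succ (Polynomial.X - Polynomial.C s) M ▸ mul_dvd_mul_left _ ?_
    rw [Polynomial.dvd_iff_isRoot]
    rcases M with _ | N
    · simpa using hu 0 one_pos
    have hθ : (Polynomial.X - Polynomial.C s) ^ (N + 1) ∣
        f * Polynomial.derivative ((Polynomial.X - Polynomial.C s) ^ (N + 1) * w) := by
      have hfw := weightedDeriv_apply f 0 ((Polynomial.X - Polynomial.C s) ^ (N + 1) * w)
      rw [Nat.cast_zero, zero_mul, add_zero] at hfw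
      rw [← hfw]
      refine ih fun k hk ↦ ?_
      rw [← Module.End.mul_apply, ← pow_succ]
      exact hu (k + 1) (Nat.succ_lt_succ hk)
    have hcop : IsCoprime ((Polynomial.X - Polynomial.C s) ^ (N + 1)) f :=
      .pow_left ((Polynomial.irreducible_X_sub_C s).coprime_iff_not_dvd.mpr
        (Polynomial.dvd_iff_isRoot.not.mpr hs))
    have hderiv := hcop.dvd_of_dvd_mul_left hθ
    rw [Polynomial.derivative_mul, dvd_add_left (dvd_mul_right _ _),
      Polynomial.derivative_X_sub_C_pow, Nat.add_sub_cancel, pow_succ, mul_right_comm,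
      mul_comm (_ * w), mul_dvd_mul_iff_left (pow_ne_zero _ (Polynomial.X_sub_C_ne_zero s)),
      Polynomial.dvd_iff_isRoot, Polynomial.IsRoot, Polynomial.eval_mul,
      Polynomial.eval_C] at hderiv
    exact (mul_eq_zero.mp hderiv).resolve_left (hM _ N.succ_pos (N + 1).lt_succ_self)

theorem exists_ne_zero_forall_eq_zero_of_natDegree_lt {V : Type*} [AddCommGroup V] [Module K V]
    [Module.Finite K V] {M N : ℕ} (T : Fin M → V →ₗ[K] K[X]) (hT : ∀ k v, (T k v).natDegree < N)
    (hMN : M * N < Module.finrank K V) : ∃ v ≠ 0, ∀ k, T k v = 0 := by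
  let coeffs : V →ₗ[K] Fin M × Fin N → K :=
    LinearMap.pi fun ki ↦ Polynomial.lcoeff K (ki.2 : ℕ) ∘ₗ T ki.1
  have hker : LinearMap.ker coeffs ≠ ⊥ := LinearMap.ker_ne_bot_of_finrank_lt (by simpa using hMN)
  obtain ⟨v, hv, hv0⟩ := Submodule.exists_mem_ne_zero_of_ne_bot hker
  refine ⟨v, hv0, fun k ↦ Polynomial.ext fun i ↦ ?_⟩
  rw [Polynomial.coeff_zero]
  rcases lt_or_ge i N with hi | hi
  · exact congrFun (LinearMap.mem_ker.mp hv) (k, ⟨i, hi⟩)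
  · exact Polynomial.coeff_eq_zero_of_natDegree_lt ((hT k v).trans_le hi)

variable {J : ℕ}

/-- The values at the points where `x ^ p = x` and `f ^ n = -1` of the `k`-th iterate of
`w ↦ f w'` on `∑ j, X ^ (p j) (P j + f ^ n Q j)`. -/
noncomputable def stepanovResidual (f : K[X]) (n k : ℕ) :
    (Fin J → K[X]) × (Fin J → K[X]) →ₗ[K] K[X] :=
  ∑ j : Fin J, LinearMap.mulLeft K (Polynomial.X ^ (j : ℕ)) ∘ₗ
    ((weightedDeriv f 0 ^ k) ∘ₗ LinearMap.proj j ∘ₗ LinearMap.fst K _ _ -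
      (weightedDeriv f n ^ k) ∘ₗ LinearMap.proj j ∘ₗ LinearMap.snd K _ _)

theorem stepanovResidual_apply (f : K[X]) (n k : ℕ) (P Q : Fin J → K[X]) :
    stepanovResidual f n k (P, Q) = ∑ j : Fin J, Polynomial.X ^ (j : ℕ) *
      ((weightedDeriv f 0 ^ k) (P j) - (weightedDeriv f n ^ k) (Q j)) := by
  simp [stepanovResidual, LinearMap.sum_apply]

theorem natDegree_stepanovResidual_lt {f : K[X]} (n k : ℕ) {P Q : Fin J → K[X]} {D : ℕ}
    (hP : ∀ j, (P j).natDegree < D) (hQ : ∀ j, (Q j).natDegree < D) (hD : 0 < D) :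
    (stepanovResidual f n k (P, Q)).natDegree < D + J + f.natDegree * k := by
  rw [stepanovResidual_apply, ← Nat.le_sub_one_iff_lt (by omega)]
  refine Polynomial.natDegree_sum_le_of_forall_le _ _ fun j _ ↦ ?_
  have hPj := natDegree_weightedDeriv_pow_le f 0 k (P j)
  have hQj := natDegree_weightedDeriv_pow_le f n k (Q j)
  have hsub := Polynomial.natDegree_sub_le_of_le hPj hQj
  refine (Polynomial.natDegree_mul_le_of_le (Polynomial.natDegree_X_pow_le _) hsub).trans ?_
  have := hP j
  have := hQ j
  omega

theorem exists_stepanovResidual_eq_zero (f : K[X]) (n : ℕ) {D M : ℕ}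
    (hDM : M * (D + J + f.natDegree * M) < 2 * J * D) :
    ∃ P Q : Fin J → K[X], (P, Q) ≠ 0 ∧ (∀ j, (P j).natDegree < D) ∧ (∀ j, (Q j).natDegree < D) ∧
      ∀ k < M, stepanovResidual f n k (P, Q) = 0 := by
  have hD : 0 < D := Nat.pos_of_mul_pos_left (Nat.zero_lt_of_lt hDM)
  let V := Polynomial.degreeLT K D
  have hdeg : ∀ v : V, (v : K[X]).natDegree < D := fun v ↦ by
    rcases eq_or_ne (v : K[X]) 0 with hv | hv
    · rwa [hv, Polynomial.natDegree_zero]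
    · exact (Polynomial.natDegree_lt_iff_degree_lt hv).mpr (Polynomial.mem_degreeLT.mp v.2)
  have : Module.Finite K V := .equiv (Polynomial.degreeLTEquiv K D).symm
  have hrank : Module.finrank K ((Fin J → V) × (Fin J → V)) = 2 * J * D := by
    rw [Module.finrank_prod, Module.finrank_pi_fintype, Finset.sum_const, Finset.card_univ,
      Fintype.card_fin, smul_eq_mul, (Polynomial.degreeLTEquiv K D).finrank_eq,
      Module.finrank_fin_fun, ← two_mul, mul_assoc]
  let incl := (V.subtype.compLeft (Fin J)).prodMap (V.subtype.compLeft (Fin J))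
  have hincl : Function.Injective incl :=
    Prod.map_injective.mpr ⟨V.injective_subtype.comp_left, V.injective_subtype.comp_left⟩
  obtain ⟨v, hv, hker⟩ := exists_ne_zero_forall_eq_zero_of_natDegree_lt
    (fun k : Fin M ↦ stepanovResidual f n k ∘ₗ incl) (N := D + J + f.natDegree * M)
    (fun k v ↦ (natDegree_stepanovResidual_lt n k (fun j ↦ hdeg (v.1 j)) (fun j ↦ hdeg (v.2 j))
      hD).trans_le (by gcongr; exact k.2.le)) (hrank ▸ hDM)
  exact ⟨(incl v).1, (incl v).2, fun h ↦ hv (hincl (h.trans (map_zero incl).symm)),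
    fun j ↦ hdeg (v.1 j), fun j ↦ hdeg (v.2 j), fun k hk ↦ hker ⟨k, hk⟩⟩

variable {p : ℕ} [Fact p.Prime]

/-- Stepanov's auxiliary polynomial `∑ j, X ^ (p j) (P j + f ^ (p / 2) Q j)`. -/
noncomputable def stepanovPoly (f : (ZMod p)[X]) (P Q : Fin J → (ZMod p)[X]) : (ZMod p)[X] :=
  ∑ j : Fin J, Polynomial.X ^ (p * (j : ℕ)) * (P j + f ^ (p / 2) * Q j)

theorem weightedDeriv_zero_pow_stepanovPoly (f : (ZMod p)[X]) (P Q : Fin J → (ZMod p)[X]) (k : ℕ) :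
    (weightedDeriv f 0 ^ k) (stepanovPoly f P Q) = stepanovPoly f
      (fun j ↦ (weightedDeriv f 0 ^ k) (P j)) fun j ↦ (weightedDeriv f (p / 2) ^ k) (Q j) := by
  rw [stepanovPoly, stepanovPoly, map_sum]
  refine Finset.sum_congr rfl fun j _ ↦ ?_
  have hX : Polynomial.derivative (Polynomial.X ^ (p * (j : ℕ)) : (ZMod p)[X]) = 0 := by
    simp [Polynomial.derivative_X_pow]
  have hP := weightedDeriv_zero_pow_mul_pow_mul f 0 k hX (P j)
  rw [pow_zero, one_mul, one_mul] at hP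
  rw [mul_add, map_add, hP, weightedDeriv_zero_pow_mul_pow_mul f _ k hX, mul_add]

theorem eval_stepanovPoly {f : (ZMod p)[X]} {s : ZMod p} (hs : f.eval s ^ (p / 2) = -1)
    (P Q : Fin J → (ZMod p)[X]) (k : ℕ) : ((weightedDeriv f 0 ^ k) (stepanovPoly f P Q)).eval s =
      (stepanovResidual f (p / 2) k (P, Q)).eval s := by
  rw [weightedDeriv_zero_pow_stepanovPoly, stepanovResidual_apply, stepanovPoly,
    Polynomial.eval_finsetSum, Polynomial.eval_finsetSum]
  simp [hs, pow_mul, ZMod.pow_card, sub_eq_add_neg]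

theorem natDegree_stepanovPoly_le (f : (ZMod p)[X]) {P Q : Fin J → (ZMod p)[X]} {D : ℕ}
    (hP : ∀ j, (P j).natDegree ≤ D) (hQ : ∀ j, (Q j).natDegree ≤ D) :
    (stepanovPoly f P Q).natDegree ≤ p * (J - 1) + (p / 2 * f.natDegree + D) := by
  refine Polynomial.natDegree_sum_le_of_forall_le _ _ fun j _ ↦ ?_
  refine Polynomial.natDegree_mul_le_of_le ((Polynomial.natDegree_X_pow_le _).trans ?_)
    (Polynomial.natDegree_add_le_of_degree_le ((hP j).trans (Nat.le_add_left _ _))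
      (Polynomial.natDegree_mul_le_of_le Polynomial.natDegree_pow_le (hQ j)))
  gcongr
  exact Nat.le_sub_one_of_lt j.2

theorem X_pow_dvd_pow_sub_C (f : (ZMod p)[X]) :
    Polynomial.X ^ p ∣ f ^ p - Polynomial.C (f.coeff 0) := by
  have h : Polynomial.X ∣ f - Polynomial.C (f.coeff 0) := by
    rw [Polynomial.X_dvd_iff]
    simp
  rw [← ZMod.expand_card f]
  simpa only [map_sub, Polynomial.expand_X, Polynomial.expand_C] using
    map_dvd (Polynomial.expand (ZMod p) p) h

theorem eq_zero_of_add_pow_half_mul_add_X_pow_mul_eq_zero (hp2 : p ≠ 2) {f : (ZMod p)[X]}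
    (h0 : f.coeff 0 ≠ 0) (hns : ¬ ∃ (c : ZMod p) (g : (ZMod p)[X]), f = Polynomial.C c * g ^ 2)
    {P Q W : (ZMod p)[X]} (hP : 2 * P.natDegree + f.natDegree < p) (hQ : 2 * Q.natDegree < p)
    (h : P + f ^ (p / 2) * Q + Polynomial.X ^ p * W = 0) : P = 0 ∧ Q = 0 := by
  have hf : f * (f ^ (p / 2)) ^ 2 = f ^ p := by
    rw [← pow_mul, ← pow_succ', mul_comm,
      Nat.two_mul_div_two_add_one_of_odd ((Fact.out : p.Prime).odd_of_ne_two hp2)]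
  have hdvd : Polynomial.X ^ p ∣ f * P ^ 2 - Polynomial.C (f.coeff 0) * Q ^ 2 := by
    refine (dvd_iff_dvd_of_dvd_sub ?_).mpr ((X_pow_dvd_pow_sub_C f).mul_right (Q ^ 2))
    exact ⟨f * (W * (f ^ (p / 2) * Q - P)), by
      linear_combination f * (P - f ^ (p / 2) * Q) * h + Q ^ 2 * hf⟩
  have hdeg : (f * P ^ 2 - Polynomial.C (f.coeff 0) * Q ^ 2).natDegree < p := by
    refine (Polynomial.natDegree_sub_le_of_le (Polynomial.natDegree_mul_le_of_le le_rfl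
      Polynomial.natDegree_pow_le) ((Polynomial.natDegree_C_mul_le _ _).trans
      Polynomial.natDegree_pow_le)).trans_lt (max_lt (by omega) hQ)
  have heq : f * P ^ 2 - Polynomial.C (f.coeff 0) * Q ^ 2 = 0 :=
    Polynomial.eq_zero_of_dvd_of_natDegree_lt hdvd (by rwa [Polynomial.natDegree_X_pow])
  rcases eq_or_ne P 0 with rfl | hP0
  · simpa [h0] using heq
  · have hPQ : P ^ 2 ∣ Q ^ 2 :=
      (IsUnit.dvd_mul_left (Polynomial.isUnit_C.mpr (IsUnit.mk0 _ h0))).mp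
        ⟨f, by linear_combination -heq⟩
    obtain ⟨g, rfl⟩ := (UniqueFactorizationMonoid.pow_dvd_pow_iff_dvd two_ne_zero).mp hPQ
    refine absurd ⟨f.coeff 0, g, mul_right_cancel₀ (pow_ne_zero 2 hP0) ?_⟩ hns
    linear_combination heq

theorem eq_zero_of_stepanovPoly_eq_zero (hp2 : p ≠ 2) {f : (ZMod p)[X]}
    (h0 : f.coeff 0 ≠ 0) (hns : ¬ ∃ (c : ZMod p) (g : (ZMod p)[X]), f = Polynomial.C c * g ^ 2)
    {P Q : Fin J → (ZMod p)[X]} (hP : ∀ j, 2 * (P j).natDegree + f.natDegree < p)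
    (hQ : ∀ j, 2 * (Q j).natDegree < p) (h : stepanovPoly f P Q = 0) : P = 0 ∧ Q = 0 := by
  induction J with
  | zero => exact ⟨Subsingleton.elim _ _, Subsingleton.elim _ _⟩
  | succ J ih =>
    have hsucc : stepanovPoly f P Q = P 0 + f ^ (p / 2) * Q 0 +
        Polynomial.X ^ p * stepanovPoly f (Fin.tail P) (Fin.tail Q) := by
      simp only [stepanovPoly, Fin.sum_univ_succ, Fin.val_zero, Fin.val_succ, mul_zero, pow_zero,
        one_mul, Finset.mul_sum, mul_add_one, pow_add, Fin.tail]
      exact congrArg _ (Finset.sum_congr rfl fun j _ ↦ by ring)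
    rw [hsucc] at h
    obtain ⟨hP0, hQ0⟩ :=
      eq_zero_of_add_pow_half_mul_add_X_pow_mul_eq_zero hp2 h0 hns (hP 0) (hQ 0) h
    have htail : stepanovPoly f (Fin.tail P) (Fin.tail Q) = 0 := by
      simpa [hP0, hQ0] using h
    obtain ⟨hPt, hQt⟩ := ih (P := Fin.tail P) (fun j ↦ hP j.succ) (fun j ↦ hQ j.succ) htail
    exact ⟨funext (Fin.cases hP0 (congrFun hPt)), funext (Fin.cases hQ0 (congrFun hQt))⟩

theorem card_mul_le_natDegree_of_pow_dvd {g : K[X]} (hg : g ≠ 0) {S : Finset K} {M : ℕ}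
    (hS : ∀ s ∈ S, (Polynomial.X - Polynomial.C s) ^ M ∣ g) : S.card * M ≤ g.natDegree := by
  have hprod : ∏ s ∈ S, (Polynomial.X - Polynomial.C s) ^ M ∣ g :=
    Finset.prod_dvd_of_coprime (fun a _ b _ hab ↦
      (Polynomial.isCoprime_X_sub_C_of_isUnit_sub (sub_ne_zero.mpr hab).isUnit).pow) hS
  have hle := Polynomial.natDegree_le_of_dvd hprod hg
  rwa [Polynomial.natDegree_prod _ _ fun s _ ↦ pow_ne_zero _ (Polynomial.X_sub_C_ne_zero s),
    Finset.sum_congr rfl fun s _ ↦ by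
      rw [Polynomial.natDegree_pow, Polynomial.natDegree_X_sub_C, mul_one],
    Finset.sum_const, smul_eq_mul] at hle

theorem pow_half_eq_neg_one_of_not_isSquare {a : ZMod p} (ha : ¬ IsSquare a) :
    a ^ (p / 2) = -1 := by
  have ha0 : a ≠ 0 := fun h ↦ ha (h ▸ IsSquare.zero)
  exact (ZMod.pow_div_two_eq_neg_one_or_one p ha0).resolve_left
    ((ZMod.euler_criterion p ha0).not.mp ha)

theorem ten_mul_card_le_of_not_isSquare_eval (hp : 300 ≤ p) {f : (ZMod p)[X]}
    (hd : f.natDegree ≤ 4) (h0 : f.coeff 0 ≠ 0)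
    (hns : ¬ ∃ (c : ZMod p) (g : (ZMod p)[X]), f = Polynomial.C c * g ^ 2)
    {S : Finset (ZMod p)} (hS : ∀ s ∈ S, ¬ IsSquare (f.eval s)) : 10 * S.card ≤ 9 * p := by
  let D := (p - 3) / 2
  obtain ⟨P, Q, hPQ, hP, hQ, hres⟩ :=
    exists_stepanovResidual_eq_zero (J := 3) (D := D) (M := 5) f (p / 2) (by omega)
  have hne : stepanovPoly f P Q ≠ 0 := fun h ↦ hPQ <| by
    obtain ⟨rfl, rfl⟩ := eq_zero_of_stepanovPoly_eq_zero (by omega) h0 hns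
      (fun j ↦ by have := hP j; omega) (fun j ↦ by have := hQ j; omega) h
    rfl
  have hdvd : ∀ s ∈ S, (Polynomial.X - Polynomial.C s) ^ 5 ∣ stepanovPoly f P Q := fun s hs ↦ by
    refine X_sub_C_pow_dvd_of_eval_weightedDeriv_eq_zero (fun h ↦ hS s hs (h ▸ IsSquare.zero))
      (fun k hk hk5 ↦ ?_) fun k hk ↦ ?_
    · rw [Ne, ZMod.natCast_eq_zero_iff]
      exact Nat.not_dvd_of_pos_of_lt hk (by omega)
    · rw [eval_stepanovPoly (pow_half_eq_neg_one_of_not_isSquare (hS s hs)), hres k hk,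
        Polynomial.eval_zero]
  have hcard := card_mul_le_natDegree_of_pow_dvd hne hdvd
  have hdeg := natDegree_stepanovPoly_le f (fun j ↦ (hP j).le) fun j ↦ (hQ j).le
  have : p / 2 * f.natDegree ≤ p / 2 * 4 := by gcongr
  omega

end Stepanov

/-! ### Cubic forms and the `h`-invariant -/

section Homogeneous

variable {σ R : Type*} [CommSemiring R] {A B : MvPolynomial σ R} {m n : ℕ}

theorem homogeneousComponent_add_mul (hA : A.IsHomogeneous m) (B : MvPolynomial σ R) (n : ℕ) :
    homogeneousComponent (m + n) (A * B) = A * homogeneousComponent n B := by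
  have hterm (i : ℕ) : homogeneousComponent (m + n) (A * homogeneousComponent i B) =
      if n = i then A * homogeneousComponent i B else 0 := by
    rw [homogeneousComponent_of_mem
      ((mem_homogeneousSubmodule _ _).2 (hA.mul (homogeneousComponent_isHomogeneous i B)))]
    simp only [Nat.add_left_cancel_iff]
  conv_lhs => rw [← sum_homogeneousComponent B, Finset.mul_sum, map_sum]
  rw [Finset.sum_congr rfl fun i _ ↦ hterm i, Finset.sum_ite_eq]
  split_ifs with h
  · rfl
  · rw [homogeneousComponent_eq_zero n B (by simpa using h), mul_zero]

theorem homogeneousComponent_add_mul_of_totalDegree_le (hA : A.totalDegree ≤ m)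
    (hB : B.totalDegree ≤ n) :
    homogeneousComponent (m + n) (A * B) =
      homogeneousComponent m A * homogeneousComponent n B := by
  classical
  have hprod :=
    (homogeneousComponent_isHomogeneous m A).mul (homogeneousComponent_isHomogeneous n B)
  ext d
  rw [coeff_homogeneousComponent]
  split_ifs with hd
  · rw [coeff_mul, coeff_mul]
    refine Finset.sum_congr rfl fun x hx ↦ ?_
    have hdeg : x.1.degree + x.2.degree = m + n := by
      rw [← hd, ← Finset.HasAntidiagonal.mem_antidiagonal.1 hx, map_add]
    have hzero {P : MvPolynomial σ R} {e : σ →₀ ℕ} (h : P.totalDegree < e.degree) :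
        coeff e P = 0 := coeff_eq_zero_of_totalDegree_lt (by rwa [Finsupp.degree_apply] at h)
    rw [coeff_homogeneousComponent, coeff_homogeneousComponent]
    rcases lt_trichotomy x.1.degree m with h | h | h
    · rw [hzero (hB.trans_lt (show n < x.2.degree by lia))]
      simp
    · rw [if_pos h, if_pos (by lia)]
    · rw [hzero (hA.trans_lt h)]
      simp
  · rw [hprod.coeff_eq_zero hd]

end Homogeneous

section HInvariant

variable {σ K : Type*} [CommSemiring K] {P : MvPolynomial σ K} {k l : ℕ}

/-- The `h`-invariant of the cubic form `P` is at most `k`. -/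
def HInvariantLE (k : ℕ) (P : MvPolynomial σ K) : Prop :=
  ∃ L Q : Fin k → MvPolynomial σ K,
    (∀ i, (L i).IsHomogeneous 1) ∧ (∀ i, (Q i).IsHomogeneous 2) ∧ P = ∑ i, L i * Q i

theorem HInvariantLE.mono (h : HInvariantLE k P) (hkl : k ≤ l) : HInvariantLE l P := by
  induction l, hkl using Nat.le_induction with
  | base => exact h
  | succ l _ ih =>
    obtain ⟨L, Q, hL, hQ, rfl⟩ := ih
    refine ⟨Fin.snoc L 0, Fin.snoc Q 0, ?_, ?_, by simp [Fin.sum_univ_castSucc]⟩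
    · exact Fin.lastCases (by simpa using isHomogeneous_zero _ _ _) (by simpa using hL)
    · exact Fin.lastCases (by simpa using isHomogeneous_zero _ _ _) (by simpa using hQ)

theorem hInvariantLE_of_eq_sum (hP : P.IsHomogeneous 3) {L B : Fin k → MvPolynomial σ K}
    (hL : ∀ i, (L i).IsHomogeneous 1) (h : P = ∑ i, L i * B i) : HInvariantLE k P := by
  refine ⟨L, fun i ↦ homogeneousComponent 2 (B i), hL,
    fun i ↦ homogeneousComponent_isHomogeneous 2 (B i), ?_⟩
  rw [← homogeneousComponent_eq_self ((mem_homogeneousSubmodule _ _).2 hP), h, map_sum]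
  exact Finset.sum_congr rfl fun i _ ↦ homogeneousComponent_add_mul (hL i) (B i) 2

theorem hInvariantLE_two_of_eq_add (hP : P.IsHomogeneous 3) {L U A B : MvPolynomial σ K}
    (hL : L.IsHomogeneous 1) (hA : A.totalDegree ≤ 1) (hB : B.totalDegree ≤ 2)
    (h : P = L * U + A * B) : HInvariantLE 2 P := by
  have hcomp : P = L * homogeneousComponent 2 U +
      homogeneousComponent 1 A * homogeneousComponent 2 B := by
    rw [← homogeneousComponent_add_mul hL U 2,
      ← homogeneousComponent_add_mul_of_totalDegree_le hA hB, ← map_add, ← h]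
    exact (homogeneousComponent_eq_self ((mem_homogeneousSubmodule _ _).2 hP)).symm
  refine hInvariantLE_of_eq_sum hP (L := ![L, homogeneousComponent 1 A])
    (B := ![homogeneousComponent 2 U, homogeneousComponent 2 B]) ?_ (by simpa using hcomp)
  simpa [Fin.forall_fin_two] using ⟨hL, homogeneousComponent_isHomogeneous 1 A⟩

end HInvariant

section RestrictZero

variable {R : Type*} [CommRing R] {k : ℕ}

/-- The restriction of a polynomial to the hyperplane where its first variable vanishes. -/
noncomputable def restrictZero :
    MvPolynomial (Fin (k + 1)) R →ₐ[R] MvPolynomial (Fin k) R :=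
  aeval (Fin.cons 0 X)

theorem aeval_restrictZero {A : Type*} [CommRing A] [Algebra R A] (y : Fin k → A)
    (P : MvPolynomial (Fin (k + 1)) R) :
    aeval y (restrictZero P) = aeval (Fin.cons 0 y : Fin (k + 1) → A) P := by
  rw [restrictZero, comp_aeval_apply]
  congr! 1
  ext i
  cases i using Fin.cases <;> simp

theorem isHomogeneous_restrictZero {P : MvPolynomial (Fin (k + 1)) R} {n : ℕ}
    (hP : P.IsHomogeneous n) : (restrictZero P).IsHomogeneous n := by
  rw [← one_mul n]
  refine hP.aeval _ (Fin.cases ?_ fun j ↦ ?_)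
  · simpa using isHomogeneous_zero _ _ _
  · simpa using isHomogeneous_X _ _

theorem X_zero_dvd_sub_rename_restrictZero (P : MvPolynomial (Fin (k + 1)) R) :
    X 0 ∣ P - rename Fin.succ (restrictZero P) := by
  induction P using MvPolynomial.induction_on with
  | C r => simp [restrictZero, algebraMap_eq]
  | add P Q hP hQ =>
    rw [map_add, map_add, add_sub_add_comm]
    exact dvd_add hP hQ
  | mul_X P i hP =>
    rw [map_mul, map_mul]
    refine dvd_mul_sub_mul hP ?_
    cases i using Fin.cases <;> simp [restrictZero]

theorem X_zero_dvd_of_eval_eq_zero [IsDomain R] [Infinite R] {P : MvPolynomial (Fin (k + 1)) R}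
    (h : ∀ a : Fin (k + 1) → R, a 0 = 0 → eval a P = 0) : X 0 ∣ P := by
  have hP : restrictZero P = 0 := by
    refine MvPolynomial.funext fun a ↦ ?_
    rw [← aeval_eq_eval, aeval_restrictZero, aeval_eq_eval, h _ (Fin.cons_zero _ _), map_zero]
  simpa [hP] using X_zero_dvd_sub_rename_restrictZero P

end RestrictZero

section Discriminant

variable {K : Type*} [Field K] [CharZero K]

theorem X_zero_dvd_of_dvd_sq_sub {k : ℕ} {κ : K} {q S : MvPolynomial (Fin (k + 1)) K}
    (hκ : ¬ IsSquare κ) (h : X 0 ∣ q ^ 2 - C κ * S ^ 2) : X 0 ∣ q ∧ X 0 ∣ S := by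
  obtain ⟨T, hT⟩ := h
  have hvanish (a : Fin (k + 1) → K) (ha : a 0 = 0) : eval a q = 0 ∧ eval a S = 0 := by
    have hsq : eval a q ^ 2 = κ * eval a S ^ 2 := by
      have := congrArg (eval a) hT
      simp only [map_sub, map_mul, map_pow, eval_C, eval_X, ha, zero_mul] at this
      exact sub_eq_zero.1 this
    have hS : eval a S = 0 := by
      by_contra hS
      exact hκ ⟨eval a q / eval a S, by field_simp; exact hsq.symm⟩
    exact ⟨by simpa [hS] using hsq, hS⟩
  exact ⟨X_zero_dvd_of_eval_eq_zero fun a ha ↦ (hvanish a ha).1,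
    X_zero_dvd_of_eval_eq_zero fun a ha ↦ (hvanish a ha).2⟩

theorem exists_eq_mul_of_discrim_eq_sq {σ : Type*} {i : σ} {α : K} (hα : α ≠ 0)
    {q R S : MvPolynomial σ K}
    (h : q ^ 2 - C (4 * α) * X i * R = S ^ 2) :
    ∃ l, R = l * (q - C α * X i * l) := by
  have hfac : C (4 * α) * X i * R = (q - S) * (q + S) := by linear_combination -h
  obtain ⟨S', hdvd, hfac⟩ : ∃ S', X i ∣ q - S' ∧
      C (4 * α) * X i * R = (q - S') * (q + S') := by
    rcases (X_prime (R := K) (i := i)).dvd_or_dvd (hfac ▸ (dvd_mul_left _ _).mul_right R)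
      with h' | h'
    · exact ⟨S, h', hfac⟩
    · exact ⟨-S, by simpa using h', by rw [hfac]; ring⟩
  obtain ⟨l, hl⟩ := hdvd
  have hl' : q - S' = C (2 * α) * X i * (C (2 * α)⁻¹ * l) := by
    rw [hl, mul_mul_mul_comm, ← C_mul, mul_inv_cancel₀ (by simpa using hα), C_1, one_mul]
  refine ⟨C (2 * α)⁻¹ * l, mul_left_cancel₀ (?_ : C (4 * α) * X i ≠ 0) ?_⟩
  · exact mul_ne_zero (by simpa using hα) (X_ne_zero i)
  · have h2 : (C (2 * α) : MvPolynomial σ K) = 2 * C α := by rw [C_mul, map_ofNat]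
    have h4 : (C (4 * α) : MvPolynomial σ K) = 4 * C α := by rw [C_mul, map_ofNat]
    generalize C (2 * α)⁻¹ * l = l' at hl' ⊢
    rw [h2] at hl'
    rw [h4] at hfac ⊢
    linear_combination hfac + (q + S') * hl' - 2 * C α * X i * l' * hl'

end Discriminant

/-! ### Nonsingular zeros of the fibers over a hyperplane -/

section LineRestrict

open scoped Polynomial

variable {σ R A B : Type*} [CommRing R] [CommRing A] [CommRing B] [Algebra R A] [Algebra R B]

/-- The restriction of `P` to the parametrized line `t ↦ a + t b`, as a polynomial in `t`. -/
noncomputable def lineRestrict (P : MvPolynomial σ R) (a b : σ → A) : A[X] :=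
  aeval (fun i ↦ Polynomial.C (a i) + Polynomial.C (b i) * Polynomial.X) P

variable (P : MvPolynomial σ R) (a b : σ → A)

theorem map_lineRestrict (f : A →ₐ[R] B) :
    (lineRestrict P a b).map (f : A →+* B) = lineRestrict P (f ∘ a) (f ∘ b) := by
  have := comp_aeval_apply (fun i ↦ Polynomial.C (a i) + Polynomial.C (b i) * Polynomial.X)
    (Polynomial.mapAlgHom f) P
  simpa [lineRestrict] using this

theorem eval_lineRestrict (t : A) :
    (lineRestrict P a b).eval t = aeval (a + t • b) P := by
  have := comp_aeval_apply (fun i ↦ Polynomial.C (a i) + Polynomial.C (b i) * Polynomial.X)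
    ((Polynomial.aeval t).restrictScalars R) P
  rw [AlgHom.restrictScalars_apply, Polynomial.coe_aeval_eq_eval] at this
  rw [lineRestrict, this]
  congr! 2
  ext i
  rw [AlgHom.restrictScalars_apply, Polynomial.coe_aeval_eq_eval, Polynomial.eval_add,
    Polynomial.eval_C_mul, Polynomial.eval_C, Polynomial.eval_X, mul_comm]
  rfl

variable {P} {n : ℕ}

theorem natDegree_lineRestrict_le (hP : P.totalDegree ≤ n) :
    (lineRestrict P a b).natDegree ≤ n := by
  rw [lineRestrict, ← aeval_map_algebraMap A, ← mul_one n]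
  exact aeval_natDegree_le _ ((Finset.sup_mono (support_map_subset _ _)).trans hP) _
    fun i ↦ by compute_degree

theorem coeff_lineRestrict (hP : P.IsHomogeneous n) :
    (lineRestrict P a b).coeff n = aeval b P := by
  have hle (i : σ) : (Polynomial.C (a i) + Polynomial.C (b i) * Polynomial.X).natDegree ≤ 1 := by
    compute_degree
  have hpow (i : σ) (k : ℕ) :
      ((Polynomial.C (a i) + Polynomial.C (b i) * Polynomial.X) ^ k).natDegree ≤ k := by
    simpa using Polynomial.natDegree_pow_le_of_le k (hle i)
  have hprod (d : σ →₀ ℕ) (s : Finset σ) :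
      (∏ i ∈ s, (Polynomial.C (a i) + Polynomial.C (b i) * Polynomial.X) ^ d i).coeff
        (∑ i ∈ s, d i) = ∏ i ∈ s, b i ^ d i := by
    classical
    induction s using Finset.induction_on with
    | empty => simp
    | insert i s hi ih =>
      rw [Finset.prod_insert hi, Finset.sum_insert hi, Finset.prod_insert hi,
        Polynomial.coeff_mul_add_eq_of_natDegree_le (hpow i _)
          ((Polynomial.natDegree_prod_le _ _).trans (Finset.sum_le_sum fun i _ ↦ hpow i _)), ih]
      congr 1
      simpa using Polynomial.coeff_pow_of_natDegree_le (m := d i) (hle i)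
  rw [lineRestrict, aeval_def, aeval_def, eval₂_eq, eval₂_eq, Polynomial.finsetSum_coeff]
  refine Finset.sum_congr rfl fun d hd ↦ ?_
  have hdn : ∑ i ∈ d.support, d i = n := (hP.degree_eq_sum_deg_support hd).symm
  rw [Polynomial.algebraMap_apply, Polynomial.coeff_C_mul, ← hdn, hprod]

end LineRestrict

theorem card_sub_one_mul_card_le_sum_card_line {K V : Type*} [Field K] [Fintype K]
    [AddCommGroup V] [Module K V] [Fintype V] (v : V) (S : Set V) :
    (Fintype.card K - 1) * S.ncard ≤ ∑ u, {s : K | v + s • u ∈ S}.ncard := by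
  classical
  have hline (s : K) (hs : s ≠ 0) : {u | v + s • u ∈ S}.ncard = S.ncard :=
    Set.ncard_congr (fun u _ ↦ v + s • u) (by simp) (by simp [hs])
      fun y hy ↦ ⟨s⁻¹ • (y - v), by simpa [hs] using hy⟩
  calc (Fintype.card K - 1) * S.ncard
      = ∑ s ∈ Finset.univ.erase (0 : K), {u | v + s • u ∈ S}.ncard := by
        rw [Finset.sum_congr rfl fun s hs ↦ hline s (Finset.ne_of_mem_erase hs)]
        simp [Finset.card_erase_of_mem]
    _ ≤ ∑ s, {u | v + s • u ∈ S}.ncard := Finset.sum_le_sum_of_subset (Finset.subset_univ _)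
    _ = ∑ u, {s : K | v + s • u ∈ S}.ncard := by
        simp only [Set.ncard_eq_toFinset_card', Set.toFinset_ofPred, Finset.card_filter]
        exact Finset.sum_comm

theorem eq_of_eq_C_mul_sq {K : Type*} [Field K] {f : Polynomial K} (hd : f.natDegree ≤ 4)
    (h0 : f.coeff 0 ≠ 0) (hf : ∃ (c : K) (g : Polynomial K), f = Polynomial.C c * g ^ 2) :
    64 * f.coeff 0 ^ 3 * f.coeff 4 = (4 * f.coeff 0 * f.coeff 2 - f.coeff 1 ^ 2) ^ 2 := by
  obtain ⟨c, g, rfl⟩ := hf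
  have hc : c ≠ 0 := by
    rintro rfl
    simp at h0
  have hg : g.natDegree ≤ 2 := by
    rw [Polynomial.natDegree_C_mul hc, Polynomial.natDegree_pow] at hd
    omega
  have hexpand : Polynomial.C c * g ^ 2 =
      Polynomial.C (c * g.coeff 2 ^ 2) * Polynomial.X ^ 4 +
      Polynomial.C (2 * c * g.coeff 2 * g.coeff 1) * Polynomial.X ^ 3 +
      Polynomial.C (c * (g.coeff 1 ^ 2 + 2 * g.coeff 2 * g.coeff 0)) * Polynomial.X ^ 2 +
      Polynomial.C (2 * c * g.coeff 1 * g.coeff 0) * Polynomial.X ^ 1 +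
      Polynomial.C (c * g.coeff 0 ^ 2) * Polynomial.X ^ 0 := by
    conv_lhs => rw [Polynomial.eq_quadratic_of_degree_le_two
      (Polynomial.natDegree_le_iff_degree_le.1 hg)]
    simp only [map_mul, map_pow, map_add, map_ofNat]
    ring
  rw [hexpand]
  simp only [Polynomial.coeff_add, Polynomial.coeff_C_mul, Polynomial.coeff_X_pow]
  norm_num
  ring

theorem coeff_zero_lineRestrict_intCast {σ A : Type*} [CommRing A] (P : MvPolynomial σ ℤ)
    (v : σ → ℤ) (u : σ → A) :
    (lineRestrict P (fun i ↦ (v i : A)) u).coeff 0 = ((aeval v P : ℤ) : A) := by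
  rw [Polynomial.coeff_zero_eq_eval_zero, eval_lineRestrict, zero_smul, add_zero,
    ← eq_intCast (algebraMap ℤ A), ← aeval_algebraMap_apply]
  rfl

/-- If the restriction to the line through `v` in the generic direction were a constant times a
square, then `eq_of_eq_C_mul_sq` would exhibit `P` itself as a constant times a square. -/
theorem exists_forall_lineRestrict_ne_C_mul_sq {σ : Type*} {P : MvPolynomial σ ℤ}
    (hP : P.IsHomogeneous 4)
    (hns : ¬ ∃ (κ : ℚ) (S : MvPolynomial σ ℚ), map (Int.castRingHom ℚ) P = C κ * S ^ 2) :
    ∃ (v : σ → ℤ) (E : MvPolynomial σ ℤ), E ≠ 0 ∧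
      ∀ (K : Type) [Field K] (u : σ → K), aeval u E ≠ 0 →
        (lineRestrict P (fun i ↦ (v i : K)) u).coeff 0 ≠ 0 ∧
        ¬ ∃ (c : K) (g : Polynomial K),
          lineRestrict P (fun i ↦ (v i : K)) u = Polynomial.C c * g ^ 2 := by
  obtain ⟨v, hv⟩ : ∃ v : σ → ℤ, aeval v P ≠ 0 := by
    by_contra! h
    have hP0 : P = 0 := MvPolynomial.funext fun v ↦ by simpa [aeval_eq_eval] using h v
    exact hns ⟨0, 0, by simp [hP0]⟩
  set δ : ℤ := aeval v P
  let D : Polynomial (MvPolynomial σ ℤ) := lineRestrict P (fun i ↦ (v i : MvPolynomial σ ℤ)) X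
  let G : MvPolynomial σ ℤ := 4 * C δ * D.coeff 2 - D.coeff 1 ^ 2
  have hE : 64 * C δ ^ 3 * P - G ^ 2 ≠ 0 := by
    intro h
    have hδ' : (δ : ℚ) ≠ 0 := by exact_mod_cast hv
    refine hns ⟨(64 * (δ : ℚ) ^ 3)⁻¹, map (Int.castRingHom ℚ) G, ?_⟩
    rw [← map_pow, ← sub_eq_zero.1 h, map_mul, ← mul_assoc]
    have hmap : map (Int.castRingHom ℚ) (64 * C δ ^ 3 : MvPolynomial σ ℤ) =
        C (64 * (δ : ℚ) ^ 3) := by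
      rw [map_mul, map_pow, map_C, C_mul, C_pow]
      simp [map_ofNat]
    rw [hmap, ← C_mul, inv_mul_cancel₀ (mul_ne_zero (by norm_num) (pow_ne_zero 3 hδ')), C_1,
      one_mul]
  refine ⟨v, C δ * (64 * C δ ^ 3 * P - G ^ 2), mul_ne_zero (by simpa using hv) hE,
    fun K _ u hu ↦ ?_⟩
  have hcoeff (j : ℕ) :
      (lineRestrict P (fun i ↦ (v i : K)) u).coeff j = aeval u (D.coeff j) := by
    have := map_lineRestrict P (fun i ↦ (v i : MvPolynomial σ ℤ)) X (aeval u)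
    have hcomp : (aeval u : MvPolynomial σ ℤ →ₐ[ℤ] K) ∘ (fun i ↦ (v i : MvPolynomial σ ℤ)) =
      fun i ↦ (v i : K) := by ext; simp
    have hcompX : (aeval u : MvPolynomial σ ℤ →ₐ[ℤ] K) ∘ X = u := by ext; simp
    rw [hcomp, hcompX] at this
    rw [← this, Polynomial.coeff_map]
    rfl
  have h0 : (lineRestrict P (fun i ↦ (v i : K)) u).coeff 0 = (δ : K) :=
    coeff_zero_lineRestrict_intCast P v u
  rw [map_mul, mul_ne_zero_iff, aeval_C, eq_intCast] at hu
  refine ⟨h0 ▸ hu.1, fun hsq ↦ hu.2 ?_⟩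
  have hkey := eq_of_eq_C_mul_sq (natDegree_lineRestrict_le _ _ hP.totalDegree_le)
    (h0 ▸ hu.1) hsq
  rw [h0, coeff_lineRestrict _ _ hP, hcoeff 1, hcoeff 2] at hkey
  simp [G, hkey]

section Eventually

open Filter

theorem eventually_intCast_ne_zero {n : ℤ} (hn : n ≠ 0) :
    ∀ᶠ p : ℕ in atTop, (n : ZMod p) ≠ 0 := by
  filter_upwards [eventually_gt_atTop n.natAbs] with p hp h
  exact hp.not_ge (Nat.le_of_dvd (Int.natAbs_pos.2 hn)
    (Int.natCast_dvd.1 ((ZMod.intCast_zmod_eq_zero_iff_dvd n p).1 h)))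

theorem eventually_mul_ncard_aeval_eq_zero_le {N : ℕ} {P : MvPolynomial (Fin N) ℤ} (hP : P ≠ 0)
    (c : ℕ) : ∀ᶠ p : ℕ in atTop, ∀ [Fact p.Prime],
      c * {y : Fin N → ZMod p | aeval y P = 0}.ncard ≤ p ^ N := by
  classical
  obtain ⟨s, hs⟩ := ne_zero_iff.1 hP
  filter_upwards [eventually_intCast_ne_zero hs, eventually_ge_atTop (c * P.totalDegree)]
    with p hp hpc _
  let P' := MvPolynomial.map (Int.castRingHom (ZMod p)) P
  have hne : P' ≠ 0 := ne_zero_iff.2 ⟨s, by simpa [P', coeff_map] using hp⟩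
  have hdeg : P'.totalDegree ≤ P.totalDegree := Finset.sup_mono (support_map_subset _ _)
  have hcard : {y : Fin N → ZMod p | aeval y P = 0}.ncard =
      {y ∈ Fintype.piFinset fun _ : Fin N ↦ (Finset.univ : Finset (ZMod p)) |
        MvPolynomial.eval y P' = 0}.card := by
    rw [Set.ncard_eq_toFinset_card', Set.toFinset_ofPred]
    simp only [P', eval_map, aeval_def, Fintype.piFinset_univ]
    congr!
  have hp0 : 0 < p := (Fact.out : p.Prime).pos
  have hsz := schwartz_zippel_totalDegree hne (Finset.univ : Finset (ZMod p))
  rw [← hcard, Finset.card_univ, ZMod.card, div_le_div_iff₀ (by positivity) (by positivity)] at hsz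
  refine Nat.le_of_mul_le_mul_right ?_ hp0
  calc c * {y : Fin N → ZMod p | aeval y P = 0}.ncard * p
      ≤ c * (P'.totalDegree * p ^ N) := by
        rw [mul_assoc]
        exact Nat.mul_le_mul_left c (mod_cast hsz)
    _ ≤ p * p ^ N := by
        rw [← mul_assoc]
        exact Nat.mul_le_mul_right _ ((Nat.mul_le_mul_left c hdeg).trans hpc)
    _ = p ^ N * p := mul_comm _ _

open Classical in
theorem ten_mul_ncard_not_isSquare_line_le {p : ℕ} [Fact p.Prime] (hp : 300 ≤ p) {σ : Type*}
    {P E : MvPolynomial σ ℤ} (hP : P.totalDegree ≤ 4) {v : σ → ℤ}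
    (hE : ∀ (K : Type) [Field K] (u : σ → K), aeval u E ≠ 0 →
      (lineRestrict P (fun i ↦ (v i : K)) u).coeff 0 ≠ 0 ∧
      ¬ ∃ (c : K) (g : Polynomial K),
        lineRestrict P (fun i ↦ (v i : K)) u = Polynomial.C c * g ^ 2) (u : σ → ZMod p) :
    10 * {s : ZMod p | ¬ IsSquare (aeval ((fun i ↦ (v i : ZMod p)) + s • u) P)}.ncard ≤
      9 * p + if aeval u E = 0 then 10 * p else 0 := by
  rw [Set.ncard_eq_toFinset_card']
  split_ifs with hu
  · have := Finset.card_le_univ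
      {s : ZMod p | ¬ IsSquare (aeval ((fun i ↦ (v i : ZMod p)) + s • u) P)}.toFinset
    rw [ZMod.card] at this
    omega
  · refine ten_mul_card_le_of_not_isSquare_eval hp (natDegree_lineRestrict_le _ _ hP)
      (hE _ u hu).1 (hE _ u hu).2 fun s hs ↦ ?_
    rw [eval_lineRestrict]
    simpa using hs

theorem eventually_hundred_mul_ncard_not_isSquare_le {N : ℕ} {P : MvPolynomial (Fin N) ℤ}
    (hP : P.IsHomogeneous 4)
    (hns : ¬ ∃ (κ : ℚ) (S : MvPolynomial (Fin N) ℚ), map (Int.castRingHom ℚ) P = C κ * S ^ 2) :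
    ∀ᶠ p : ℕ in atTop, ∀ [Fact p.Prime],
      100 * {y : Fin N → ZMod p | ¬ IsSquare (aeval y P)}.ncard ≤ 92 * p ^ N := by
  classical
  obtain ⟨v, E, hE₀, hE⟩ := exists_forall_lineRestrict_ne_C_mul_sq hP hns
  filter_upwards [eventually_mul_ncard_aeval_eq_zero_le hE₀ 100, eventually_ge_atTop 300]
    with p hZ hp _
  set B := {y : Fin N → ZMod p | ¬ IsSquare (aeval y P)}.ncard
  have hline : (p - 1) * B ≤ ∑ u : Fin N → ZMod p,
      {s : ZMod p | ¬ IsSquare (aeval ((fun i ↦ (v i : ZMod p)) + s • u) P)}.ncard := by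
    have h := card_sub_one_mul_card_le_sum_card_line (K := ZMod p)
      (fun i ↦ (v i : ZMod p)) {y | ¬ IsSquare (aeval y P)}
    rwa [ZMod.card] at h
  have hsum : 10 * ((p - 1) * B) ≤
      9 * p * p ^ N + 10 * p * {y : Fin N → ZMod p | aeval y E = 0}.ncard :=
    calc 10 * ((p - 1) * B)
        ≤ ∑ u : Fin N → ZMod p, (9 * p + if aeval u E = 0 then 10 * p else 0) := by
          refine (Nat.mul_le_mul_left 10 hline).trans ?_
          rw [Finset.mul_sum]
          exact Finset.sum_le_sum fun u _ ↦
            ten_mul_ncard_not_isSquare_line_le hp hP.totalDegree_le hE u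
      _ = _ := by
          rw [Finset.sum_add_distrib, Finset.sum_const, Finset.card_univ, ← Finset.sum_filter,
            Finset.sum_const, Set.ncard_eq_toFinset_card', Set.toFinset_ofPred]
          simp [ZMod.card]
          ring
  obtain ⟨P, rfl⟩ : ∃ P, p = P + 1 := ⟨p - 1, by omega⟩
  refine Nat.le_of_mul_le_mul_left ?_ (show 0 < P by omega)
  rw [Nat.add_sub_cancel] at hsum
  nlinarith [Nat.mul_le_mul_left (P + 1) hZ, Nat.mul_le_mul_right ((P + 1) ^ N)
    (show 91 ≤ P by omega)]

end Eventually

namespace IntQuad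
section SmoothLines

variable {ι : Type*} [Fintype ι] (F : IntQuad ι)

theorem grad_add_single_self [DecidableEq ι] {R : Type*} [CommRing R] (x : ι → R) (i : ι) (t : R) :
    F.grad (x + Pi.single i t) i = 2 * F.A i i * t + F.grad x i := by
  simp only [grad, mulVec_add, mulVec_single, Pi.add_apply, Pi.smul_apply, hess, map_apply,
    col_apply, op_smul_eq_mul, Matrix.add_apply, transpose_apply, Int.cast_add]
  ring

section MapEqSingle

variable {F} [DecidableEq ι] {R : Type*} [CommRing R] {o : ι} {a : R}
  (hA : F.A.map (Int.cast : ℤ → R) = Matrix.single o o a)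
include hA

theorem eval_of_map_eq_single (x : ι → R) :
    F.eval x = a * x o ^ 2 + ∑ i, F.B i * x i + F.c := by
  rw [eval, hA, single_mulVec]
  change x ⬝ᵥ Pi.single o (a * x o) + _ + _ = _
  rw [dotProduct_single, dotProduct]
  ring

theorem grad_of_map_eq_single (x : ι → R) (i : ι) :
    F.grad x i = (if i = o then 2 * a * x o else 0) + F.B i := by
  have hhess : F.hess (R) = 2 • Matrix.single o o a := by
    rw [two_smul]
    nth_rw 2 [← transpose_single]
    rw [← hA]
    ext
    simp [hess]
  rw [grad, hhess, smul_mulVec, single_mulVec]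
  simp [Function.update_apply, mul_assoc]

end MapEqSingle

variable {p : ℕ} [Fact p.Prime]

/-- Over a field the zeros of a quadratic with nonzero discriminant are simple, so each line in
the direction `i` contributes a nonsingular zero. -/
theorem pow_le_smoothZeroCount (i : ι)
    (hd : ∀ x : ι → ZMod p, discrim (F.A i i : ZMod p) (F.grad x i) (F.eval x) ≠ 0)
    (hz : ∀ x : ι → ZMod p, ∃ t, F.A i i * (t * t) + F.grad x i * t + F.eval x = 0) :
    p ^ (Fintype.card ι - 1) ≤ F.smoothZeroCount p := by
  classical
  choose t ht using hz
  let extend (w : {j // j ≠ i} → ZMod p) (j : ι) : ZMod p := if hj : j ≠ i then w ⟨j, hj⟩ else 0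
  let point (w : {j // j ≠ i} → ZMod p) := extend w + Pi.single i (t (extend w))
  have hzero (w) : F.eval (point w) = 0 := by
    rw [eval_add_single, ← ht (extend w)]
    ring
  have hsmooth (w) : F.grad (point w) ≠ 0 := fun h ↦ hd (extend w) <| by
    rw [discrim_eq_sq_of_quadratic_eq_zero (ht (extend w)), ← grad_add_single_self]
    simpa using congrFun h i
  have hinj : Function.Injective point := fun w w' hw ↦ funext fun j ↦ by
    simpa [point, extend, j.2] using congrFun hw j
  calc p ^ (Fintype.card ι - 1) = Nat.card ({j // j ≠ i} → ZMod p) := by simp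
    _ ≤ F.smoothZeroCount p := Nat.card_le_card_of_injective
        (fun w ↦ ⟨point w, hzero w, hsmooth w⟩) fun w w' h ↦ hinj (congrArg Subtype.val h)

variable {F} [DecidableEq ι] {o : ι} {a : ZMod p}
  (hA : F.A.map (Int.cast : ℤ → ZMod p) = Matrix.single o o a)
include hA

theorem pow_le_smoothZeroCount_of_ne {i : ι} (hi : i ≠ o) (hB : (F.B i : ZMod p) ≠ 0) :
    p ^ (Fintype.card ι - 1) ≤ F.smoothZeroCount p := by
  have hAi : (F.A i i : ZMod p) = 0 := by
    simpa [hi.symm] using congrFun (congrFun hA i) i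
  have hgrad (x : ι → ZMod p) : F.grad x i = F.B i := by
    rw [grad_of_map_eq_single hA, if_neg hi, zero_add]
  refine F.pow_le_smoothZeroCount i (fun x ↦ ?_) fun x ↦ ⟨-F.eval x / F.B i, ?_⟩
  · simpa [discrim, hAi, hgrad] using hB
  · rw [hAi, hgrad]
    field_simp
    ring

theorem pow_le_smoothZeroCount_of_isSquare_discrim (hp : p ≠ 2) (ha : a ≠ 0)
    (hB : ∀ i ≠ o, (F.B i : ZMod p) = 0) (hd : discrim a (F.B o) F.c ≠ 0)
    (hsq : IsSquare (discrim a (F.B o) F.c)) :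
    p ^ (Fintype.card ι - 1) ≤ F.smoothZeroCount p := by
  have : NeZero (2 : ZMod p) := ⟨Ring.two_ne_zero (by rwa [ZMod.ringChar_zmod_n])⟩
  have hAo : (F.A o o : ZMod p) = a := by
    simpa using congrFun (congrFun hA o) o
  have hdiscrim (x : ι → ZMod p) :
      discrim (F.A o o : ZMod p) (F.grad x o) (F.eval x) = discrim a (F.B o) F.c := by
    rw [hAo, grad_of_map_eq_single hA, eval_of_map_eq_single hA, if_pos rfl,
      Finset.sum_eq_single o (fun i _ hi ↦ by rw [hB i hi, zero_mul]) (by simp), discrim, discrim]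
    ring
  exact F.pow_le_smoothZeroCount o (fun x ↦ (hdiscrim x).symm ▸ hd) fun x ↦
    exists_quadratic_eq_zero (hAo.symm ▸ ha) ((hdiscrim x).symm ▸ hsq)

end SmoothLines
end IntQuad

/-- The cubic forms `y₀ F₁(x) + α y₁ xₒ² + ∑ xᵢ qᵢ(y) + R(y)` in the variables `x : Fin m → ℤ` and
`y : Fin (k + 2) → ℤ`, where `F₁` is the quadratic form with the (not necessarily symmetric)
matrix `A` and `o` is the distinguished index. -/
structure SplitCubic (m k : ℕ) where
  A : Matrix (Fin m) (Fin m) ℤ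
  α : ℤ
  o : Fin m
  q : Fin m → MvPolynomial (Fin (k + 2)) ℤ
  R : MvPolynomial (Fin (k + 2)) ℤ
  isHomogeneous_q : ∀ i, (q i).IsHomogeneous 2
  isHomogeneous_R : R.IsHomogeneous 3

namespace SplitCubic

variable {m k : ℕ} (G : SplitCubic m k)

/-- The cubic form itself, the variables `x` on the left and `y` on the right. -/
noncomputable def poly : MvPolynomial (Fin m ⊕ Fin (k + 2)) ℤ :=
  X (Sum.inr 0) * rename Sum.inl (∑ a, ∑ b, C (G.A a b) * X a * X b) +
    C G.α * X (Sum.inr 1) * X (Sum.inl G.o) ^ 2 +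
    ∑ i, X (Sum.inl i) * rename Sum.inr (G.q i) + rename Sum.inr G.R

/-- The quadratic polynomial `F_y` in `x` obtained by fixing `y`. -/
noncomputable def fiber (y : Fin (k + 2) → ℤ) : IntQuad (Fin m) where
  A := y 0 • G.A + Matrix.single G.o G.o (G.α * y 1)
  B i := aeval y (G.q i)
  c := aeval y G.R

theorem eval_poly (x : Fin m → ℤ) (y : Fin (k + 2) → ℤ) :
    MvPolynomial.eval (Sum.elim x y) G.poly = (G.fiber y).eval x := by
  have hsingle : ∑ i, ∑ j, Matrix.single G.o G.o (G.α * y 1) i j * (x i * x j) =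
      G.α * y 1 * x G.o ^ 2 := by
    simp only [Matrix.single, of_apply, ite_mul, zero_mul, ite_and, Finset.sum_ite_eq,
      Finset.mem_univ, if_true, Finset.sum_ite_irrel, Finset.sum_const_zero]
    ring
  rw [IntQuad.eval_eq_sum]
  simp only [poly, fiber, map_add, map_mul, map_sum, map_pow, eval_X, eval_C, rename_C, rename_X,
    eval_rename, Sum.elim_inr, Sum.elim_inl, Sum.elim_comp_inr, aeval_eq_eval, Matrix.add_apply,
    Matrix.smul_apply, smul_eq_mul, Int.cast_id, add_mul, Finset.sum_add_distrib, hsingle,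
    Finset.mul_sum, mul_assoc, mul_comm (x _) (MvPolynomial.eval _ _)]

end SplitCubic

theorem totalDegree_le_one_of_eq_mul_sub {σ K : Type*} [Field K] {i : σ} {α : K} (hα : α ≠ 0)
    {q R l : MvPolynomial σ K} (hq : q.totalDegree ≤ 2) (hR : R.totalDegree ≤ 3)
    (h : R = l * (q - C α * X i * l)) : l.totalDegree ≤ 1 := by
  by_contra! hl
  have hl₀ : l ≠ 0 := by
    rintro rfl
    simp at hl
  have hαX : C α * X i ≠ 0 := mul_ne_zero ((map_ne_zero_iff _ (C_injective σ K)).2 hα) (X_ne_zero i)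
  have hmul : (-(C α * X i * l)).totalDegree = 1 + l.totalDegree := by
    rw [totalDegree_neg, totalDegree_mul_of_isDomain hαX hl₀, C_mul_X_eq_monomial,
      totalDegree_monomial _ hα]
    simp
  have hsub : (q - C α * X i * l).totalDegree = 1 + l.totalDegree := by
    rw [sub_eq_add_neg, totalDegree_add_eq_right_of_totalDegree_lt (by omega), hmul]
  have hne : q - C α * X i * l ≠ 0 := by
    intro h0
    rw [h0, totalDegree_zero] at hsub
    omega
  rw [h, totalDegree_mul_of_isDomain hl₀ hne, hsub] at hR
  omega

/-- If the discriminant `κ S²` of `α X₀ T² + q T + R` has `κ` a square, the quadratic splits;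
otherwise `X₀` divides it up to the term `α X₀ T²`. -/
theorem X_zero_dvd_or_exists_eq_mul {K : Type*} [Field K] [CharZero K] {k : ℕ} {α : K} (hα : α ≠ 0)
    {κ : K} {q R S : MvPolynomial (Fin (k + 1)) K} (hq : q.totalDegree ≤ 2) (hR : R.totalDegree ≤ 3)
    (h : q ^ 2 - C (4 * α) * X 0 * R = C κ * S ^ 2) :
    (X 0 ∣ q ∧ X 0 ∣ R) ∨ ∃ l, l.totalDegree ≤ 1 ∧ R = l * (q - C α * X 0 * l) := by
  by_cases hκ : IsSquare κ
  · obtain ⟨ρ, rfl⟩ := hκ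
    obtain ⟨l, hl⟩ := exists_eq_mul_of_discrim_eq_sq hα (q := q) (S := C ρ * S) <| by
      rw [h, C_mul]
      ring
    exact Or.inr ⟨l, totalDegree_le_one_of_eq_mul_sub hα hq hR hl, hl⟩
  · left
    obtain ⟨hq₀, S', rfl⟩ := X_zero_dvd_of_dvd_sq_sub hκ (q := q) (S := S)
      ⟨C (4 * α) * R, by linear_combination h⟩
    obtain ⟨q', rfl⟩ := hq₀
    refine ⟨dvd_mul_right _ _, C (4 * α)⁻¹ * (q' ^ 2 - C κ * S' ^ 2), ?_⟩
    have hinv : (C (4 * α)⁻¹ * C (4 * α) : MvPolynomial (Fin (k + 1)) K) = 1 := by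
      rw [← C_mul, inv_mul_cancel₀ (mul_ne_zero (by norm_num) hα), C_1]
    refine mul_left_cancel₀ (X_ne_zero (0 : Fin (k + 1))) ?_
    linear_combination -X 0 * R * hinv - C (4 * α)⁻¹ * h

theorem hInvariantLE_two_of_discrim_eq {σ K : Type*} [Field K] [CharZero K] {k : ℕ}
    {P : MvPolynomial σ K} (hP : P.IsHomogeneous 3) {y x : σ} {f : Fin (k + 1) → σ} {α : K}
    (hα : α ≠ 0) {κ : K} {q R S : MvPolynomial (Fin (k + 1)) K} (hq : q.totalDegree ≤ 2)
    (hR : R.totalDegree ≤ 3) (h : q ^ 2 - C (4 * α) * X 0 * R = C κ * S ^ 2)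
    (hdvd : X y ∣ P - (C α * X (f 0) * X x ^ 2 + X x * rename f q + rename f R)) :
    HInvariantLE 2 P := by
  obtain ⟨U, hU⟩ := hdvd
  obtain ⟨⟨q', hq'⟩, R', hR'⟩ | ⟨l, hl, hR'⟩ := X_zero_dvd_or_exists_eq_mul hα hq hR h
  · refine hInvariantLE_of_eq_sum hP (L := ![X y, X (f 0)])
      (B := ![U, C α * X x ^ 2 + X x * rename f q' + rename f R']) ?_ ?_
    · exact Fin.forall_fin_two.2 ⟨isHomogeneous_X _ _, isHomogeneous_X _ _⟩
    · rw [hq', hR', map_mul, map_mul, rename_X] at hU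
      rw [Fin.sum_univ_two]
      simp only [cons_val_zero, cons_val_one]
      linear_combination hU
  · refine hInvariantLE_two_of_eq_add hP (L := X y) (U := U) (A := X x + rename f l)
      (B := C α * X (f 0) * X x + rename f (q - C α * X 0 * l)) (isHomogeneous_X _ _) ?_ ?_ ?_
    · exact (totalDegree_add _ _).trans
        (max_le (totalDegree_X _).le ((totalDegree_rename_le _ _).trans hl))
    · have hquad : (C α * X (f 0) * X x).IsHomogeneous 2 :=
        ((isHomogeneous_C _ _).mul (isHomogeneous_X _ _)).mul (isHomogeneous_X _ _)
      have hlin : (C α * X 0 : MvPolynomial (Fin (k + 1)) K).IsHomogeneous 1 :=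
        (isHomogeneous_C _ _).mul (isHomogeneous_X _ _)
      refine (totalDegree_add _ _).trans (max_le hquad.totalDegree_le
        ((totalDegree_rename_le _ _).trans ((totalDegree_sub _ _).trans (max_le hq ?_))))
      exact (totalDegree_mul _ _).trans (Nat.add_le_add hlin.totalDegree_le hl)
    · rw [hR', map_mul] at hU
      rw [map_sub, map_mul, map_mul, rename_X, rename_C] at hU ⊢
      linear_combination hU

namespace SplitCubic

variable {m k : ℕ} (G : SplitCubic m k)

/-- On the hyperplane `y₀ = 0` the quadratic part of `F_y` is `α y₁ xₒ²`. This is the discriminant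
in `xₒ`, as a quartic form in the remaining variables `y₁, y₂, …`. -/
noncomputable def discr : MvPolynomial (Fin (k + 1)) ℤ :=
  restrictZero (G.q G.o) ^ 2 - C (4 * G.α) * X 0 * restrictZero G.R

theorem isHomogeneous_discr : G.discr.IsHomogeneous 4 :=
  ((isHomogeneous_restrictZero (G.isHomogeneous_q G.o)).pow 2).sub
    (((isHomogeneous_C _ _).mul (isHomogeneous_X _ _)).mul
      (isHomogeneous_restrictZero G.isHomogeneous_R))

theorem isHomogeneous_poly : G.poly.IsHomogeneous 3 := by
  have hquad : (∑ a, ∑ b, C (G.A a b) * X a * X b : MvPolynomial (Fin m) ℤ).IsHomogeneous 2 :=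
    .sum _ _ _ fun a _ ↦ .sum _ _ _ fun b _ ↦
      ((isHomogeneous_C _ _).mul (isHomogeneous_X _ a)).mul (isHomogeneous_X _ b)
  exact ((((isHomogeneous_X _ _).mul hquad.rename_isHomogeneous).add
    (((isHomogeneous_C _ _).mul (isHomogeneous_X _ _)).mul ((isHomogeneous_X _ _).pow 2))).add
    (.sum _ _ _ fun i _ ↦
      (isHomogeneous_X _ _).mul (G.isHomogeneous_q i).rename_isHomogeneous)).add
    G.isHomogeneous_R.rename_isHomogeneous

theorem X_inr_zero_dvd_poly_sub (hq : ∀ i ≠ G.o, restrictZero (G.q i) = 0) :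
    X (Sum.inr 0) ∣ G.poly - (C G.α * X (Sum.inr 1) * X (Sum.inl G.o) ^ 2 +
      X (Sum.inl G.o) * rename (Sum.inr ∘ Fin.succ) (restrictZero (G.q G.o)) +
      rename (Sum.inr ∘ Fin.succ) (restrictZero G.R)) := by
  have hdvd (P : MvPolynomial (Fin (k + 2)) ℤ) : (X (Sum.inr 0) : MvPolynomial (Fin m ⊕ _) ℤ) ∣
      rename Sum.inr P - rename (Sum.inr ∘ Fin.succ) (restrictZero P) := by
    simpa only [map_sub, rename_X, rename_rename] using
      map_dvd (rename (Sum.inr : _ → Fin m ⊕ _)) (X_zero_dvd_sub_rename_restrictZero P)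
  have hsplit : G.poly - (C G.α * X (Sum.inr 1) * X (Sum.inl G.o) ^ 2 +
      X (Sum.inl G.o) * rename (Sum.inr ∘ Fin.succ) (restrictZero (G.q G.o)) +
      rename (Sum.inr ∘ Fin.succ) (restrictZero G.R)) =
      X (Sum.inr 0) * rename Sum.inl (∑ a, ∑ b, C (G.A a b) * X a * X b) +
      ∑ i, X (Sum.inl i) *
        (rename Sum.inr (G.q i) - rename (Sum.inr ∘ Fin.succ) (restrictZero (G.q i))) +
      (rename Sum.inr G.R - rename (Sum.inr ∘ Fin.succ) (restrictZero G.R)) := by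
    simp only [mul_sub, Finset.sum_sub_distrib]
    rw [Finset.sum_eq_single G.o (f := fun i ↦ X (Sum.inl i) *
      rename (Sum.inr ∘ Fin.succ) (restrictZero (G.q i))) (by simp +contextual [hq]) (by simp),
      poly]
    ring
  rw [hsplit]
  exact ((dvd_mul_right _ _).add (Finset.dvd_sum fun i _ ↦ (hdvd _).mul_left _)).add (hdvd _)

theorem exists_restrictZero_ne_zero_or_discr_ne (hα : G.α ≠ 0)
    (hG : ¬ HInvariantLE 2 (MvPolynomial.map (Int.castRingHom ℚ) G.poly)) :
    (∃ i ≠ G.o, restrictZero (G.q i) ≠ 0) ∨ (∀ i ≠ G.o, restrictZero (G.q i) = 0) ∧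
      ¬ ∃ (κ : ℚ) (S : MvPolynomial (Fin (k + 1)) ℚ),
        MvPolynomial.map (Int.castRingHom ℚ) G.discr = C κ * S ^ 2 := by
  refine or_iff_not_imp_left.2 fun hq ↦ ?_
  push Not at hq
  refine ⟨hq, fun ⟨κ, S, hS⟩ ↦ hG ?_⟩
  refine hInvariantLE_two_of_discrim_eq (G.isHomogeneous_poly.map _) (y := Sum.inr 0)
    (x := Sum.inl G.o) (f := Sum.inr ∘ Fin.succ) (α := (G.α : ℚ)) (κ := κ) (S := S)
    (q := MvPolynomial.map (Int.castRingHom ℚ) (restrictZero (G.q G.o)))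
    (R := MvPolynomial.map (Int.castRingHom ℚ) (restrictZero G.R)) (by exact_mod_cast hα)
    ((isHomogeneous_restrictZero (G.isHomogeneous_q G.o)).map _).totalDegree_le
    ((isHomogeneous_restrictZero G.isHomogeneous_R).map _).totalDegree_le ?_ ?_
  · rw [← hS, discr]
    simp [map_ofNat]
  · simpa [map_rename] using
      map_dvd (MvPolynomial.map (Int.castRingHom ℚ)) (G.X_inr_zero_dvd_poly_sub hq)

/-- A residue class `y` modulo `p` on the hyperplane `y₀ = 0` is good if, for every lift `z` of it,
`F_z` has as many nonsingular zeros modulo `p` as there are points on a hyperplane. -/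
def IsGood (p : ℕ) (y : Fin (k + 1) → ZMod p) : Prop :=
  ∀ z : Fin (k + 2) → ℤ, (fun i ↦ (z i : ZMod p)) = Fin.cons 0 y →
    p ^ (m - 1) ≤ (G.fiber z).smoothZeroCount p

section Lift

variable {p : ℕ} {y : Fin (k + 1) → ZMod p} {z : Fin (k + 2) → ℤ}
  (hz : (fun i ↦ (z i : ZMod p)) = Fin.cons 0 y)
include hz

theorem map_fiber_A_eq_single :
    (G.fiber z).A.map (Int.cast : ℤ → ZMod p) = Matrix.single G.o G.o (G.α * y 0) := by
  have hz₀ : (z 0 : ZMod p) = 0 := congrFun hz 0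
  have hz₁ : (z 1 : ZMod p) = y 0 := congrFun hz 1
  ext i j
  simp [fiber, hz₀, hz₁, Matrix.single, apply_ite (Int.cast : ℤ → ZMod p), -zsmul_eq_mul]

theorem intCast_aeval_eq_aeval_restrictZero (P : MvPolynomial (Fin (k + 2)) ℤ) :
    ((aeval z P : ℤ) : ZMod p) = aeval y (restrictZero P) := by
  rw [aeval_restrictZero, ← hz, ← eq_intCast (algebraMap ℤ (ZMod p)), ← aeval_algebraMap_apply]
  rfl

end Lift

variable {p : ℕ} [Fact p.Prime] {y : Fin (k + 1) → ZMod p}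

theorem isGood_of_ne {i : Fin m} (hi : i ≠ G.o) (h : aeval y (restrictZero (G.q i)) ≠ 0) :
    G.IsGood p y := fun z hz ↦ by
  simpa using IntQuad.pow_le_smoothZeroCount_of_ne (G.map_fiber_A_eq_single hz) hi
    (by rwa [fiber, intCast_aeval_eq_aeval_restrictZero hz])

theorem isGood_of_isSquare (hp : p ≠ 2) (hα : (G.α : ZMod p) ≠ 0) (hy : y 0 ≠ 0)
    (hq : ∀ i ≠ G.o, restrictZero (G.q i) = 0) (hd : aeval y G.discr ≠ 0)
    (hsq : IsSquare (aeval y G.discr)) : G.IsGood p y := fun z hz ↦ by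
  have hdiscr : discrim (G.α * y 0) ((G.fiber z).B G.o : ZMod p) (G.fiber z).c =
      aeval y G.discr := by
    simp only [fiber, intCast_aeval_eq_aeval_restrictZero hz, discr, discrim, map_sub, map_mul,
      map_pow, aeval_C, aeval_X]
    simp [mul_assoc]
  simpa using IntQuad.pow_le_smoothZeroCount_of_isSquare_discrim (G.map_fiber_A_eq_single hz) hp
    (mul_ne_zero hα hy)
    (fun i hi ↦ by rw [fiber, intCast_aeval_eq_aeval_restrictZero hz, hq i hi, map_zero])
    (hdiscr ▸ hd) (hdiscr ▸ hsq)

open Filter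

theorem eventually_pow_le_ncard_isGood (hα : G.α ≠ 0)
    (hG : ¬ HInvariantLE 2 (MvPolynomial.map (Int.castRingHom ℚ) G.poly)) :
    ∀ᶠ p : ℕ in atTop, ∀ [Fact p.Prime], p ^ (k + 1) ≤ 20 * {y | G.IsGood p y}.ncard := by
  obtain ⟨i, hi, hq⟩ | ⟨hq, hdiscr⟩ := G.exists_restrictZero_ne_zero_or_discr_ne hα hG
  · filter_upwards [eventually_mul_ncard_aeval_eq_zero_le hq 2] with p hp _
    have hzero := hp
    have hcompl := Set.ncard_add_ncard_compl
      {y : Fin (k + 1) → ZMod p | aeval y (restrictZero (G.q i)) = 0}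
    have hsub := Set.ncard_le_ncard (t := {y | G.IsGood p y})
      (s := {y : Fin (k + 1) → ZMod p | aeval y (restrictZero (G.q i)) = 0}ᶜ)
      fun y hy ↦ G.isGood_of_ne hi hy
    rw [Nat.card_fun, Nat.card_zmod, Nat.card_eq_fintype_card, Fintype.card_fin] at hcompl
    omega
  · have hne : X 0 * G.discr ≠ 0 := mul_ne_zero (X_ne_zero _) fun h ↦ hdiscr ⟨0, 0, by simp [h]⟩
    filter_upwards [eventually_hundred_mul_ncard_not_isSquare_le G.isHomogeneous_discr hdiscr,
      eventually_mul_ncard_aeval_eq_zero_le hne 100, eventually_intCast_ne_zero hα,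
      eventually_gt_atTop 2] with p hnsq hzero hαp hp _
    have hnsq := hnsq
    have hzero := hzero
    have hcompl := Set.ncard_add_ncard_compl {y | G.IsGood p y}
    have hsub := (Set.ncard_le_ncard (s := {y | G.IsGood p y}ᶜ)
      (t := {y | ¬ IsSquare (aeval y G.discr)} ∪ {y | aeval y (X 0 * G.discr) = 0})
      fun y hy ↦ by
        by_contra! h
        simp only [Set.mem_union, Set.mem_ofPred_eq, map_mul, aeval_X, mul_eq_zero, not_or,
          not_not] at h
        exact hy (G.isGood_of_isSquare hp.ne' hαp h.2.1 hq h.2.2 h.1)).trans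
      (Set.ncard_union_le _ _)
    rw [Nat.card_fun, Nat.card_zmod, Nat.card_eq_fintype_card, Fintype.card_fin] at hcompl
    omega

end SplitCubic

/-! ### Minors of the Hessian -/

section Minors

theorem injective_of_det_submatrix_ne_zero {R ι κ τ : Type*} [CommRing R] [Fintype τ]
    [DecidableEq τ] {M : Matrix ι κ R} {I : τ → ι} {J : τ → κ} (h : (M.submatrix I J).det ≠ 0) :
    J.Injective := fun _ _ hab ↦ by_contra fun hne ↦
  h (det_zero_of_column_eq hne fun i ↦ congrArg (M (I i)) hab)

theorem exists_linearIndependent_rows {K ι κ : Type*} [Field K] [Finite ι] [Fintype κ]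
    (M : Matrix ι κ K) {r : ℕ} (hr : r ≤ M.rank) :
    ∃ I : Fin r → ι, LinearIndependent K fun a ↦ M (I a) := by
  obtain ⟨τ, f, hf, hspan, hli⟩ := exists_linearIndependent' K M.row
  have : Fintype τ := @Fintype.ofFinite τ (Finite.of_injective f hf)
  rw [rank_eq_finrank_span_row, ← hspan, finrank_span_eq_card hli] at hr
  obtain ⟨e⟩ : Nonempty (Fin r ↪ τ) := Function.Embedding.nonempty_of_card_le (by simpa using hr)
  exact ⟨f ∘ e, hli.comp e e.injective⟩

theorem exists_det_submatrix_ne_zero {K ι κ : Type*} [Field K] [Finite ι] [Fintype κ]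
    (M : Matrix ι κ K) {r : ℕ} (hr : r ≤ M.rank) :
    ∃ (I : Fin r → ι) (J : Fin r → κ), (M.submatrix I J).det ≠ 0 := by
  have := Fintype.ofFinite ι
  obtain ⟨I, hI⟩ := exists_linearIndependent_rows M hr
  have hrank : (M.submatrix I id)ᵀ.rank = r := by
    rw [rank_transpose]
    simpa using LinearIndependent.rank_matrix (M := M.submatrix I id) hI
  obtain ⟨J, hJ⟩ := exists_linearIndependent_rows _ hrank.ge
  have hunit : IsUnit (M.submatrix I J)ᵀ := linearIndependent_rows_iff_isUnit.mp hJ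
  rw [isUnit_iff_isUnit_det, det_transpose] at hunit
  exact ⟨I, J, hunit.ne_zero⟩

variable {R ι κ : Type*} [CommRing R] [DecidableEq ι] (M : Matrix ι ι R) (o : ι)

theorem submatrix_smul_add_single {I : κ → ι} (hI : ∀ a, I a ≠ o) (J : κ → ι) (s t : R) :
    (s • M + Matrix.single o o t).submatrix I J = s • M.submatrix I J := by
  ext a b
  simp [(hI a).symm]

/-- Laplace expansion along the row with index `o`, if there is one, and an arbitrary row
otherwise. -/
theorem exists_det_submatrix_smul_add_single {n : ℕ} {I J : Fin (n + 1) → ι}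
    (hdet : (M.submatrix I J).det ≠ 0) :
    ∃ (d' : R) (I' J' : Fin n → ι), (∀ a, I' a ≠ o) ∧ (M.submatrix I' J').det ≠ 0 ∧
      ∀ s t : R, ((s • M + Matrix.single o o t).submatrix I J).det =
        s ^ n * (s * (M.submatrix I J).det + t * d') := by
  have hI : I.Injective := injective_of_det_submatrix_ne_zero (M := Mᵀ) (I := J) (by
    rwa [← transpose_submatrix, det_transpose])
  obtain ⟨i₀, hi₀⟩ : ∃ i₀ : Fin (n + 1), ∀ a, (I ∘ i₀.succAbove) a ≠ o := by
    by_cases h : ∃ i₀, I i₀ = o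
    · obtain ⟨i₀, rfl⟩ := h
      exact ⟨i₀, fun a ↦ hI.ne (i₀.succAbove_ne a)⟩
    · exact ⟨0, fun a ha ↦ h ⟨_, ha⟩⟩
  have hexpand := det_succ_row (M.submatrix I J) i₀
  obtain ⟨j₀, -, hj₀⟩ := Finset.exists_ne_zero_of_sum_ne_zero (hexpand ▸ hdet)
  refine ⟨∑ j : Fin (n + 1), (-1) ^ (i₀ + j : ℕ) * Matrix.single o o 1 (I i₀) (J j) *
    (M.submatrix (I ∘ i₀.succAbove) (J ∘ j.succAbove)).det, I ∘ i₀.succAbove, J ∘ j₀.succAbove,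
    hi₀, right_ne_zero_of_mul hj₀, fun s t ↦ ?_⟩
  have hsingle : ∀ i j, Matrix.single o o t i j = t * Matrix.single o o 1 i j := fun i j ↦ by
    simp [Matrix.single]
  rw [det_succ_row _ i₀, hexpand]
  simp only [submatrix_submatrix, submatrix_smul_add_single M o hi₀, det_smul, Fintype.card_fin,
    submatrix_apply, Matrix.add_apply, Matrix.smul_apply, smul_eq_mul, hsingle, Finset.mul_sum,
    ← Finset.sum_add_distrib]
  exact Finset.sum_congr rfl fun j _ ↦ by ring

end Minors

/-! ### The family of fibers -/

theorem aeval_smul_of_isHomogeneous {σ R S : Type*} [CommSemiring R] [CommSemiring S] [Algebra R S]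
    {P : MvPolynomial σ R} {n : ℕ} (hP : P.IsHomogeneous n) (t : S) (w : σ → S) :
    aeval (t • w) P = t ^ n * aeval w P := by
  rw [aeval_def, aeval_def, eval₂_eq, eval₂_eq, Finset.mul_sum]
  refine Finset.sum_congr rfl fun d hd ↦ ?_
  have hdeg : ∑ i ∈ d.support, d i = n := by
    rw [← hP (mem_support_iff.mp hd), Finsupp.weight_apply, Finsupp.sum]
    simp
  simp only [Pi.smul_apply, smul_eq_mul, mul_pow, Finset.prod_mul_distrib,
    Finset.prod_pow_eq_pow_sum, hdeg, mul_left_comm]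

theorem exists_mulVec_apply_ne_zero {R ι κ : Type*} [CommRing R] [Nontrivial R] [Fintype κ]
    {M : Matrix ι κ R} {i : ι} {j : κ} (hij : M i j ≠ 0) (o : κ) :
    ∃ x : κ → R, x o ≠ 0 ∧ (M *ᵥ x) i ≠ 0 := by
  classical
  by_cases ho : M i o = 0
  · have hjo : o ≠ j := fun h ↦ hij (h ▸ ho)
    exact ⟨Pi.single o 1 + Pi.single j 1, by simp [hjo], by simpa [mulVec_add, ho] using hij⟩
  · exact ⟨Pi.single o 1, by simp, by simpa using ho⟩

namespace IntQuad

variable {ι : Type*} [Fintype ι] (F : IntQuad ι)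

theorem one_sub_two_mul_le_density_pow [Nonempty ι] {n : ℕ} (I : Fin n → ι) {J : Fin n → ι}
    (hJ : J.Injective) (p : ℕ) [Fact p.Prime] (hD : ¬ (p : ℤ) ∣ ((F.A + F.Aᵀ).submatrix I J).det)
    {β : ℝ} (hβ : 0 ≤ β) (hβn : (p : ℝ) ^ 2 ≤ β ^ 2 * (p : ℝ) ^ n) {k : ℕ} (hk : 0 < k) :
    1 - 2 * β ≤ F.density (p ^ k) := by
  refine (F.one_sub_two_mul_le_smoothZeroCount_div p hβ ?_).trans
    (F.smoothZeroCount_div_le_density hk)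
  have hn : n ≤ Fintype.card ι := by simpa using Fintype.card_le_of_injective J hJ
  have hker : (F.hessKerCard p : ℝ) ≤ (p : ℝ) ^ (Fintype.card ι - n) := by
    exact_mod_cast F.hessKerCard_prime_le I hJ p hD
  calc (p : ℝ) ^ 2 * F.hessKerCard p
      ≤ β ^ 2 * (p : ℝ) ^ n * (p : ℝ) ^ (Fintype.card ι - n) := by gcongr
    _ = β ^ 2 * (p : ℝ) ^ Fintype.card ι := by
      rw [mul_assoc, ← pow_add, Nat.add_sub_cancel' hn]

theorem inv_pow_le_density_smul {T : ℕ} {p v : ℕ} [Fact p.Prime]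
    {x : ι → ℤ} {i : ι} {D : ℤ} (hx : (T : ℤ) ∣ F.eval x) (hgrad : (T : ℤ) ∣ F.grad x i - D)
    (hD : ¬ (p : ℤ) ^ (v + 1) ∣ D) (hv : 2 * v < T.factorization p) (k : ℕ) :
    ((p : ℝ) ^ (T.factorization p * (Fintype.card ι - 1)))⁻¹ ≤ ((T : ℤ) • F).density (p ^ k) := by
  have hpT : ((p ^ T.factorization p : ℕ) : ℤ) ∣ T := Int.natCast_dvd_natCast.mpr (T.ordProj_dvd p)
  rw [Nat.cast_pow] at hpT
  refine (F.inv_pow_le_density (i := i) (hpT.trans hx) (fun h ↦ hD ?_) hv k).trans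
    (density_le_density_smul T F _)
  have hpv : (p : ℤ) ^ (v + 1) ∣ T := (pow_dvd_pow _ (by omega)).trans hpT
  exact (dvd_sub_right h).mp (hpv.trans hgrad)

end IntQuad

namespace SplitCubic

variable {m k : ℕ} (G : SplitCubic m k)

/-- The Hessian of the quadratic form multiplying `y 0`. -/
def hess : Matrix (Fin m) (Fin m) ℤ := G.A + G.Aᵀ

theorem fiber_A_add_transpose (y : Fin (k + 2) → ℤ) :
    (G.fiber y).A + (G.fiber y).Aᵀ =
      y 0 • G.hess + Matrix.single G.o G.o (2 * G.α * y 1) := by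
  rw [fiber, hess, transpose_add, transpose_smul, transpose_single, smul_add, add_add_add_comm,
    ← single_add, ← two_mul, mul_assoc]

/-- The fiber over `T • w` with a factor `T` taken out. -/
noncomputable def scaledFiber (T : ℤ) (w : Fin (k + 2) → ℤ) : IntQuad (Fin m) where
  A := w 0 • G.A + Matrix.single G.o G.o (G.α * w 1)
  B i := T * aeval w (G.q i)
  c := T ^ 2 * aeval w G.R

theorem fiber_smul (T : ℤ) (w : Fin (k + 2) → ℤ) : G.fiber (T • w) = T • G.scaledFiber T w := by
  change G.fiber (T • w) = ⟨T • _, T • _, T * _⟩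
  ext i
  · simp only [fiber, scaledFiber, Pi.smul_apply, smul_eq_mul, smul_add, smul_smul, smul_single,
      mul_left_comm]
  · simp only [fiber, scaledFiber, Pi.smul_apply, smul_eq_mul,
      aeval_smul_of_isHomogeneous (G.isHomogeneous_q i), ← mul_assoc, ← sq]
  · simp only [fiber, scaledFiber, aeval_smul_of_isHomogeneous G.isHomogeneous_R, ← mul_assoc,
      ← pow_succ']

theorem dvd_scaledFiber_eval_sub (T : ℤ) (w : Fin (k + 2) → ℤ) (x : Fin m → ℤ) :
    T ∣ (G.scaledFiber T w).eval x - (w 0 * (x ⬝ᵥ G.A *ᵥ x) + G.α * w 1 * x G.o ^ 2) := by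
  have hA : (G.scaledFiber T w).A.map (Int.cast : ℤ → ℤ) = (G.scaledFiber T w).A := map_id' _
  have hB : (fun i ↦ (Int.cast ((G.scaledFiber T w).B i) : ℤ)) = T • fun i ↦ aeval w (G.q i) := rfl
  have hquad : x ⬝ᵥ (G.scaledFiber T w).A *ᵥ x =
      w 0 * (x ⬝ᵥ G.A *ᵥ x) + G.α * w 1 * x G.o ^ 2 := by
    have hsingle : Matrix.single G.o G.o (G.α * w 1) *ᵥ x = Pi.single G.o (G.α * w 1 * x G.o) :=
      single_mulVec ..
    rw [scaledFiber, add_mulVec, smul_mulVec, hsingle, dotProduct_add, dotProduct_smul,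
      dotProduct_single, smul_eq_mul]
    ring
  rw [IntQuad.eval, hA, hquad, hB, add_assoc, add_sub_cancel_left, smul_dotProduct]
  exact dvd_add (dvd_mul_right _ _) ((dvd_pow_self T two_ne_zero).mul_right _)

theorem dvd_scaledFiber_grad_sub (T : ℤ) (w : Fin (k + 2) → ℤ) (x : Fin m → ℤ) {i : Fin m}
    (hi : i ≠ G.o) : T ∣ (G.scaledFiber T w).grad x i - w 0 * (G.hess *ᵥ x) i := by
  have hhess : (G.scaledFiber T w).hess ℤ =
      w 0 • G.hess + Matrix.single G.o G.o (2 * (G.α * w 1)) := by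
    rw [IntQuad.hess, scaledFiber, hess, transpose_add, transpose_smul, transpose_single,
      add_add_add_comm, ← smul_add, ← single_add, two_mul]
    exact map_id' _
  rw [IntQuad.grad, hhess, add_mulVec, smul_mulVec, single_mulVec]
  simp [hi, scaledFiber]

variable {G}

/-- Data attached to the quadratic form `F₁` multiplying `y 0`, fixed once and for all: a
nonsingular `5 × 5` minor (rows `I`, columns `J`) of its Hessian, with `d'` the effect on it of
changing the diagonal entry at `o`; a nonsingular `4 × 4` minor (rows `I₄`, columns `J₄`) not
affected by that entry; and a point `x` which `y` will be chosen to make a zero of `F_y` modulo a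
large integer, with nonvanishing `i`-th derivative. -/
structure Frame (G : SplitCubic m k) where
  (I J : Fin 5 → Fin m)
  (I₄ J₄ : Fin 4 → Fin m)
  (d' : ℤ)
  (x : Fin m → ℤ)
  (i : Fin m)
  det_ne_zero : (G.hess.submatrix I J).det ≠ 0
  det_pencil : ∀ s t : ℤ, ((s • G.hess + Matrix.single G.o G.o t).submatrix I J).det =
    s ^ 4 * (s * (G.hess.submatrix I J).det + t * d')
  I₄_ne : ∀ a, I₄ a ≠ G.o
  det₄_ne_zero : (G.hess.submatrix I₄ J₄).det ≠ 0
  i_ne : i ≠ G.o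
  x_o_ne_zero : x G.o ≠ 0
  hess_mulVec_ne_zero : (G.hess *ᵥ x) i ≠ 0

theorem nonempty_frame (hrank : 5 ≤ (G.hess.map (Int.cast : ℤ → ℚ)).rank) : Nonempty G.Frame := by
  obtain ⟨I, J, hdetQ⟩ := exists_det_submatrix_ne_zero _ hrank
  have hdet : (G.hess.submatrix I J).det ≠ 0 := fun h ↦ hdetQ <| by
    rw [submatrix_map, ← Int.cast_det, h, Int.cast_zero]
  obtain ⟨d', I₄, J₄, hI₄, hdet₄, hpencil⟩ :=
    exists_det_submatrix_smul_add_single G.hess G.o hdet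
  obtain ⟨b, hb⟩ : ∃ b, G.hess (I₄ 0) (J₄ b) ≠ 0 := by
    by_contra! h
    exact hdet₄ (det_eq_zero_of_row_eq_zero 0 h)
  obtain ⟨x, hxo, hx⟩ := exists_mulVec_apply_ne_zero hb G.o
  exact ⟨⟨I, J, I₄, J₄, d', x, I₄ 0, hdet, hpencil, hI₄, hdet₄, hI₄ 0, hxo, hx⟩⟩

namespace Frame

variable (Φ : G.Frame)

/-- The chosen `5 × 5` minor. -/
def d : ℤ := (G.hess.submatrix Φ.I Φ.J).det

/-- The chosen `4 × 4` minor. -/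
def d₄ : ℤ := (G.hess.submatrix Φ.I₄ Φ.J₄).det

/-- With `Φ.t`, the direction `(s, t)` of `(y 0, y 1)` in which `y 0 * F₁ + α * y 1 * x_o ^ 2`
vanishes at `Φ.x`. -/
def s : ℤ := G.α * Φ.x G.o ^ 2

/-- The second coordinate of the direction `(s, t)` in `Frame.s`. -/
def t : ℤ := -(Φ.x ⬝ᵥ G.A *ᵥ Φ.x)

/-- The `i`-th derivative at `Φ.x` of `s * F₁ + α * t * x_o ^ 2`. -/
def D : ℤ := Φ.s * (G.hess *ᵥ Φ.x) Φ.i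

/-- The point `p • (s, t, 0, …) + T • (0, z)`. -/
def base (T p : ℕ) (z : Fin (k + 1) → ℤ) : Fin (k + 2) → ℤ :=
  (p : ℤ) • Fin.cons Φ.s (Pi.single 0 Φ.t) + (T : ℤ) • Fin.cons 0 z

/-- The points `y` over which the singular series is bounded below: modulo `T ^ 2` they are
`T * p` times the direction `(s, t, 0, …)`, and modulo `p` they are `(0, T ^ 2 • z)`. -/
def point (T p : ℕ) (z : Fin (k + 1) → ℤ) : Fin (k + 2) → ℤ := (T : ℤ) • Φ.base T p z

/-- The factor of the `5 × 5` minor of the fiber over `Φ.point T p z` which depends on `z`. -/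
def minorFactor (T p : ℕ) (z₀ : ℤ) : ℤ :=
  p * (Φ.s * Φ.d + 2 * G.α * Φ.t * Φ.d') + 2 * G.α * T * Φ.d' * z₀

theorem base_zero (T p : ℕ) (z : Fin (k + 1) → ℤ) : Φ.base T p z 0 = p * Φ.s := by
  simp [base]

theorem base_one (T p : ℕ) (z : Fin (k + 1) → ℤ) : Φ.base T p z 1 = p * Φ.t + T * z 0 := by
  simp [base, Fin.cons_one]

theorem det_fiber_point (T p : ℕ) (z : Fin (k + 1) → ℤ) :
    (((G.fiber (Φ.point T p z)).A + (G.fiber (Φ.point T p z)).Aᵀ).submatrix Φ.I Φ.J).det =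
      (T * (p * Φ.s)) ^ 4 * (T * Φ.minorFactor T p (z 0)) := by
  simp only [fiber_A_add_transpose, Φ.det_pencil, point, Pi.smul_apply, smul_eq_mul,
    base_zero, base_one, minorFactor, d]
  ring

theorem det₄_fiber_point (T p : ℕ) (z : Fin (k + 1) → ℤ) :
    (((G.fiber (Φ.point T p z)).A + (G.fiber (Φ.point T p z)).Aᵀ).submatrix Φ.I₄ Φ.J₄).det =
      (T * (p * Φ.s)) ^ 4 * Φ.d₄ := by
  rw [fiber_A_add_transpose, submatrix_smul_add_single _ _ Φ.I₄_ne, det_smul, Fintype.card_fin,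
    point, Pi.smul_apply, base_zero, smul_eq_mul, d₄]

theorem point_cast (p T : ℕ) (z : Fin (k + 1) → ℤ) :
    (fun j ↦ (Φ.point T p z j : ZMod p)) =
      Fin.cons 0 ((T : ZMod p) ^ 2 • fun j ↦ (z j : ZMod p)) := by
  funext j
  refine Fin.cases ?_ (fun j ↦ ?_) j <;> simp [point, base, ← mul_assoc, sq]

section Alpha

variable (hα : G.α ≠ 0)
include hα

theorem s_ne_zero : Φ.s ≠ 0 := mul_ne_zero hα (pow_ne_zero 2 Φ.x_o_ne_zero)

theorem D_ne_zero : Φ.D ≠ 0 := mul_ne_zero (Φ.s_ne_zero hα) Φ.hess_mulVec_ne_zero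

end Alpha

/-- The fixed modulus `T`: divisible by all primes up to `w` and, to a high enough power, by the
primes at which the constants of `Φ` degenerate. -/
structure IsModulus (w T : ℕ) : Prop where
  ne_zero : T ≠ 0
  D_pow_three_dvd : Φ.D ^ 3 ∣ T
  d₄_dvd : Φ.d₄ ∣ T
  d_dvd : Φ.d ∣ T
  d'_dvd : Φ.d' ≠ 0 → Φ.d' ∣ T
  dvd_of_le : ∀ ℓ : ℕ, 0 < ℓ → ℓ ≤ w → ℓ ∣ T

theorem exists_isModulus (hα : G.α ≠ 0) (w : ℕ) : ∃ T, Φ.IsModulus w T := by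
  set e : ℤ := if Φ.d' = 0 then 1 else Φ.d' with he
  have he₀ : e ≠ 0 := by
    rw [he]
    split_ifs with h
    exacts [one_ne_zero, h]
  have hdvd : ∀ {a : ℤ}, a ∣ Φ.D ^ 3 * Φ.d₄ * Φ.d * e →
      a ∣ ((Φ.D ^ 3 * Φ.d₄ * Φ.d * e).natAbs * w.factorial : ℕ) := fun ha ↦ by
    rw [Nat.cast_mul]
    exact (Int.dvd_natAbs.mpr ha).mul_right _
  refine ⟨(Φ.D ^ 3 * Φ.d₄ * Φ.d * e).natAbs * w.factorial, ?_, hdvd ⟨Φ.d₄ * Φ.d * e, by ring⟩,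
    hdvd ⟨Φ.D ^ 3 * Φ.d * e, by ring⟩, hdvd ⟨Φ.D ^ 3 * Φ.d₄ * e, by ring⟩, fun h ↦ hdvd ?_,
    fun ℓ hℓ hw ↦ (Nat.dvd_factorial hℓ hw).mul_left _⟩
  · exact mul_ne_zero (Int.natAbs_ne_zero.mpr (mul_ne_zero (mul_ne_zero (mul_ne_zero
      (pow_ne_zero 3 (Φ.D_ne_zero hα)) Φ.det₄_ne_zero) Φ.det_ne_zero) he₀)) w.factorial_ne_zero
  · rw [he, if_neg h]
    exact dvd_mul_left _ _

namespace IsModulus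

variable {Φ} {w T : ℕ} (hT : Φ.IsModulus w T)
include hT

theorem D_dvd : Φ.D ∣ T := (dvd_pow_self _ three_ne_zero).trans hT.D_pow_three_dvd

theorem s_dvd : Φ.s ∣ T := (dvd_mul_right _ _).trans hT.D_dvd

theorem α_dvd : G.α ∣ T := (dvd_mul_right _ _).trans hT.s_dvd

theorem lt_of_not_dvd {ℓ : ℕ} (hℓ : ℓ.Prime) (hℓT : ¬ ℓ ∣ T) : w < ℓ :=
  not_le.mp fun h ↦ hℓT (hT.dvd_of_le ℓ hℓ.pos h)

theorem two_mul_factorization_D_lt {ℓ : ℕ} (hℓ : ℓ.Prime) (hℓT : ℓ ∣ T) :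
    2 * Φ.D.natAbs.factorization ℓ < T.factorization ℓ := by
  have hdvd : Φ.D.natAbs ^ 3 ∣ T := by
    simpa [Int.natAbs_pow] using Int.natAbs_dvd_natAbs.mpr hT.D_pow_three_dvd
  have hcube : 3 * Φ.D.natAbs.factorization ℓ ≤ T.factorization ℓ := by
    have h := (Nat.factorization_le_iff_dvd (ne_zero_of_dvd_ne_zero hT.ne_zero hdvd)
      hT.ne_zero).mpr hdvd ℓ
    simpa [Nat.factorization_pow] using h
  have hpos := hℓ.factorization_pos_of_dvd hT.ne_zero hℓT
  omega

end IsModulus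

end Frame
end SplitCubic

theorem exists_forall_sum_le_of_summable {f : ℕ → ℝ} (hf : Summable f) {ε : ℝ} (hε : 0 < ε) :
    ∃ w : ℕ, ∀ S : Finset ℕ, (∀ n ∈ S, w < n) → ∑ n ∈ S, f n ≤ ε := by
  obtain ⟨s, hs⟩ := summable_iff_vanishing_norm.mp hf ε hε
  refine ⟨s.sup id, fun S hS ↦ (le_abs_self _).trans (hs S ?_).le⟩
  exact Finset.disjoint_left.mpr fun n hn hns ↦ (hS n hn).not_ge (Finset.le_sup (f := id) hns)

namespace SplitCubic
namespace Frame

variable {m k : ℕ} {G : SplitCubic m k} (Φ : G.Frame) {w T p : ℕ} (z : Fin (k + 1) → ℤ)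

theorem inv_pow_le_density_fiber_point (hα : G.α ≠ 0) (hT : Φ.IsModulus w T) (hpT : p.Coprime T)
    {ℓ : ℕ} (hℓ : ℓ.Prime) (hℓT : ℓ ∣ T) (e : ℕ) :
    ((ℓ : ℝ) ^ (T.factorization ℓ * (m - 1)))⁻¹ ≤
      (G.fiber (Φ.point T p z)).density (ℓ ^ e) := by
  have : Fact ℓ.Prime := ⟨hℓ⟩
  have hx : (T : ℤ) ∣ (G.scaledFiber T (Φ.base T p z)).eval Φ.x := by
    refine (dvd_iff_dvd_of_dvd_sub (G.dvd_scaledFiber_eval_sub T (Φ.base T p z) Φ.x)).mpr ?_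
    rw [base_zero, base_one, s, t]
    exact ⟨G.α * z 0 * Φ.x G.o ^ 2, by ring⟩
  have hgrad : (T : ℤ) ∣ (G.scaledFiber T (Φ.base T p z)).grad Φ.x Φ.i - p * Φ.D := by
    rw [D, ← mul_assoc, ← Φ.base_zero T p z]
    exact G.dvd_scaledFiber_grad_sub T _ _ Φ.i_ne
  have hD : ¬ (ℓ : ℤ) ^ (Φ.D.natAbs.factorization ℓ + 1) ∣ p * Φ.D := fun h ↦ by
    have hcop : IsCoprime ((ℓ : ℤ) ^ (Φ.D.natAbs.factorization ℓ + 1)) (p : ℤ) :=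
      (Nat.isCoprime_iff_coprime.mpr (hpT.symm.coprime_dvd_left hℓT)).pow_left
    have hdvd := Int.natAbs_dvd_natAbs.mpr (hcop.dvd_of_dvd_mul_left h)
    rw [Int.natAbs_pow, Int.natAbs_natCast] at hdvd
    exact Nat.pow_succ_factorization_not_dvd (Int.natAbs_ne_zero.mpr (Φ.D_ne_zero hα)) hℓ hdvd
  rw [point, fiber_smul]
  simpa using IntQuad.inv_pow_le_density_smul _ hx hgrad hD (hT.two_mul_factorization_D_lt hℓ hℓT) e

/-- The local density of the fiber over `Φ.point T p z` at a prime `ℓ ∤ T` falls short of `1` by at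
most twice this number, where `z₀` is `z 0`. -/
noncomputable def defect (T p : ℕ) (z₀ : ℤ) (ℓ : ℕ) : ℝ :=
  if ℓ = p then 0 else if (ℓ : ℤ) ∣ Φ.minorFactor T p z₀ then (ℓ : ℝ)⁻¹ else
    (ℓ : ℝ) ^ (-(3 / 2) : ℝ)

theorem defect_nonneg (T p : ℕ) (z₀ : ℤ) (ℓ : ℕ) : 0 ≤ Φ.defect T p z₀ ℓ := by
  rw [defect]
  split_ifs <;> positivity

variable {Φ} in
theorem IsModulus.not_dvd_mul_s_pow (hT : Φ.IsModulus w T) (hp : p.Prime) {ℓ : ℕ} (hℓ : ℓ.Prime)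
    (hℓT : ¬ ℓ ∣ T) (hℓp : ℓ ≠ p) : ¬ (ℓ : ℤ) ∣ (T * (p * Φ.s)) ^ 4 := fun h ↦ by
  have hℓ' : Prime (ℓ : ℤ) := Nat.prime_iff_prime_int.mp hℓ
  rcases hℓ'.dvd_or_dvd (hℓ'.dvd_of_dvd_pow h) with h | h
  · exact hℓT (Int.natCast_dvd_natCast.mp h)
  rcases hℓ'.dvd_or_dvd h with h | h
  · exact hℓp ((Nat.prime_dvd_prime_iff_eq hℓ hp).mp (Int.natCast_dvd_natCast.mp h))
  · exact hℓT (Int.natCast_dvd_natCast.mp (h.trans hT.s_dvd))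

variable {z} in
theorem one_le_density_fiber_point (hp : p.Prime)
    (hgood : G.IsGood p ((T : ZMod p) ^ 2 • fun j ↦ (z j : ZMod p))) {e : ℕ} (he : 0 < e) :
    1 ≤ (G.fiber (Φ.point T p z)).density (p ^ e) := by
  have : Fact p.Prime := ⟨hp⟩
  have : Nonempty (Fin m) := ⟨G.o⟩
  refine le_trans ?_ (IntQuad.smoothZeroCount_div_le_density _ he)
  rw [Fintype.card_fin, one_le_div (pow_pos (Nat.cast_pos.mpr hp.pos) _)]
  exact_mod_cast hgood _ (Φ.point_cast p T z)

variable {z} in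
theorem one_sub_two_mul_defect_le_density (hT : Φ.IsModulus w T) (hp : p.Prime)
    (hgood : G.IsGood p ((T : ZMod p) ^ 2 • fun j ↦ (z j : ZMod p)))
    {ℓ : ℕ} (hℓ : ℓ.Prime) (hℓT : ¬ ℓ ∣ T) {e : ℕ} (he : 0 < e) :
    1 - 2 * Φ.defect T p (z 0) ℓ ≤ (G.fiber (Φ.point T p z)).density (ℓ ^ e) := by
  have : Fact ℓ.Prime := ⟨hℓ⟩
  have : Nonempty (Fin m) := ⟨G.o⟩
  have hℓ₀ : (0 : ℝ) < ℓ := Nat.cast_pos.mpr hℓ.pos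
  have hℓ' : Prime (ℓ : ℤ) := Nat.prime_iff_prime_int.mp hℓ
  have hnot : ∀ {a : ℤ}, a ∣ T → ¬ (ℓ : ℤ) ∣ a := fun ha h ↦
    hℓT (Int.natCast_dvd_natCast.mp (h.trans ha))
  rw [defect]
  split_ifs with hℓp hdvd
  · subst hℓp
    simpa using Φ.one_le_density_fiber_point hp hgood he
  · refine IntQuad.one_sub_two_mul_le_density_pow _ Φ.I₄
      (injective_of_det_submatrix_ne_zero Φ.det₄_ne_zero) ℓ ?_ (by positivity) (le_of_eq ?_) he
    · rw [det₄_fiber_point, hℓ'.dvd_mul, not_or]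
      exact ⟨hT.not_dvd_mul_s_pow hp hℓ hℓT hℓp, hnot hT.d₄_dvd⟩
    · field_simp
  · refine IntQuad.one_sub_two_mul_le_density_pow _ Φ.I
      (injective_of_det_submatrix_ne_zero Φ.det_ne_zero) ℓ ?_ (by positivity) (le_of_eq ?_) he
    · rw [det_fiber_point, hℓ'.dvd_mul, hℓ'.dvd_mul, not_or, not_or]
      exact ⟨hT.not_dvd_mul_s_pow hp hℓ hℓT hℓp, hnot dvd_rfl, hdvd⟩
    · rw [← Real.rpow_mul_natCast hℓ₀.le, ← Real.rpow_natCast _ 5, ← Real.rpow_add hℓ₀,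
        ← Real.rpow_natCast]
      norm_num

theorem sum_defect_le {a b : ℝ} {z₀ : ℤ} (hT : Φ.IsModulus w T)
    (hw : ∀ S : Finset ℕ, (∀ ℓ ∈ S, w < ℓ) → ∑ ℓ ∈ S, (ℓ : ℝ) ^ (-(3 / 2) : ℝ) ≤ a)
    (hsum : ∀ S : Finset ℕ, (∀ ℓ ∈ S, ℓ.Prime ∧ ¬ ℓ ∣ T ∧ ℓ ≠ p ∧
      (ℓ : ℤ) ∣ Φ.minorFactor T p z₀) → ∑ ℓ ∈ S, (ℓ : ℝ)⁻¹ ≤ b)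
    {S : Finset ℕ} (hS : ∀ ℓ ∈ S, ℓ.Prime ∧ ¬ ℓ ∣ T) :
    ∑ ℓ ∈ S, Φ.defect T p z₀ ℓ ≤ a + b := by
  have hsplit : ∑ ℓ ∈ S, Φ.defect T p z₀ ℓ ≤ ∑ ℓ ∈ S, (ℓ : ℝ) ^ (-(3 / 2) : ℝ) +
      ∑ ℓ ∈ S with ℓ ≠ p ∧ (ℓ : ℤ) ∣ Φ.minorFactor T p z₀, (ℓ : ℝ)⁻¹ := by
    rw [Finset.sum_filter, ← Finset.sum_add_distrib]
    refine Finset.sum_le_sum fun ℓ _ ↦ ?_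
    have : 0 ≤ (ℓ : ℝ) ^ (-(3 / 2) : ℝ) := by positivity
    by_cases hp : ℓ = p <;> by_cases hdvd : (ℓ : ℤ) ∣ Φ.minorFactor T p z₀ <;>
      simp only [defect, hp, hdvd, if_true, if_false] <;> simp_all
  refine hsplit.trans (add_le_add (hw S fun ℓ hℓ ↦ hT.lt_of_not_dvd (hS ℓ hℓ).1 (hS ℓ hℓ).2)
    (hsum _ fun ℓ hℓ ↦ ?_))
  obtain ⟨hℓS, hℓ⟩ := Finset.mem_filter.mp hℓ
  exact ⟨(hS ℓ hℓS).1, (hS ℓ hℓS).2, hℓ⟩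

variable {z} in
theorem inv_pow_div_two_le_re_singSeries (hα : G.α ≠ 0) (hT : Φ.IsModulus w T)
    (hw : ∀ S : Finset ℕ, (∀ ℓ ∈ S, w < ℓ) → ∑ ℓ ∈ S, (ℓ : ℝ) ^ (-(3 / 2) : ℝ) ≤ 1 / 8)
    (hp : p.Prime) (hpT : ¬ p ∣ T)
    (hgood : G.IsGood p ((T : ZMod p) ^ 2 • fun j ↦ (z j : ZMod p)))
    (hz : Φ.minorFactor T p (z 0) ≠ 0)
    (hsum : ∀ S : Finset ℕ, (∀ ℓ ∈ S, ℓ.Prime ∧ ¬ ℓ ∣ T ∧ ℓ ≠ p ∧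
      (ℓ : ℤ) ∣ Φ.minorFactor T p (z 0)) → ∑ ℓ ∈ S, (ℓ : ℝ)⁻¹ ≤ 1 / 8) :
    ((T : ℝ) ^ (m - 1))⁻¹ / 2 ≤ (singSeries m (G.fiber (Φ.point T p z)).eval).re := by
  have hT₀ : (T : ℤ) ≠ 0 := Int.natCast_ne_zero.mpr hT.ne_zero
  have hp₀ : (p : ℤ) ≠ 0 := Int.natCast_ne_zero.mpr hp.ne_zero
  have hdet : (((G.fiber (Φ.point T p z)).A + (G.fiber (Φ.point T p z)).Aᵀ).submatrix
      Φ.I Φ.J).det ≠ 0 := by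
    rw [det_fiber_point]
    exact mul_ne_zero (pow_ne_zero 4 (mul_ne_zero hT₀ (mul_ne_zero hp₀ (Φ.s_ne_zero hα))))
      (mul_ne_zero hT₀ hz)
  refine IntQuad.le_re_singSeries_of_le_density _ (IntQuad.summable_singSeries _ Φ.I
    (injective_of_det_submatrix_ne_zero hdet) hdet) fun Q hQ ↦ ?_
  refine inv_pow_div_two_le_of_multiplicative (IntQuad.density_one _)
    (fun a b hab ↦ IntQuad.density_mul _ hab) hT.ne_zero
    (fun ℓ e hℓ hℓT ↦ Φ.inv_pow_le_density_fiber_point z hα hT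
      ((hp.coprime_iff_not_dvd).mpr hpT) hℓ hℓT e)
    (b := fun ℓ ↦ 2 * Φ.defect T p (z 0) ℓ) (fun ℓ ↦ mul_nonneg two_pos.le (Φ.defect_nonneg ..))
    (fun ℓ e hℓ hℓT he ↦ Φ.one_sub_two_mul_defect_le_density hT hp hgood hℓ hℓT he)
    (fun S hS ↦ ?_) hQ.ne'
  rw [← Finset.mul_sum]
  linarith [Φ.sum_defect_le hT hw hsum hS]

end Frame
end SplitCubic

/-! ### Averaging over the family -/

section Averaging

open Filter

theorem card_filter_dvd_add_mul_le (n : ℕ) {ℓ : ℕ} (hℓ : 0 < ℓ) (a : ℤ) {b : ℤ}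
    (hb : IsCoprime (ℓ : ℤ) b) :
    ((Finset.range n).filter fun z ↦ (ℓ : ℤ) ∣ a + b * (z : ℕ)).card ≤ n / ℓ + 1 := by
  rcases ((Finset.range n).filter fun z ↦ (ℓ : ℤ) ∣ a + b * (z : ℕ)).eq_empty_or_nonempty with
    h | ⟨v, hv⟩
  · simp [h]
  calc _ ≤ ((Finset.range n).filter (· ≡ v [MOD ℓ])).card := by
        refine Finset.card_le_card (Finset.monotone_filter_right _ fun z _ hdvd ↦ ?_)
        have hdiff : (ℓ : ℤ) ∣ b * (v - z) := by
          have := dvd_sub (Finset.mem_filter.mp hv).2 hdvd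
          rwa [add_sub_add_left_eq_sub, ← mul_sub] at this
        exact Nat.modEq_iff_dvd.mpr (hb.dvd_of_dvd_mul_left hdiff)
    _ ≤ n / ℓ + 1 := by
        rw [← Nat.count_eq_card_filter_range, Nat.count_modEq_card _ hℓ]
        gcongr
        split_ifs <;> simp

theorem sum_Ioc_inv_le_one_add_log (w N : ℕ) :
    ∑ ℓ ∈ Finset.Ioc w N, (ℓ : ℝ)⁻¹ ≤ 1 + Real.log N := by
  refine le_trans ?_ (harmonic_le_one_add_log N)
  rw [harmonic_eq_sum_Icc]
  push_cast
  refine Finset.sum_le_sum_of_subset_of_nonneg (fun ℓ hℓ ↦ ?_) fun _ _ _ ↦ by positivity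
  have := Finset.mem_Ioc.mp hℓ
  exact Finset.mem_Icc.mpr ⟨by omega, this.2⟩

theorem sum_range_sum_inv_le (n : ℕ) (a : ℤ) {b : ℤ} {w N : ℕ} (hw : w ≠ 0) {P : Finset ℕ}
    (hP : P ⊆ Finset.Ioc w N) (hb : ∀ ℓ ∈ P, IsCoprime (ℓ : ℤ) b) :
    ∑ z ∈ Finset.range n, ∑ ℓ ∈ P with ((ℓ : ℕ) : ℤ) ∣ a + b * (z : ℕ), (ℓ : ℝ)⁻¹ ≤
      n / w + (1 + Real.log N) := by
  have hinvSq : ∑ ℓ ∈ Finset.Ioc w N, ((ℓ : ℝ) ^ 2)⁻¹ ≤ (w : ℝ)⁻¹ := by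
    rcases le_total w N with h | h
    · exact (sum_Ioc_inv_sq_le_sub hw h).trans (sub_le_self _ (by positivity))
    · simp [Finset.Ioc_eq_empty_of_le h]
  calc ∑ z ∈ Finset.range n, ∑ ℓ ∈ P with ((ℓ : ℕ) : ℤ) ∣ a + b * (z : ℕ), (ℓ : ℝ)⁻¹
      = ∑ ℓ ∈ P, ((Finset.range n).filter fun z ↦ (ℓ : ℤ) ∣ a + b * (z : ℕ)).card * (ℓ : ℝ)⁻¹ := by
        simp only [Finset.sum_filter]
        rw [Finset.sum_comm]
        simp only [← Finset.sum_filter, Finset.sum_const, nsmul_eq_mul]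
    _ ≤ ∑ ℓ ∈ P, ((n : ℝ) * ((ℓ : ℝ) ^ 2)⁻¹ + (ℓ : ℝ)⁻¹) := by
        refine Finset.sum_le_sum fun ℓ hℓ ↦ ?_
        have hpos : 0 < ℓ := (Nat.zero_le w).trans_lt (Finset.mem_Ioc.mp (hP hℓ)).1
        calc _ ≤ ((n : ℝ) / ℓ + 1) * (ℓ : ℝ)⁻¹ := by
              gcongr
              refine (Nat.cast_le.mpr (card_filter_dvd_add_mul_le n hpos a (hb ℓ hℓ))).trans ?_
              push_cast
              gcongr
              exact Nat.cast_div_le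
          _ = _ := by ring
    _ ≤ ∑ ℓ ∈ Finset.Ioc w N, ((n : ℝ) * ((ℓ : ℝ) ^ 2)⁻¹ + (ℓ : ℝ)⁻¹) :=
        Finset.sum_le_sum_of_subset_of_nonneg hP fun _ _ _ ↦ by positivity
    _ = n * ∑ ℓ ∈ Finset.Ioc w N, ((ℓ : ℝ) ^ 2)⁻¹ + ∑ ℓ ∈ Finset.Ioc w N, (ℓ : ℝ)⁻¹ := by
        rw [Finset.sum_add_distrib, Finset.mul_sum]
    _ ≤ _ := by
        rw [div_eq_mul_inv]
        exact add_le_add (by gcongr) (sum_Ioc_inv_le_one_add_log w N)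

theorem eventually_log_sq_le :
    ∀ᶠ p : ℕ in atTop, 360 + 320 * Real.log ((p ^ 2 : ℕ) : ℝ) ≤ p / 2 := by
  filter_upwards [tendsto_natCast_atTop_atTop.eventually
    ((Real.isLittleO_log_id_atTop.bound (show (0 : ℝ) < 1 / 2560 by norm_num)).and
      (eventually_ge_atTop 1440))] with p ⟨hlog, hp⟩
  rw [id, Real.norm_of_nonneg (by linarith : (0 : ℝ) ≤ p)] at hlog
  push_cast
  rw [Real.log_pow]
  norm_num
  linarith [Real.le_norm_self (Real.log p)]

/-- Averaged over `z < p`, the sum of `ℓ⁻¹` is at most `p / w + O(log p)`, so it can exceed `1 / 8`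
only for few `z`. -/
theorem eventually_exists_exceptional (κ₁ : ℤ) {κ₂ : ℤ} (hκ₂ : κ₂ ≠ 0) {w : ℕ} (hw : 1000 ≤ w) :
    ∀ᶠ p : ℕ in atTop, ∃ B : Finset ℕ, 40 * B.card ≤ p ∧ ∀ z : ℕ, z < p → z ∉ B →
      p * κ₁ + κ₂ * z ≠ 0 ∧ ∀ S : Finset ℕ,
        (∀ ℓ ∈ S, w < ℓ ∧ IsCoprime (ℓ : ℤ) κ₂ ∧ (ℓ : ℤ) ∣ p * κ₁ + κ₂ * z) →
          ∑ ℓ ∈ S, (ℓ : ℝ)⁻¹ ≤ 1 / 8 := by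
  classical
  filter_upwards [eventually_log_sq_le, eventually_ge_atTop (κ₁.natAbs + κ₂.natAbs)] with p hlog hp
  set P : Finset ℕ := (Finset.Ioc w (p ^ 2)).filter fun ℓ ↦ IsCoprime (ℓ : ℤ) κ₂
  set f : ℕ → ℝ := fun z ↦ ∑ ℓ ∈ P with ((ℓ : ℕ) : ℤ) ∣ p * κ₁ + κ₂ * (z : ℕ), (ℓ : ℝ)⁻¹
  set B₁ : Finset ℕ := (Finset.range p).filter fun z ↦ p * κ₁ + κ₂ * (z : ℕ) = 0
  set B₂ : Finset ℕ := (Finset.range p).filter fun z ↦ 1 / 8 < f z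
  have hB₁ : B₁.card ≤ 1 := Finset.card_le_one.mpr fun a ha b hb ↦ by
    have hab : κ₂ * (a : ℤ) = κ₂ * b := add_left_cancel
      ((Finset.mem_filter.mp ha).2.trans (Finset.mem_filter.mp hb).2.symm)
    exact_mod_cast mul_left_cancel₀ hκ₂ hab
  have hB₂ : B₂.card * (1 / 8 : ℝ) ≤ p / w + (1 + Real.log (p ^ 2 : ℕ)) :=
    calc B₂.card * (1 / 8 : ℝ) = B₂.card • (1 / 8 : ℝ) := (nsmul_eq_mul _ _).symm
      _ ≤ ∑ z ∈ B₂, f z :=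
        Finset.card_nsmul_le_sum _ _ _ fun z hz ↦ (Finset.mem_filter.mp hz).2.le
      _ ≤ ∑ z ∈ Finset.range p, f z := Finset.sum_le_sum_of_subset_of_nonneg
        (Finset.filter_subset _ _) fun _ _ _ ↦ Finset.sum_nonneg fun _ _ ↦ by positivity
      _ ≤ _ := sum_range_sum_inv_le p (p * κ₁) (by omega) (Finset.filter_subset _ _)
        fun ℓ hℓ ↦ (Finset.mem_filter.mp hℓ).2
  refine ⟨B₁ ∪ B₂, ?_, fun z hz hzB ↦ ?_⟩
  · have hcard : ((B₁ ∪ B₂).card : ℝ) ≤ 1 + B₂.card := by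
      exact_mod_cast (Finset.card_union_le B₁ B₂).trans (by omega)
    have hpw : (p : ℝ) / w ≤ p / 1000 := by
      gcongr
      exact_mod_cast hw
    have : (0 : ℝ) ≤ p := p.cast_nonneg
    have : 40 * ((B₁ ∪ B₂).card : ℝ) ≤ p := by linarith
    exact_mod_cast this
  · have hzp : z ∈ Finset.range p := Finset.mem_range.mpr hz
    simp only [B₁, B₂, Finset.mem_union, Finset.mem_filter, hzp, true_and, not_or, not_lt] at hzB
    refine ⟨hzB.1, fun S hS ↦ le_trans ?_ hzB.2⟩
    refine Finset.sum_le_sum_of_subset_of_nonneg (fun ℓ hℓ ↦ ?_) fun _ _ _ ↦ by positivity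
    obtain ⟨hwℓ, hcop, hdvd⟩ := hS ℓ hℓ
    have hℓle : ℓ ≤ p ^ 2 := by
      refine (Nat.le_of_dvd (Int.natAbs_pos.mpr hzB.1) (Int.natCast_dvd.mp hdvd)).trans
        ((Int.natAbs_add_le _ _).trans ?_)
      rw [Int.natAbs_mul, Int.natAbs_mul, Int.natAbs_natCast, Int.natAbs_natCast]
      calc p * κ₁.natAbs + κ₂.natAbs * z ≤ p * κ₁.natAbs + κ₂.natAbs * p := by gcongr
        _ = p * (κ₁.natAbs + κ₂.natAbs) := by ring
        _ ≤ p * p := by gcongr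
        _ = p ^ 2 := (sq p).symm
    exact Finset.mem_filter.mpr ⟨Finset.mem_filter.mpr
      ⟨Finset.mem_Ioc.mpr ⟨hwℓ, hℓle⟩, hcop⟩, hdvd⟩

end Averaging

theorem ncard_setOf_apply_zero_mem {α : Type*} (k : ℕ) (B : Set α) :
    {u : Fin (k + 1) → α | u 0 ∈ B}.ncard = B.ncard * Nat.card α ^ k := by
  calc {u : Fin (k + 1) → α | u 0 ∈ B}.ncard
      = (Fin.consEquiv (fun _ ↦ α) '' (B ×ˢ Set.univ)).ncard := by
        rw [Equiv.image_eq_preimage_symm]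
        congr 1
        ext u
        simp [Fin.consEquiv]
    _ = B.ncard * Nat.card α ^ k := by
        rw [Set.ncard_image_of_injective _ (Equiv.injective _), Set.ncard_prod, Set.ncard_univ,
          Nat.card_fun, Nat.card_fin]

theorem pow_le_ncard_setOf_smul_mem_and_notMem {p k : ℕ} [Fact p.Prime]
    {P : Set (Fin (k + 1) → ZMod p)} (hP : p ^ (k + 1) ≤ 20 * P.ncard) {c : ZMod p} (hc : c ≠ 0)
    {B : Finset ℕ} (hB : 40 * B.card ≤ p) :
    p ^ (k + 1) ≤ 40 * {u : Fin (k + 1) → ZMod p | c • u ∈ P ∧ (u 0).val ∉ B}.ncard := by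
  have hscale : {u | c • u ∈ P}.ncard = P.ncard :=
    Set.ncard_preimage_of_injective_subset_range (MulAction.injective₀ hc)
      fun u _ ↦ MulAction.surjective₀ hc u
  have hval : {a : ZMod p | a.val ∈ B}.ncard ≤ B.card := by
    rw [← Set.ncard_coe_finset B]
    exact Set.ncard_le_ncard_of_injOn ZMod.val (fun _ h ↦ h) (ZMod.val_injective p).injOn
  have hslice : {u : Fin (k + 1) → ZMod p | (u 0).val ∈ B}.ncard ≤ B.card * p ^ k :=
    calc _ = {a : ZMod p | a.val ∈ B}.ncard * p ^ k := by
          have := ncard_setOf_apply_zero_mem k {a : ZMod p | a.val ∈ B}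
          rwa [Nat.card_zmod] at this
      _ ≤ B.card * p ^ k := by gcongr
  have hunion : {u | c • u ∈ P}.ncard ≤
      {u : Fin (k + 1) → ZMod p | c • u ∈ P ∧ (u 0).val ∉ B}.ncard +
        {u : Fin (k + 1) → ZMod p | (u 0).val ∈ B}.ncard := by
    refine (Set.ncard_le_ncard fun u hu ↦ ?_).trans (Set.ncard_union_le _ _)
    by_cases h : (u 0).val ∈ B
    exacts [Or.inr h, Or.inl ⟨hu, h⟩]
  have hB' : 40 * (B.card * p ^ k) ≤ p ^ (k + 1) := by
    rw [← mul_assoc, pow_succ']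
    gcongr
  omega

namespace SplitCubic
namespace Frame

open Filter

variable {m k : ℕ} {G : SplitCubic m k} {Φ : G.Frame} {w T : ℕ}

theorem IsModulus.eventually_exists_exceptional (hT : Φ.IsModulus w T) (hα : G.α ≠ 0)
    (hw : 1000 ≤ w) :
    ∀ᶠ p : ℕ in atTop, p.Prime → ∃ B : Finset ℕ, 40 * B.card ≤ p ∧ ∀ z : ℕ, z < p → z ∉ B →
      Φ.minorFactor T p z ≠ 0 ∧ ∀ S : Finset ℕ,
        (∀ ℓ ∈ S, ℓ.Prime ∧ ¬ ℓ ∣ T ∧ ℓ ≠ p ∧ (ℓ : ℤ) ∣ Φ.minorFactor T p z) →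
          ∑ ℓ ∈ S, (ℓ : ℝ)⁻¹ ≤ 1 / 8 := by
  have hnotdvd {ℓ : ℕ} (hℓT : ¬ ℓ ∣ T) {a : ℤ} (ha : a ∣ T) : ¬ (ℓ : ℤ) ∣ a := fun h ↦
    hℓT (Int.natCast_dvd_natCast.mp (h.trans ha))
  rcases eq_or_ne Φ.d' 0 with hd' | hd'
  · have hfactor (p z : ℕ) : Φ.minorFactor T p z = p * (Φ.s * Φ.d) := by
      rw [minorFactor, hd']
      ring
    refine Eventually.of_forall fun p hp ↦ ⟨∅, by simp, fun z _ _ ↦ ⟨?_, fun S hS ↦ ?_⟩⟩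
    · rw [hfactor]
      exact mul_ne_zero (Nat.cast_ne_zero.mpr hp.ne_zero)
        (mul_ne_zero (Φ.s_ne_zero hα) Φ.det_ne_zero)
    · have hempty : S = ∅ := Finset.eq_empty_of_forall_notMem fun ℓ hℓ ↦ by
        obtain ⟨hprime, hℓT, hℓp, hdvd⟩ := hS ℓ hℓ
        rw [hfactor, (Nat.prime_iff_prime_int.mp hprime).dvd_mul,
          (Nat.prime_iff_prime_int.mp hprime).dvd_mul, Int.natCast_dvd_natCast,
          Nat.prime_dvd_prime_iff_eq hprime hp] at hdvd
        exact hdvd.elim hℓp (·.elim (hnotdvd hℓT hT.s_dvd) (hnotdvd hℓT hT.d_dvd))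
      simp [hempty]
  · have hκ : 2 * G.α * T * Φ.d' ≠ 0 :=
      mul_ne_zero (mul_ne_zero (mul_ne_zero two_ne_zero hα) (Nat.cast_ne_zero.mpr hT.ne_zero)) hd'
    filter_upwards [_root_.eventually_exists_exceptional
      (Φ.s * Φ.d + 2 * G.α * Φ.t * Φ.d') hκ hw] with p ⟨B, hB, h⟩ _
    refine ⟨B, hB, fun z hz hzB ↦ ⟨(h z hz hzB).1, fun S hS ↦ (h z hz hzB).2 S fun ℓ hℓ ↦ ?_⟩⟩
    obtain ⟨hprime, hℓT, -, hdvd⟩ := hS ℓ hℓ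
    refine ⟨hT.lt_of_not_dvd hprime hℓT, ?_, hdvd⟩
    have hcop {a : ℤ} (ha : a ∣ T) : IsCoprime (ℓ : ℤ) a :=
      (Nat.prime_iff_prime_int.mp hprime).coprime_iff_not_dvd.mpr (hnotdvd hℓT ha)
    have h2 : (2 : ℤ) ∣ T := Int.natCast_dvd_natCast.mpr (hT.dvd_of_le 2 two_pos (by omega))
    exact (((hcop h2).mul_right (hcop hT.α_dvd)).mul_right (hcop dvd_rfl)).mul_right
      (hcop (hT.d'_dvd hd'))

variable (Φ) in
theorem point_zero (T p : ℕ) (z : Fin (k + 1) → ℤ) : Φ.point T p z 0 = T * Φ.s * p := by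
  rw [point, Pi.smul_apply, base_zero, smul_eq_mul]
  ring

variable (Φ) in
theorem point_injective (hT : T ≠ 0) (p : ℕ) : Function.Injective (Φ.point T p (k := k)) := by
  have hT' : (T : ℤ) ≠ 0 := Nat.cast_ne_zero.mpr hT
  exact (smul_right_injective _ hT').comp ((add_right_injective _).comp
    ((smul_right_injective _ hT').comp (Fin.cons_right_injective 0)))

variable (Φ) in
theorem abs_point_le (T : ℕ) {p : ℕ} {z : Fin (k + 1) → ℤ} (hz : ∀ j, |z j| ≤ p) (j : Fin (k + 2)) :
    |Φ.point T p z j| ≤ T * (|Φ.s| + |Φ.t| + T) * p := by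
  have hdir : |(Fin.cons Φ.s (Pi.single 0 Φ.t) : Fin (k + 2) → ℤ) j| ≤ |Φ.s| + |Φ.t| := by
    refine Fin.cases ?_ (fun i ↦ ?_) j
    · simp
    · rw [Fin.cons_succ, Pi.single_apply]
      split_ifs
      · exact le_add_of_nonneg_left (abs_nonneg _)
      · rw [abs_zero]
        positivity
  have hoff : |(Fin.cons 0 z : Fin (k + 2) → ℤ) j| ≤ p := by
    refine Fin.cases ?_ (fun i ↦ ?_) j <;> simp [hz]
  calc |Φ.point T p z j|
      ≤ T * (p * |(Fin.cons Φ.s (Pi.single 0 Φ.t) : Fin (k + 2) → ℤ) j| +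
          T * |(Fin.cons 0 z : Fin (k + 2) → ℤ) j|) := by
        simp only [point, base, Pi.smul_apply, Pi.add_apply, smul_eq_mul]
        rw [abs_mul, Nat.abs_cast]
        gcongr
        refine (abs_add_le _ _).trans_eq ?_
        rw [abs_mul, abs_mul, Nat.abs_cast, Nat.abs_cast]
    _ ≤ T * (p * (|Φ.s| + |Φ.t|) + T * p) := by gcongr
    _ = _ := by ring

theorem IsModulus.eventually_exists_finset (hT : Φ.IsModulus w T) (hα : G.α ≠ 0)
    (hw₀ : 1000 ≤ w)
    (hw : ∀ S : Finset ℕ, (∀ ℓ ∈ S, w < ℓ) → ∑ ℓ ∈ S, (ℓ : ℝ) ^ (-(3 / 2) : ℝ) ≤ 1 / 8)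
    (hG : ¬ HInvariantLE 2 (MvPolynomial.map (Int.castRingHom ℚ) G.poly)) :
    ∀ᶠ p : ℕ in atTop, p.Prime →
      ∃ 𝒴 : Finset (Fin (k + 2) → ℤ), p ^ (k + 1) ≤ 40 * 𝒴.card ∧ ∀ y ∈ 𝒴,
        y 0 = T * Φ.s * p ∧ (∀ j, |y j| ≤ T * (|Φ.s| + |Φ.t| + T) * p) ∧
          ((T : ℝ) ^ (m - 1))⁻¹ / 2 ≤ (singSeries m (G.fiber y).eval).re := by
  filter_upwards [G.eventually_pow_le_ncard_isGood hα hG,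
    hT.eventually_exists_exceptional hα hw₀, eventually_gt_atTop T] with p hgood hexc hTp hp
  have : Fact p.Prime := ⟨hp⟩
  have hpT : ¬ p ∣ T := fun h ↦ hTp.not_ge (Nat.le_of_dvd (Nat.pos_of_ne_zero hT.ne_zero) h)
  have hc : (T : ZMod p) ^ 2 ≠ 0 := pow_ne_zero 2 (mt (ZMod.natCast_eq_zero_iff T p).mp hpT)
  obtain ⟨B, hB, hexc⟩ := hexc hp
  set lift : (Fin (k + 1) → ZMod p) → Fin (k + 1) → ℤ := fun u j ↦ (u j).val
  have hlift : Function.Injective lift := fun u v h ↦ funext fun j ↦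
    ZMod.val_injective p (Nat.cast_injective (congrFun h j))
  set U := {u | (T : ZMod p) ^ 2 • u ∈ {y | G.IsGood p y} ∧ (u 0).val ∉ B}
  refine ⟨(U.toFinite.image (Φ.point T p ∘ lift)).toFinset, ?_, fun y hy ↦ ?_⟩
  · rw [← Set.ncard_eq_toFinset_card _, Set.ncard_image_of_injective _
      ((Φ.point_injective hT.ne_zero p).comp hlift)]
    exact pow_le_ncard_setOf_smul_mem_and_notMem hgood hc hB
  · obtain ⟨u, ⟨hu, huB⟩, rfl⟩ := (Set.Finite.mem_toFinset _).mp hy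
    obtain ⟨hz, hsum⟩ := hexc _ (u 0).val_lt huB
    refine ⟨Φ.point_zero .., Φ.abs_point_le T fun j ↦ ?_,
      Φ.inv_pow_div_two_le_re_singSeries hα hT hw hp hpT (by simpa [lift] using hu) hz hsum⟩
    rw [Nat.abs_cast]
    exact_mod_cast (u j).val_lt.le

end Frame

open Filter in
theorem exists_eventually_exists_finset {m k : ℕ} (G : SplitCubic m k) (hα : G.α ≠ 0)
    (hrank : 5 ≤ ((G.A + G.Aᵀ).map (Int.cast : ℤ → ℚ)).rank)
    (hG : ¬ HInvariantLE 2 (MvPolynomial.map (Int.castRingHom ℚ) G.poly)) :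
    ∃ a : ℤ, a ≠ 0 ∧ ∃ K > (0 : ℤ), ∃ δ > (0 : ℝ), ∀ᶠ p : ℕ in atTop, p.Prime →
      ∃ 𝒴 : Finset (Fin (k + 2) → ℤ), p ^ (k + 1) ≤ 40 * 𝒴.card ∧ ∀ y ∈ 𝒴,
        y 0 = a * p ∧ (∀ j, |y j| ≤ K * p) ∧ δ ≤ (singSeries m (G.fiber y).eval).re := by
  obtain ⟨Φ⟩ := nonempty_frame hrank
  obtain ⟨w₀, hw₀⟩ := exists_forall_sum_le_of_summable
    (Real.summable_nat_rpow.mpr (by norm_num : (-(3 / 2) : ℝ) < -1))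
    (show (0 : ℝ) < 1 / 8 by norm_num)
  obtain ⟨T, hT⟩ := Φ.exists_isModulus hα (max w₀ 1000)
  have hT₀ := hT.ne_zero
  exact ⟨T * Φ.s, mul_ne_zero (Nat.cast_ne_zero.mpr hT₀) (Φ.s_ne_zero hα), _, by positivity, _,
    by positivity,
    hT.eventually_exists_finset hα (le_max_right _ _)
      (fun S hS ↦ hw₀ S fun ℓ hℓ ↦ (le_max_left _ _).trans_lt (hS ℓ hℓ)) hG⟩

end SplitCubic

/-! ### Summation over primes -/

section Summation

open Filter

open Real in
theorem eventually_div_eight_le_theta_sub_theta :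
    ∀ᶠ Y : ℝ in atTop, Y / 8 ≤ Chebyshev.theta Y - Chebyshev.theta (Y / 8) := by
  filter_upwards [(isLittleO_log_rpow_atTop (show (0 : ℝ) < 1 / 2 by norm_num)).bound
    (show (0 : ℝ) < 1 / 100 by norm_num), eventually_ge_atTop 1000] with Y hlog hY
  rw [← sqrt_eq_rpow, norm_of_nonneg (log_nonneg (by linarith)),
    norm_of_nonneg (sqrt_nonneg Y)] at hlog
  have hsqrt : 2 * √Y * log Y ≤ Y / 50 :=
    calc 2 * √Y * log Y ≤ 2 * √Y * (1 / 100 * √Y) := by gcongr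
      _ = √Y ^ 2 / 50 := by ring
      _ = Y / 50 := by rw [sq_sqrt (by linarith)]
  have hlog_add : log (Y + 2) ≤ 2 * √Y * log Y :=
    calc log (Y + 2) ≤ log (Y ^ 2) := log_le_log (by linarith) (by nlinarith)
      _ = 2 * 1 * log Y := by rw [log_pow, Nat.cast_ofNat, mul_one]
      _ ≤ 2 * √Y * log Y := by
        gcongr
        · exact log_nonneg (by linarith)
        · exact one_le_sqrt.mpr (by linarith)
  have hlower := Chebyshev.theta_ge' (x := Y) (by linarith)
  have hupper := Chebyshev.theta_le_log4_mul_x (x := Y / 8) (by positivity)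
  rw [show (4 : ℝ) = 2 ^ 2 by norm_num, log_pow, Nat.cast_ofNat] at hupper
  nlinarith [log_two_gt_d9, log_two_lt_d9]

theorem theta_sub_theta_le_card_mul_log {x y : ℝ} (hxy : x ≤ y) (hy : 0 ≤ y) :
    Chebyshev.theta y - Chebyshev.theta x ≤
      ((Finset.Ioc ⌊x⌋₊ ⌊y⌋₊).filter Nat.Prime).card * Real.log y := by
  have hsplit : Chebyshev.theta y - Chebyshev.theta x =
      ∑ p ∈ (Finset.Ioc ⌊x⌋₊ ⌊y⌋₊).filter Nat.Prime, Real.log p := by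
    rw [sub_eq_iff_eq_add']
    simp only [Chebyshev.theta, Finset.sum_filter]
    exact (Finset.sum_Ioc_consecutive _ (Nat.zero_le _) (Nat.floor_mono hxy)).symm
  rw [hsplit, ← nsmul_eq_mul]
  refine Finset.sum_le_card_nsmul _ _ _ fun p hp ↦ ?_
  obtain ⟨hp, hprime⟩ := Finset.mem_filter.mp hp
  exact Real.log_le_log (Nat.cast_pos.mpr hprime.pos)
    ((Nat.le_floor_iff hy).mp (Finset.mem_Ioc.mp hp).2)

theorem eventually_exists_finset_primes (p₀ : ℕ) :
    ∀ᶠ Y : ℝ in atTop, ∃ P : Finset ℕ, Y / 8 / Real.log Y ≤ P.card ∧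
      ∀ p ∈ P, p₀ ≤ p ∧ p.Prime ∧ Y / 8 ≤ p ∧ p ≤ Y := by
  filter_upwards [eventually_div_eight_le_theta_sub_theta, eventually_gt_atTop 1,
    eventually_ge_atTop (8 * p₀ : ℝ)] with Y htheta hY hp₀
  refine ⟨(Finset.Ioc ⌊Y / 8⌋₊ ⌊Y⌋₊).filter Nat.Prime, ?_, fun p hp ↦ ?_⟩
  · rw [div_le_iff₀ (Real.log_pos hY)]
    exact htheta.trans (theta_sub_theta_le_card_mul_log (by linarith) (by linarith))
  · obtain ⟨hp, hprime⟩ := Finset.mem_filter.mp hp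
    obtain ⟨hlt, hle⟩ := Finset.mem_Ioc.mp hp
    rw [Nat.floor_lt (by positivity)] at hlt
    refine ⟨?_, hprime, hlt.le, (Nat.le_floor_iff (by positivity)).mp hle⟩
    exact_mod_cast (show (p₀ : ℝ) ≤ p by linarith)

theorem exists_finset_le_sum_of_eventually_prime {n M : ℕ} (hM : M ≠ 0)
    {f : (Fin (n + 1) → ℤ) → ℝ} {a K : ℤ} (ha : a ≠ 0) (hK : 0 < K) {δ : ℝ} (hδ : 0 < δ)
    (h : ∀ᶠ p : ℕ in atTop, p.Prime →
      ∃ 𝒴 : Finset (Fin (n + 1) → ℤ), p ^ n ≤ M * 𝒴.card ∧ ∀ y ∈ 𝒴,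
        y 0 = a * p ∧ (∀ j, |y j| ≤ K * p) ∧ δ ≤ f y) :
    ∃ c > (0 : ℝ), ∃ K > (0 : ℝ), ∃ Y₀ : ℝ, ∀ Y : ℝ, Y₀ ≤ Y →
      ∃ 𝒞 : Finset (Fin (n + 1) → ℤ),
        (∀ y ∈ 𝒞, ∀ i, (|y i| : ℝ) ≤ K * Y) ∧ c * Y ^ (n + 1) / Real.log Y ≤ ∑ y ∈ 𝒞, f y := by
  classical
  obtain ⟨p₀, hp₀⟩ := eventually_atTop.mp h
  choose! 𝒴 hcard h𝒴 using hp₀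
  obtain ⟨Y₀, hY₀⟩ := eventually_atTop.mp
    ((eventually_exists_finset_primes p₀).and (eventually_ge_atTop 0))
  refine ⟨δ / M * (1 / 8) ^ (n + 1), by positivity, K, Int.cast_pos.mpr hK, Y₀, fun Y hY ↦ ?_⟩
  obtain ⟨⟨P, hprimes, hP⟩, hY_nonneg⟩ := hY₀ Y hY
  have hdisj : (P : Set ℕ).PairwiseDisjoint 𝒴 := fun p hp p' hp' hne ↦
    Finset.disjoint_left.mpr fun y hy hy' ↦ hne <| by
      have := ((h𝒴 p (hP p hp).1 (hP p hp).2.1 y hy).1).symm.trans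
        (h𝒴 p' (hP p' hp').1 (hP p' hp').2.1 y hy').1
      exact_mod_cast mul_left_cancel₀ ha this
  refine ⟨P.biUnion 𝒴, fun y hy i ↦ ?_, ?_⟩
  · obtain ⟨p, hp, hy⟩ := Finset.mem_biUnion.mp hy
    obtain ⟨hp₀, hprime, -, hpY⟩ := hP p hp
    calc (|y i| : ℝ) ≤ K * p := by exact_mod_cast (h𝒴 p hp₀ hprime y hy).2.1 i
      _ ≤ K * Y := by gcongr
  · have hfiber {p : ℕ} (hp : p ∈ P) : δ / M * (Y / 8) ^ n ≤ ∑ y ∈ 𝒴 p, f y := by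
      obtain ⟨hp₀, hprime, hpY, -⟩ := hP p hp
      calc δ / M * (Y / 8) ^ n ≤ δ / M * (M * (𝒴 p).card) := by
            gcongr
            exact (pow_le_pow_left₀ (by positivity) hpY n).trans
              (by exact_mod_cast hcard p hp₀ hprime)
        _ = (𝒴 p).card • δ := by
            rw [nsmul_eq_mul]
            field_simp
        _ ≤ ∑ y ∈ 𝒴 p, f y :=
            Finset.card_nsmul_le_sum _ _ _ fun y hy ↦ (h𝒴 p hp₀ hprime y hy).2.2
    calc δ / M * (1 / 8) ^ (n + 1) * Y ^ (n + 1) / Real.log Y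
        = Y / 8 / Real.log Y * (δ / M * (Y / 8) ^ n) := by ring
      _ ≤ P.card * (δ / M * (Y / 8) ^ n) := by gcongr
      _ ≤ ∑ p ∈ P, ∑ y ∈ 𝒴 p, f y := by
        rw [← nsmul_eq_mul]
        exact Finset.card_nsmul_le_sum _ _ _ fun _ hp ↦ hfiber hp
      _ = ∑ y ∈ P.biUnion 𝒴, f y := (Finset.sum_biUnion hdisj).symm

end Summation

theorem stmt11_general {m k : ℕ} (G : SplitCubic m k) (hα : G.α ≠ 0)
    (hrank : 5 ≤ ((G.A + G.Aᵀ).map (Int.cast : ℤ → ℚ)).rank)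
    (hG : ¬ HInvariantLE 2 (MvPolynomial.map (Int.castRingHom ℚ) G.poly)) :
    ∃ c > (0 : ℝ), ∃ K > (0 : ℝ), ∃ Y₀ : ℝ, ∀ Y : ℝ, Y₀ ≤ Y →
      ∃ 𝒞 : Finset (Fin (k + 2) → ℤ),
        (∀ y ∈ 𝒞, ∀ i, (|y i| : ℝ) ≤ K * Y) ∧
        c * Y ^ (k + 2) / Real.log Y ≤
          ∑ y ∈ 𝒞, (singSeries m fun x ↦ eval (Sum.elim x y) G.poly).re := by
  obtain ⟨a, ha, K, hK, δ, hδ, h⟩ := G.exists_eventually_exists_finset hα hrank hG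
  simp only [G.eval_poly]
  exact exists_finset_le_sum_of_eventually_prime (by norm_num) ha hK hδ h

/-- For `C(x,y) = y₁F₁(x) + α y₂ x₁² + Σ x_i q_i(y) + R(y)` with `F₁`
nonsingular indefinite of rank `r ≥ 5`, `α ≠ 0`, `h(C) ≥ 5`, `C` irreducible with nonsingular
`p`-adic zeros for all `p`, one has `Σ_{y ∈ 𝒞_h(Y)} 𝔖(F_y) ≫ Y^h / log Y`. -/
theorem stmt11 (n h m : ℕ) (hh : 1 < h) (hhn : h < n) (hm : m = n - h) (hm0 : 0 < m)
    (α : ℤ) (hα : α ≠ 0)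
    (A₁ : Matrix (Fin m) (Fin m) ℤ) (r : ℕ) (hr5 : 5 ≤ r)
    (hrank : Matrix.rank ((A₁ + A₁ᵀ).map ((↑) : ℤ → ℚ)) = r)
    (hindef : (∃ u : Fin m → ℝ, 0 < u ⬝ᵥ (A₁.map ((↑) : ℤ → ℝ)).mulVec u) ∧
      (∃ u : Fin m → ℝ, u ⬝ᵥ (A₁.map ((↑) : ℤ → ℝ)).mulVec u < 0))
    (q : Fin m → MvPolynomial (Fin h) ℤ) (hq : ∀ j, (q j).IsHomogeneous 2)
    (R : MvPolynomial (Fin h) ℤ) (hR : R.IsHomogeneous 3)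
    (Cpoly : MvPolynomial (Fin m ⊕ Fin h) ℤ)
    (hC : Cpoly = X (Sum.inr ⟨0, Nat.lt_trans Nat.zero_lt_one hh⟩) *
        rename Sum.inl (∑ a, ∑ b, C (A₁ a b) * X a * X b)
      + C α * X (Sum.inr ⟨1, hh⟩) * X (Sum.inl ⟨0, hm0⟩) ^ 2
      + ∑ i, X (Sum.inl i) * rename Sum.inr (q i) + rename Sum.inr R)
    (hhinv : ¬ ∃ L Q : Fin 4 → MvPolynomial (Fin m ⊕ Fin h) ℚ,
      (∀ i, (L i).IsHomogeneous 1) ∧ (∀ i, (Q i).IsHomogeneous 2) ∧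
        MvPolynomial.map (Int.castRingHom ℚ) Cpoly = ∑ i, L i * Q i)
    (hirr : Irreducible (MvPolynomial.map (Int.castRingHom ℚ) Cpoly))
    (hpadic : ∀ (p : ℕ) [Fact p.Prime], ∃ z : (Fin m ⊕ Fin h) → ℚ_[p],
      eval z (MvPolynomial.map (Int.castRingHom ℚ_[p]) Cpoly) = 0 ∧
      ∃ u, eval z (pderiv u (MvPolynomial.map (Int.castRingHom ℚ_[p]) Cpoly)) ≠ 0) :
    ∃ c > (0 : ℝ), ∃ K > (0 : ℝ), ∃ Y₀ : ℝ, ∀ Y : ℝ, Y₀ ≤ Y →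
      ∃ 𝒞 : Finset (Fin h → ℤ),
        (∀ y ∈ 𝒞, ∀ i, (|y i| : ℝ) ≤ K * Y) ∧
        c * Y ^ h / Real.log Y ≤
          ∑ y ∈ 𝒞, (singSeries m fun x => eval (Sum.elim x y) Cpoly).re := by
  obtain ⟨k, rfl⟩ := Nat.exists_eq_add_of_le' hh
  subst hC
  exact stmt11_general ⟨A₁, α, ⟨0, hm0⟩, q, R, hq, hR⟩ hα (hrank ▸ hr5) fun hG ↦
    hhinv (hG.mono (by norm_num))
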